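/- Suppose λ > 0. Then for every θ ∈ ℝ and every E ∈ σ(H_{α,θ,b}): L(E) > 0 if and only if αE > 2(1−λ), and L(E) = 0 if and only if αE ≤ 2(1−λ). -/

import Mathlib

open scoped Real

/-- The quasi-periodic potential `v(x) = 2λcos(2πx)/(1 - αcos(2πx))`. -/
noncomputable def potV (α lam : ℝ) (x : ℝ) : ℝ :=
  2 * lam * Real.cos (2 * Real.pi * x) / (1 - α * Real.cos (2 * Real.pi * x))

/-- One-step transfer matrix `A(x,z) = [[z - V x, -1],[1,0]]`. -/
noncomputable def tMat (V : ℝ → ℝ) (x : ℝ) (z : ℂ) : Matrix (Fin 2) (Fin 2) ℂ :=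
  !![z - (V x : ℝ), -1; 1, 0]

/-- The `n`-step transfer matrix `A_n(x,z) = A(x+(n-1)b,z) ⋯ A(x+b,z) A(x,z)`. -/
noncomputable def tProd (V : ℝ → ℝ) (b : ℝ) (n : ℕ) (x : ℝ) (z : ℂ) :
    Matrix (Fin 2) (Fin 2) ℂ :=
  (((List.range n).reverse).map (fun j => tMat V (x + (j : ℝ) * b) z)).prod

/-- The operator norm of a 2×2 complex matrix, acting on the Euclidean space `ℂ²`. -/
noncomputable def opNorm2 (M : Matrix (Fin 2) (Fin 2) ℂ) : ℝ :=
  ‖Matrix.toEuclideanCLM (𝕜 := ℂ) M‖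

/-- The Lyapunov exponent `L(z) = lim_n (1/n)∫₀¹ log‖A_n(x,z)‖ dx`; the limit exists and
equals `inf_{n ≥ 1} (1/n)∫₀¹ log‖A_n(x,z)‖ dx` by subadditivity, so we take that as the
definition. -/
noncomputable def lyap (V : ℝ → ℝ) (b : ℝ) (z : ℂ) : ℝ :=
  ⨅ n : ℕ+, ((n : ℝ))⁻¹ * ∫ x in (0:ℝ)..(1:ℝ), Real.log (opNorm2 (tProd V b n x z))

/-- `IsSchrodingerOp V b θ H` says that `H` is the bounded operator on `ℓ²(ℤ)` given by
`(Hu)ₙ = u_{n+1} + u_{n-1} + V(nb+θ)uₙ`. -/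
def IsSchrodingerOp (V : ℝ → ℝ) (b θ : ℝ)
    (H : lp (fun _ : ℤ => ℂ) 2 →L[ℂ] lp (fun _ : ℤ => ℂ) 2) : Prop :=
  ∀ u : lp (fun _ : ℤ => ℂ) 2, ∀ n : ℤ,
    (H u : ∀ _ : ℤ, ℂ) n = (u : ∀ _ : ℤ, ℂ) (n + 1) + (u : ∀ _ : ℤ, ℂ) (n - 1)
      + (V ((n : ℝ) * b + θ) : ℂ) * (u : ∀ _ : ℤ, ℂ) n

/-!
Clearing the denominators of `A(x, E)` turns the cocycle into a matrix `M(z)` that is polynomial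
in `z = e^{2πix}`. Jensen's formula at `z = 0`, where the iterates of `M(0)` grow like the powers
of an eigenvalue, gives Herman's bound, hence `L(E) > 0` as soon as `αE + 2λ > 2`.

Conversely let `|αE + 2λ| ≤ 2` and `L(E) > 0`. The subadditive growth of the cocycle is bounded
above uniformly near the unit circle, and since the zeros of a polynomial avoid most radii, it is
bounded below uniformly on some circle `|z| = e^t` with `t` small. For `p / q` close to `b` this
makes the trace of the `q`-step product with frequency `p / q` large on that circle. This trace
is a polynomial `a + d z^q + c z^{2q}`, and the eigenvalues of `M(0)` show that `a` and `c` are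
small; so `d` is large, and the trace is large on the whole unit circle. The periodic
approximants thus have a gap around `E`, of a size independent of `q`, and `E` is not in the
spectrum of `H`. Positivity of `λ` enters through `αE + 2λ ≥ -2`, which holds on the spectrum.
-/

namespace GPSModel

open Matrix Set MeasureTheory Polynomial FourierTransform Filter
open scoped Real Topology Matrix.Norms.Elementwise ComplexConjugate

/-! ### Norms of `2 × 2` matrices -/

section ElementwiseNorm

variable {𝕜 : Type*} [NormedField 𝕜]

lemma exists_norm_entry_eq_norm {m n α : Type*} [Fintype m] [Fintype n] [Nonempty m] [Nonempty n]
    [NormedAddCommGroup α] (A : Matrix m n α) : ∃ i j, ‖A i j‖ = ‖A‖ := by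
  obtain ⟨i, hi⟩ := Finite.exists_max fun i => ‖A i‖
  obtain ⟨j, hj⟩ := Finite.exists_max fun j => ‖A i j‖
  refine ⟨i, j, le_antisymm (norm_entry_le_entrywise_sup_norm A) ?_⟩
  refine (norm_le_iff (norm_nonneg _)).2 fun k l => ?_
  exact (norm_le_pi_norm (A k) l).trans
    ((hi k).trans ((pi_norm_le_iff_of_nonneg (norm_nonneg _)).2 hj))

lemma norm_mul_le_card_mul {l m n α : Type*} [Fintype l] [Fintype m] [Fintype n]
    [NormedRing α] (A : Matrix l m α) (B : Matrix m n α) :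
    ‖A * B‖ ≤ Fintype.card m * (‖A‖ * ‖B‖) := by
  refine (norm_le_iff (by positivity)).2 fun i j => ?_
  calc ‖(A * B) i j‖ ≤ ∑ k, ‖A i k * B k j‖ := norm_sum_le _ _
    _ ≤ ∑ _k : m, ‖A‖ * ‖B‖ := Finset.sum_le_sum fun k _ => (norm_mul_le _ _).trans
        (mul_le_mul (norm_entry_le_entrywise_sup_norm A) (norm_entry_le_entrywise_sup_norm B)
          (norm_nonneg _) (norm_nonneg _))
    _ = Fintype.card m * (‖A‖ * ‖B‖) := by simp

lemma norm_mul_le_two_mul (A B : Matrix (Fin 2) (Fin 2) 𝕜) : ‖A * B‖ ≤ 2 * (‖A‖ * ‖B‖) := by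
  simpa using norm_mul_le_card_mul A B

lemma norm_entry_mul_entry_le {l m n o : Type*} [Fintype l] [Fintype m] [Fintype n] [Fintype o]
    (A : Matrix l m 𝕜) (B : Matrix n o 𝕜) (i : l) (j : m) (i' : n) (j' : o) :
    ‖A i j * B i' j'‖ ≤ ‖A‖ * ‖B‖ := by
  rw [norm_mul]
  gcongr <;> exact norm_entry_le_entrywise_sup_norm _

lemma norm_det_le (A : Matrix (Fin 2) (Fin 2) 𝕜) : ‖A.det‖ ≤ 2 * ‖A‖ ^ 2 := by
  rw [det_fin_two]
  linarith [norm_sub_le (A 0 0 * A 1 1) (A 0 1 * A 1 0), norm_entry_mul_entry_le A A 0 0 1 1,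
    norm_entry_mul_entry_le A A 0 1 1 0]

lemma norm_adjugate_le (A : Matrix (Fin 2) (Fin 2) 𝕜) : ‖A.adjugate‖ ≤ ‖A‖ := by
  refine (norm_le_iff (norm_nonneg _)).2 fun i j => ?_
  rw [adjugate_fin_two]
  fin_cases i <;> fin_cases j <;> simp [norm_entry_le_entrywise_sup_norm]

lemma plucker_identity (X Y Z : Matrix (Fin 2) (Fin 2) 𝕜) (i j k l : Fin 2) :
    (X * Y) i l * (Y * Z) k j =
      (X * Y * Z) i j * Y k l -
        (if k = l then 1 else -1) * (X i (1 - k) * Z (1 - l) j) * Y.det := by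
  fin_cases i <;> fin_cases l <;> fin_cases k <;> fin_cases j <;>
    simp [mul_apply, Fin.sum_univ_two, det_fin_two] <;> ring

lemma norm_mul_mul_norm_mul_le (X Y Z : Matrix (Fin 2) (Fin 2) 𝕜) :
    ‖X * Y‖ * ‖Y * Z‖ ≤ ‖X * Y * Z‖ * ‖Y‖ + ‖X‖ * ‖Z‖ * ‖Y.det‖ := by
  obtain ⟨i, l, hXY⟩ := exists_norm_entry_eq_norm (X * Y)
  obtain ⟨k, j, hYZ⟩ := exists_norm_entry_eq_norm (Y * Z)
  rw [← hXY, ← hYZ, ← norm_mul, plucker_identity]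
  refine (norm_sub_le _ _).trans (add_le_add (norm_entry_mul_entry_le _ _ _ _ _ _) ?_)
  have hsign : ‖(if k = l then 1 else -1 : 𝕜)‖ = 1 := by split_ifs <;> simp
  rw [norm_mul, norm_mul, hsign, one_mul]
  gcongr
  exact norm_entry_mul_entry_le _ _ _ _ _ _

end ElementwiseNorm

section OpNorm2

variable (A B : Matrix (Fin 2) (Fin 2) ℂ)

lemma opNorm2_mul_le : opNorm2 (A * B) ≤ opNorm2 A * opNorm2 B := by
  simpa only [opNorm2, map_mul] using norm_mul_le _ _

lemma opNorm2_pow_le (n : ℕ) : opNorm2 (A ^ n) ≤ opNorm2 A ^ n := by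
  simpa only [opNorm2, map_pow] using norm_pow_le _ n

lemma opNorm2_smul (c : ℂ) : opNorm2 (c • A) = ‖c‖ * opNorm2 A := by
  simpa only [opNorm2, map_smul] using norm_smul _ _

lemma continuous_opNorm2 : Continuous opNorm2 :=
  (LinearMap.continuous_of_finiteDimensional
    (toEuclideanCLM (n := Fin 2) (𝕜 := ℂ)).toAlgEquiv.toLinearMap).norm

variable {A} in
lemma opNorm2_pos (hA : A ≠ 0) : 0 < opNorm2 A :=
  norm_pos_iff.2 ((map_ne_zero_iff _ (toEuclideanCLM (𝕜 := ℂ)).injective).2 hA)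

lemma norm_star_dotProduct_mulVec_le (u v : Fin 2 → ℂ) :
    ‖star u ⬝ᵥ A *ᵥ v‖ ≤ opNorm2 A * ‖WithLp.toLp 2 u‖ * ‖WithLp.toLp 2 v‖ := by
  have hinner : star u ⬝ᵥ A *ᵥ v =
      inner ℂ (WithLp.toLp 2 u) (toEuclideanCLM (𝕜 := ℂ) A (WithLp.toLp 2 v)) := by
    rw [EuclideanSpace.inner_eq_star_dotProduct, dotProduct_comm]
    rfl
  rw [hinner]
  calc _ ≤ ‖WithLp.toLp 2 u‖ * ‖toEuclideanCLM (𝕜 := ℂ) A (WithLp.toLp 2 v)‖ :=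
        norm_inner_le_norm _ _
    _ ≤ ‖WithLp.toLp 2 u‖ * (opNorm2 A * ‖WithLp.toLp 2 v‖) := by
        gcongr
        exact ContinuousLinearMap.le_opNorm _ _
    _ = _ := by ring

lemma norm_le_opNorm2 : ‖A‖ ≤ opNorm2 A := by
  refine (norm_le_iff (r := opNorm2 A) (norm_nonneg _)).2 fun i j => ?_
  simpa using norm_star_dotProduct_mulVec_le A (Pi.single i 1) (Pi.single j 1)

lemma opNorm2_le_two_mul_norm : opNorm2 A ≤ 2 * ‖A‖ := by
  refine ContinuousLinearMap.opNorm_le_bound _ (by positivity) fun v => ?_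
  have hcoord (i : Fin 2) :
      ‖(toEuclideanCLM (𝕜 := ℂ) A v) i‖ ^ 2 ≤ (‖A‖ * (‖v 0‖ + ‖v 1‖)) ^ 2 := by
    rw [ofLp_toEuclideanCLM]
    gcongr
    calc ‖(A *ᵥ v.ofLp) i‖ ≤ ∑ j, ‖A i j * v j‖ := norm_sum_le _ fun j => A i j * v j
      _ ≤ ∑ j, ‖A‖ * ‖v j‖ := by
          gcongr with j
          rw [norm_mul]
          gcongr
          exact norm_entry_le_entrywise_sup_norm A
      _ = ‖A‖ * (‖v 0‖ + ‖v 1‖) := by rw [Fin.sum_univ_two, mul_add]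
  rw [← sq_le_sq₀ (norm_nonneg _) (by positivity), mul_pow, EuclideanSpace.norm_sq_eq,
    EuclideanSpace.norm_sq_eq, Fin.sum_univ_two, Fin.sum_univ_two]
  nlinarith [hcoord 0, hcoord 1, sq_nonneg (‖A‖ * (‖v 0‖ - ‖v 1‖))]

variable {A} in
lemma one_le_opNorm2_of_det_eq_one (hA : A.det = 1) : 1 ≤ opNorm2 A := by
  by_contra! hlt
  obtain ⟨n, hn⟩ := exists_pow_lt_of_lt_one (show (0 : ℝ) < 1 / 2 by norm_num) hlt
  have hpow : ‖A ^ n‖ ≤ opNorm2 A ^ n := (norm_le_opNorm2 _).trans (opNorm2_pow_le A n)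
  have hdet := norm_det_le (A ^ n)
  rw [det_pow, hA, one_pow, norm_one] at hdet
  nlinarith [norm_nonneg (A ^ n)]

end OpNorm2

/-! ### The cocycle with denominators cleared -/

section ClearedCocycle

variable {R S : Type*} [CommRing R] [Algebra ℂ R] [CommRing S] [Algebra ℂ S]

/-- The polynomial `z - α (z² + 1) / 2`, which is `z (1 - α cos (2πx))` at `z = exp (2πix)`. The
variable ranges over an arbitrary `ℂ`-algebra, so that taking it to be `X : ℂ[X]` gives the
polynomial itself. -/
noncomputable def clearedDenom (α : ℝ) (z : R) : R := z - (α / 2 : ℂ) • (z ^ 2 + 1)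

/-- The transfer matrix `tMat (potV α lam) x E` multiplied by `clearedDenom α z`, as a matrix of
polynomials in `z = exp (2πix)`. -/
noncomputable def clearedMat (α lam E : ℝ) (z : R) : Matrix (Fin 2) (Fin 2) R :=
  !![(E : ℂ) • z - ((α * E + 2 * lam) / 2 : ℂ) • (z ^ 2 + 1), -clearedDenom α z;
    clearedDenom α z, 0]

/-- The product of `clearedMat` along the first `n` points of the orbit of `z` under the rotation
`z ↦ w z`. -/
noncomputable def clearedProd (α lam E : ℝ) (w : ℂ) : ℕ → R → Matrix (Fin 2) (Fin 2) R
  | 0, _ => 1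
  | n + 1, z => clearedMat α lam E (w ^ n • z) * clearedProd α lam E w n z

/-- The product of `clearedDenom` along the first `n` points of the orbit of `z` under the
rotation `z ↦ w z`. -/
noncomputable def denomProd (α : ℝ) (w : ℂ) (n : ℕ) (z : R) : R :=
  ∏ j ∈ Finset.range n, clearedDenom α (w ^ j • z)

variable (α lam E : ℝ) (w : ℂ) (m n : ℕ) (z : R)

@[simp] lemma clearedProd_zero : clearedProd α lam E w 0 z = 1 := rfl

lemma clearedProd_succ :
    clearedProd α lam E w (n + 1) z = clearedMat α lam E (w ^ n • z) * clearedProd α lam E w n z :=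
  rfl

@[simp] lemma clearedProd_one : clearedProd α lam E w 1 z = clearedMat α lam E z := by
  simp [clearedProd_succ]

lemma clearedProd_add : clearedProd α lam E w (m + n) z =
    clearedProd α lam E w m (w ^ n • z) * clearedProd α lam E w n z := by
  induction m with
  | zero => simp
  | succ m ih => rw [Nat.succ_add, clearedProd_succ, ih, clearedProd_succ, smul_smul, pow_add,
      mul_assoc]

lemma clearedProd_smul_mul : clearedProd α lam E w n (w • z) * clearedMat α lam E z =
    clearedMat α lam E (w ^ n • z) * clearedProd α lam E w n z := by
  rw [← clearedProd_succ, clearedProd_add, clearedProd_one, pow_one]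

@[simp] lemma denomProd_zero : denomProd α w 0 z = 1 := rfl

lemma denomProd_succ :
    denomProd α w (n + 1) z = denomProd α w n z * clearedDenom α (w ^ n • z) :=
  Finset.prod_range_succ _ _

lemma denomProd_add : denomProd α w (m + n) z =
    denomProd α w m (w ^ n • z) * denomProd α w n z := by
  rw [add_comm m, denomProd, Finset.prod_range_add, mul_comm]
  simp only [denomProd, smul_smul, pow_add, mul_comm]

lemma det_clearedMat : (clearedMat α lam E z).det = clearedDenom α z ^ 2 := by
  simp [clearedMat, det_fin_two, sq]

lemma det_clearedProd : (clearedProd α lam E w n z).det = denomProd α w n z ^ 2 := by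
  induction n with
  | zero => simp
  | succ n ih => rw [clearedProd_succ, det_mul, ih, det_clearedMat, denomProd_succ, mul_pow,
      mul_comm]

lemma map_clearedDenom (f : R →ₐ[ℂ] S) : f (clearedDenom α z) = clearedDenom α (f z) := by
  simp [clearedDenom]

lemma map_clearedMat (f : R →ₐ[ℂ] S) :
    (clearedMat α lam E z).map f = clearedMat α lam E (f z) := by
  ext i j
  fin_cases i <;> fin_cases j <;> simp [clearedMat, map_clearedDenom, -Complex.coe_smul]

lemma map_clearedProd (f : R →ₐ[ℂ] S) :
    (clearedProd α lam E w n z).map f = clearedProd α lam E w n (f z) := by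
  induction n with
  | zero => simp [Matrix.map_one]
  | succ n ih => rw [clearedProd_succ, Matrix.map_mul, ih, map_clearedMat, map_smul,
      clearedProd_succ]

end ClearedCocycle

section Continuity

variable (α lam : ℝ) (n : ℕ)

lemma continuous_clearedDenom : Continuous fun z : ℂ => clearedDenom α z := by
  unfold clearedDenom; fun_prop

lemma continuous_clearedMat : Continuous fun p : ℝ × ℂ => clearedMat α lam p.1 p.2 := by
  have hdenom := continuous_clearedDenom α
  refine continuous_matrix fun i j => ?_
  fin_cases i <;> fin_cases j
  · change Continuous fun p : ℝ × ℂ =>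
      (p.1 : ℂ) • p.2 - ((α * p.1 + 2 * lam) / 2 : ℂ) • (p.2 ^ 2 + 1)
    fun_prop
  · exact (hdenom.comp continuous_snd).neg
  · exact hdenom.comp continuous_snd
  · exact continuous_const

lemma continuous_clearedProd :
    Continuous fun p : ℝ × ℂ × ℂ => clearedProd α lam p.1 p.2.1 n p.2.2 := by
  induction n with
  | zero => exact continuous_const
  | succ n ih =>
    exact ((continuous_clearedMat α lam).comp
      (f := fun p : ℝ × ℂ × ℂ => (p.1, p.2.1 ^ n • p.2.2)) (by fun_prop)).mul ih

lemma continuous_clearedProd_apply (E : ℝ) (w : ℂ) :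
    Continuous fun z : ℂ => clearedProd α lam E w n z :=
  (continuous_clearedProd α lam n).comp (f := fun z : ℂ => (E, w, z)) (by fun_prop)

lemma continuous_denomProd : Continuous fun p : ℂ × ℂ => denomProd α p.1 n p.2 := by
  have hdenom := continuous_clearedDenom α
  unfold denomProd; fun_prop

end Continuity

section FourierChar

lemma norm_fourierChar (x : ℝ) : ‖(𝐞 x : ℂ)‖ = 1 := Circle.norm_coe _

lemma continuous_coe_fourierChar : Continuous fun x : ℝ => (𝐞 x : ℂ) :=
  continuous_induced_dom.comp Real.continuous_fourierChar

lemma exists_fourierChar_eq {z : ℂ} (hz : ‖z‖ = 1) : ∃ x : ℝ, (𝐞 x : ℂ) = z := by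
  refine ⟨z.arg / (2 * Real.pi), ?_⟩
  rw [Real.fourierChar_apply, mul_div_cancel₀ _ Real.two_pi_pos.ne']
  simpa [hz] using Complex.norm_mul_exp_arg_mul_I z

lemma fourierChar_sq_add_one (x : ℝ) :
    (𝐞 x : ℂ) ^ 2 + 1 = 2 * Real.cos (2 * Real.pi * x) * (𝐞 x : ℂ) := by
  have hinv : (𝐞 x : ℂ) * 𝐞 (-x) = 1 := by
    rw [← Circle.coe_mul, ← AddChar.map_add_eq_mul]; simp
  have hcos : 2 * (Real.cos (2 * Real.pi * x) : ℂ) = 𝐞 x + 𝐞 (-x) := by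
    simp [Real.fourierChar_apply, Complex.two_cos]
  linear_combination -hinv - hcos * (𝐞 x : ℂ)

lemma fourierChar_pow_smul (n : ℕ) (b x : ℝ) : (𝐞 b : ℂ) ^ n • (𝐞 x : ℂ) = 𝐞 (x + n * b) := by
  rw [AddChar.map_add_eq_mul, ← nsmul_eq_mul, AddChar.map_nsmul_eq_pow]
  simp [mul_comm]

end FourierChar

section UnitCircle

lemma one_sub_mul_cos_pos {α : ℝ} (hα : α ∈ Ioo (-1 : ℝ) 1) (x : ℝ) :
    0 < 1 - α * Real.cos x := by
  have hlt : |α * Real.cos x| < 1 := by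
    rw [abs_mul]
    exact mul_lt_one_of_nonneg_of_lt_one_left (abs_nonneg α) (abs_lt.2 hα) (Real.abs_cos_le_one x)
  linarith [(abs_lt.1 hlt).2]

lemma clearedDenom_fourierChar (α x : ℝ) :
    clearedDenom α (𝐞 x : ℂ) = (1 - α * Real.cos (2 * Real.pi * x) : ℝ) * (𝐞 x : ℂ) := by
  rw [clearedDenom, fourierChar_sq_add_one, smul_eq_mul]
  push_cast
  ring

lemma clearedDenom_ne_zero {α : ℝ} (hα : α ∈ Ioo (-1 : ℝ) 1) {z : ℂ} (hz : ‖z‖ = 1) :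
    clearedDenom α z ≠ 0 := by
  obtain ⟨x, rfl⟩ := exists_fourierChar_eq hz
  rw [clearedDenom_fourierChar]
  exact mul_ne_zero (by exact_mod_cast (one_sub_mul_cos_pos hα _).ne') (Circle.coe_ne_zero _)

lemma denomProd_ne_zero {α : ℝ} (hα : α ∈ Ioo (-1 : ℝ) 1) {w z : ℂ} (hw : ‖w‖ = 1)
    (hz : ‖z‖ = 1) (n : ℕ) : denomProd α w n z ≠ 0 :=
  Finset.prod_ne_zero_iff.2 fun j _ => clearedDenom_ne_zero hα (by simp [hw, hz])

lemma clearedProd_ne_zero {α : ℝ} (hα : α ∈ Ioo (-1 : ℝ) 1) (lam E : ℝ) {w z : ℂ}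
    (hw : ‖w‖ = 1) (hz : ‖z‖ = 1) (n : ℕ) : clearedProd α lam E w n z ≠ 0 := fun h => by
  have hdet := det_clearedProd α lam E w n z
  rw [h, det_zero] at hdet
  exact pow_ne_zero 2 (denomProd_ne_zero hα hw hz n) hdet.symm

lemma clearedMat_fourierChar {α : ℝ} (hα : α ∈ Ioo (-1 : ℝ) 1) (lam E x : ℝ) :
    clearedMat α lam E (𝐞 x : ℂ) = clearedDenom α (𝐞 x : ℂ) • tMat (potV α lam) x E := by
  have hne : ((1 - α * Real.cos (2 * Real.pi * x) : ℝ) : ℂ) ≠ 0 := by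
    exact_mod_cast (one_sub_mul_cos_pos hα _).ne'
  have hpot : clearedDenom α (𝐞 x : ℂ) * (potV α lam x : ℂ) = lam * ((𝐞 x : ℂ) ^ 2 + 1) := by
    rw [clearedDenom_fourierChar, fourierChar_sq_add_one, potV]
    push_cast at hne ⊢
    field_simp
  have hentry : (E : ℂ) • (𝐞 x : ℂ) - ((α * E + 2 * lam) / 2 : ℂ) • ((𝐞 x : ℂ) ^ 2 + 1) =
      clearedDenom α (𝐞 x : ℂ) * (E - potV α lam x) := by
    rw [mul_sub, hpot, clearedDenom, smul_eq_mul, smul_eq_mul, smul_eq_mul]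
    ring
  ext i j
  fin_cases i <;> fin_cases j <;> simp [clearedMat, tMat, ← hentry]

lemma tProd_succ (V : ℝ → ℝ) (b : ℝ) (n : ℕ) (x : ℝ) (z : ℂ) :
    tProd V b (n + 1) x z = tMat V (x + n * b) z * tProd V b n x z := by
  simp [tProd, List.range_succ]

lemma det_tProd (V : ℝ → ℝ) (b : ℝ) (n : ℕ) (x : ℝ) (z : ℂ) : (tProd V b n x z).det = 1 := by
  induction n with
  | zero => simp [tProd]
  | succ n ih => rw [tProd_succ, det_mul, ih]; simp [tMat, det_fin_two]

lemma clearedProd_fourierChar {α : ℝ} (hα : α ∈ Ioo (-1 : ℝ) 1) (lam E b : ℝ) (n : ℕ) (x : ℝ) :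
    clearedProd α lam E (𝐞 b) n (𝐞 x : ℂ) =
      denomProd α (𝐞 b) n (𝐞 x : ℂ) • tProd (potV α lam) b n x E := by
  induction n with
  | zero => simp [tProd]
  | succ n ih => rw [clearedProd_succ, ih, fourierChar_pow_smul, clearedMat_fourierChar hα,
      tProd_succ, denomProd_succ, fourierChar_pow_smul, smul_mul_smul_comm, mul_comm]

end UnitCircle

/-! ### Rational approximation and equidistribution of orbits -/

section Equidistribution

lemma exists_coprime_abs_sub_div_le {b : ℝ} (hb : Irrational b) (Q : ℕ) :
    ∃ (p : ℤ) (q : ℕ), Q ≤ q ∧ 0 < q ∧ IsCoprime p (q : ℤ) ∧ |b - p / q| ≤ 1 / (q : ℝ) ^ 2 := by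
  obtain ⟨ε, hε, hfar⟩ :=
    Metric.eventually_nhds_iff.1 (hb.eventually_forall_le_dist_cast_rat_of_den_le Q)
  obtain ⟨n, hn⟩ := exists_nat_gt (2 / ε)
  have hn0 : (0 : ℝ) < n := lt_trans (by positivity) hn
  obtain ⟨r, hr, hrn⟩ := Real.exists_rat_abs_sub_le_and_den_le b (n := n) (mod_cast hn0)
  have hden : (1 : ℝ) ≤ r.den := mod_cast r.pos
  refine ⟨r.num, r.den, ?_, r.pos, Int.isCoprime_iff_nat_coprime.2 (by simpa using r.reduced), ?_⟩
  · by_contra! hlt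
    have hdist := hfar (y := ε / 2)
      (by rw [Real.dist_eq, sub_zero, abs_of_pos (by positivity)]; linarith) r hlt.le
    rw [Real.dist_eq] at hdist
    have hsmall : 1 / (((n : ℝ) + 1) * r.den) < ε / 2 := by
      rw [div_lt_iff₀ (by positivity)]
      rw [div_lt_iff₀ hε] at hn
      nlinarith
    linarith
  · rw [← Rat.cast_def]
    refine hr.trans (one_div_le_one_div_of_le (by positivity) ?_)
    rw [sq]
    gcongr
    exact (Nat.cast_le.2 hrn).trans (le_add_of_nonneg_right zero_le_one)

lemma sum_range_mul_emod {M : Type*} [AddCommMonoid M] {p : ℤ} {q : ℕ}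
    (hpq : IsCoprime p (q : ℤ)) (G : ℤ → M) :
    ∑ j ∈ Finset.range q, G (j * p % q) = ∑ k ∈ Finset.range q, G k := by
  rcases q.eq_zero_or_pos with rfl | hq
  · simp
  have hqz : (0 : ℤ) < q := mod_cast hq
  have htoNat (j : ℕ) : ((j * p % q).toNat : ℤ) = j * p % q :=
    Int.toNat_of_nonneg (Int.emod_nonneg _ hqz.ne')
  have hmaps : MapsTo (fun j : ℕ => (j * p % q).toNat) (Finset.range q) (Finset.range q) := by
    intro j _
    have hlt := Int.emod_lt_of_pos (j * p) hqz
    rw [← htoNat] at hlt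
    simpa using mod_cast hlt
  have hinj : InjOn (fun j : ℕ => (j * p % q).toNat) (Finset.range q) := by
    intro i hi j hj hij
    have hmod : (i : ℤ) * p % q = j * p % q := by
      simpa only [htoNat] using congrArg (Nat.cast : ℕ → ℤ) hij
    have hdvd : (q : ℤ) ∣ (i - j : ℤ) :=
      hpq.symm.dvd_of_dvd_mul_right (by rw [sub_mul]; exact Int.ModEq.dvd hmod.symm)
    have hzero := Int.eq_zero_of_abs_lt_dvd hdvd (by
      simp only [Finset.coe_range, mem_Iio] at hi hj
      rw [abs_lt]; constructor <;> lia)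
    lia
  refine Finset.sum_nbij _ hmaps hinj
    (Finset.surjOn_of_injOn_of_card_le _ hmaps hinj le_rfl) fun j _ => ?_
  rw [htoNat]

variable {b : ℝ} {p : ℤ} {q : ℕ} {φ g : ℝ → ℝ}

lemma apply_add_mul_le_integral (hq : 0 < q) (hb : |b - p / q| ≤ 1 / (q : ℝ) ^ 2)
    (hφ : Function.Periodic φ 1) (hgi : ∀ a c, IntervalIntegrable g volume a c)
    (hφg : ∀ x y : ℝ, |x - y| ≤ 2 / (q : ℝ) → φ x ≤ g y) (x : ℝ) {j : ℕ} (hj : j < q) :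
    φ (x + j * b) ≤ q * ∫ y in (x + ((j * p % q : ℤ) : ℝ) / q)..
      (x + (((j * p % q : ℤ) : ℝ) + 1) / q), g y := by
  have hq' : (0 : ℝ) < q := mod_cast hq
  set k : ℤ := j * p % q
  have hdiv : (j : ℝ) * p = k + q * ((j * p / q : ℤ) : ℝ) :=
    mod_cast (Int.emod_add_mul_ediv (j * p) q).symm
  have hshift : φ (x + j * b) = φ (x + k / q + j * (b - p / q)) := by
    rw [← hφ.int_mul (j * p / q) (x + k / q + j * (b - p / q))]
    congr 1
    field_simp
    linear_combination hdiv
  have herr : |(j : ℝ) * (b - p / q)| ≤ 1 / q := by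
    rw [abs_mul, Nat.abs_cast]
    calc (j : ℝ) * |b - p / q| ≤ q * (1 / (q : ℝ) ^ 2) := by gcongr
      _ = 1 / q := by field_simp
  have hright : x + ((k : ℝ) + 1) / q = x + k / q + 1 / q := by ring
  rw [hright]
  have hint : ∫ _ in (x + (k : ℝ) / q)..(x + k / q + 1 / q), φ (x + j * b) ≤
      ∫ y in (x + (k : ℝ) / q)..(x + k / q + 1 / q), g y := by
    refine intervalIntegral.integral_mono_on (le_add_of_nonneg_right (by positivity))
      intervalIntegrable_const (hgi _ _) fun y hy => ?_
    rw [hshift]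
    refine hφg _ _ (abs_le.2 ?_)
    have htwo : (2 : ℝ) / q = 1 / q + 1 / q := by ring
    constructor <;> linarith [hy.1, hy.2, abs_le.1 herr]
  rw [intervalIntegral.integral_const, add_sub_cancel_left, smul_eq_mul] at hint
  calc φ (x + j * b) = q * (1 / q * φ (x + j * b)) := by field_simp
    _ ≤ _ := mul_le_mul_of_nonneg_left hint hq'.le

lemma sum_apply_add_mul_le_mul_integral (hq : 0 < q) (hpq : IsCoprime p (q : ℤ))
    (hb : |b - p / q| ≤ 1 / (q : ℝ) ^ 2) (hφ : Function.Periodic φ 1)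
    (hg : Function.Periodic g 1) (hgi : ∀ a c, IntervalIntegrable g volume a c)
    (hφg : ∀ x y : ℝ, |x - y| ≤ 2 / (q : ℝ) → φ x ≤ g y) (x : ℝ) :
    ∑ j ∈ Finset.range q, φ (x + j * b) ≤ q * ∫ y in (0 : ℝ)..1, g y := by
  have hq' : (q : ℝ) ≠ 0 := mod_cast hq.ne'
  calc ∑ j ∈ Finset.range q, φ (x + j * b)
    _ ≤ ∑ j ∈ Finset.range q, q * ∫ y in (x + ((j * p % q : ℤ) : ℝ) / q)..
          (x + (((j * p % q : ℤ) : ℝ) + 1) / q), g y :=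
        Finset.sum_le_sum fun j hj =>
          apply_add_mul_le_integral hq hb hφ hgi hφg x (Finset.mem_range.1 hj)
    _ = ∑ k ∈ Finset.range q,
          q * ∫ y in (x + ((k : ℤ) : ℝ) / q)..(x + (((k : ℤ) : ℝ) + 1) / q), g y :=
        sum_range_mul_emod hpq fun k =>
          q * ∫ y in (x + (k : ℝ) / q)..(x + ((k : ℝ) + 1) / q), g y
    _ = q * ∫ y in x..(x + 1), g y := by
        have hadj := intervalIntegral.sum_integral_adjacent_intervals (μ := volume) (f := g)
          (n := q) (a := fun k : ℕ => x + (k : ℝ) / q) fun k _ => hgi _ _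
        simp only [Nat.cast_add, Nat.cast_one, CharP.cast_eq_zero, zero_div, add_zero,
          div_self hq'] at hadj
        simp only [Int.cast_natCast, ← Finset.mul_sum, hadj]
    _ = q * ∫ y in (0 : ℝ)..1, g y := by rw [hg.intervalIntegral_add_eq x 0, zero_add]

end Equidistribution

/-! ### The Lyapunov exponent of the cleared cocycle -/

section DenomMean

lemma circleAverage_eq_integral_fourierChar {F : Type*} [NormedAddCommGroup F] [NormedSpace ℝ F]
    (f : ℂ → F) : Real.circleAverage f 0 1 = ∫ x in (0 : ℝ)..1, f (𝐞 x) := by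
  have hsubst := intervalIntegral.integral_comp_mul_left (a := 0) (b := 1)
    (fun θ => f (circleMap 0 1 θ)) Real.two_pi_pos.ne'
  rw [mul_zero, mul_one] at hsubst
  rw [Real.circleAverage, ← hsubst]
  simp only [Real.fourierChar_apply, circleMap_zero,
    Complex.ofReal_one, one_mul]

lemma fourierChar_add_one (x : ℝ) : (𝐞 (x + 1) : ℂ) = 𝐞 x := by
  simp [AddChar.map_add_eq_mul, Real.fourierChar_apply]

lemma periodic_comp_fourierChar {β : Type*} (f : ℂ → β) :
    Function.Periodic (fun x : ℝ => f (𝐞 x)) 1 := fun x => congrArg f (fourierChar_add_one x)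

lemma integral_fourierChar_add {F : Type*} [NormedAddCommGroup F] [NormedSpace ℝ F]
    (f : ℂ → F) (c : ℝ) : ∫ x in (0 : ℝ)..1, f (𝐞 (x + c)) = ∫ x in (0 : ℝ)..1, f (𝐞 x) := by
  rw [intervalIntegral.integral_comp_add_right fun x => f (𝐞 x), add_comm 1 c, zero_add,
    (periodic_comp_fourierChar f).intervalIntegral_add_eq c 0, zero_add]

/-- The geometric mean of `‖clearedDenom α z‖` over the unit circle. -/
noncomputable def denomGeomMean (α : ℝ) : ℝ := (1 + √(1 - α ^ 2)) / 2

lemma half_le_denomGeomMean (α : ℝ) : 1 / 2 ≤ denomGeomMean α := by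
  unfold denomGeomMean
  linarith [Real.sqrt_nonneg (1 - α ^ 2)]

lemma denomGeomMean_pos (α : ℝ) : 0 < denomGeomMean α :=
  one_half_pos.trans_le (half_le_denomGeomMean α)

lemma denomGeomMean_sq {α : ℝ} (hα : α ∈ Ioo (-1 : ℝ) 1) :
    denomGeomMean α ^ 2 + (α / 2) ^ 2 = denomGeomMean α := by
  have hsq := Real.sq_sqrt (show 0 ≤ 1 - α ^ 2 by nlinarith [hα.1, hα.2])
  unfold denomGeomMean
  linear_combination hsq / 4

lemma clearedDenom_eq_mul {α : ℝ} (hα : α ∈ Ioo (-1 : ℝ) 1) (z : ℂ) :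
    clearedDenom α z = denomGeomMean α * (z - (α / (2 * denomGeomMean α) : ℝ)) *
      (1 - (α / (2 * denomGeomMean α) : ℝ) * z) := by
  have hκ : (denomGeomMean α : ℂ) ≠ 0 := mod_cast (denomGeomMean_pos α).ne'
  have hsq : (denomGeomMean α : ℂ) ^ 2 + (α / 2) ^ 2 = denomGeomMean α :=
    mod_cast denomGeomMean_sq hα
  rw [clearedDenom, smul_eq_mul]
  push_cast
  field_simp
  linear_combination (-4 * z) * hsq

lemma norm_clearedDenom {α : ℝ} (hα : α ∈ Ioo (-1 : ℝ) 1) {z : ℂ} (hz : ‖z‖ = 1) :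
    ‖clearedDenom α z‖ =
      denomGeomMean α * ‖z - (α / (2 * denomGeomMean α) : ℝ)‖ ^ 2 := by
  set ρ : ℝ := α / (2 * denomGeomMean α) with hρ
  have hconj : z * starRingEnd ℂ z = 1 := by simp [Complex.mul_conj, Complex.normSq_eq_norm_sq, hz]
  have hreflect : ‖1 - (ρ : ℂ) * z‖ = ‖z - ρ‖ := by
    rw [← Complex.norm_conj (z - ρ), ← one_mul ‖starRingEnd ℂ _‖, ← hz, ← norm_mul, map_sub,
      Complex.conj_ofReal, mul_sub, hconj, mul_comm z]
  rw [clearedDenom_eq_mul hα, ← hρ, norm_mul, norm_mul, hreflect, Complex.norm_real,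
    Real.norm_of_nonneg (denomGeomMean_pos α).le]
  ring

lemma continuous_log_norm_clearedDenom {α : ℝ} (hα : α ∈ Ioo (-1 : ℝ) 1) :
    Continuous fun x : ℝ => Real.log ‖clearedDenom α (𝐞 x : ℂ)‖ :=
  ((continuous_clearedDenom α).comp continuous_coe_fourierChar).norm.log fun x =>
    norm_ne_zero_iff.2 (clearedDenom_ne_zero hα (norm_fourierChar x))

lemma integral_log_norm_clearedDenom {α : ℝ} (hα : α ∈ Ioo (-1 : ℝ) 1) :
    ∫ x in (0 : ℝ)..1, Real.log ‖clearedDenom α (𝐞 x : ℂ)‖ = Real.log (denomGeomMean α) := by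
  have hκ := denomGeomMean_pos α
  set ρ : ℝ := α / (2 * denomGeomMean α) with hρ
  have hρ1 : |ρ| ≤ 1 := by
    rw [hρ, abs_div, abs_of_pos (show 0 < 2 * denomGeomMean α by positivity),
      div_le_one (by positivity)]
    linarith [half_le_denomGeomMean α, abs_lt.2 hα]
  have hlog {z : ℂ} (hz : ‖z‖ = 1) :
      Real.log ‖clearedDenom α z‖ = Real.log (denomGeomMean α) + 2 * Real.log ‖z - ρ‖ := by
    have hne := norm_ne_zero_iff.2 (clearedDenom_ne_zero hα hz)
    rw [norm_clearedDenom hα hz] at hne ⊢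
    rw [Real.log_mul hκ.ne' (right_ne_zero_of_mul hne), Real.log_pow, Nat.cast_ofNat]
  have hcirc : ∫ x in (0 : ℝ)..1, Real.log ‖(𝐞 x : ℂ) - ρ‖ = 0 := by
    rw [← circleAverage_eq_integral_fourierChar fun z => Real.log ‖z - ρ‖,
      circleAverage_log_norm_sub_const_eq_posLog, Real.posLog_eq_zero_iff]
    simpa using hρ1
  have hint : IntervalIntegrable (fun x : ℝ => 2 * Real.log ‖(𝐞 x : ℂ) - ρ‖) volume 0 1 := by
    have hcont : Continuous fun x : ℝ =>
        Real.log ‖clearedDenom α (𝐞 x : ℂ)‖ - Real.log (denomGeomMean α) :=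
      (continuous_log_norm_clearedDenom hα).sub continuous_const
    simp only [hlog (norm_fourierChar _), add_sub_cancel_left] at hcont
    exact hcont.intervalIntegrable _ _
  simp_rw [hlog (norm_fourierChar _)]
  rw [intervalIntegral.integral_add intervalIntegrable_const hint,
    intervalIntegral.integral_const_mul, hcirc]
  simp

lemma integral_log_norm_denomProd {α : ℝ} (hα : α ∈ Ioo (-1 : ℝ) 1) (b : ℝ) (n : ℕ) :
    ∫ x in (0 : ℝ)..1, Real.log ‖denomProd α (𝐞 b) n (𝐞 x : ℂ)‖ =
      n * Real.log (denomGeomMean α) := by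
  have hlog (x : ℝ) : Real.log ‖denomProd α (𝐞 b) n (𝐞 x : ℂ)‖ =
      ∑ j ∈ Finset.range n, Real.log ‖clearedDenom α (𝐞 (x + j * b) : ℂ)‖ := by
    simp only [denomProd, norm_prod, fourierChar_pow_smul]
    exact Real.log_prod fun j _ =>
      norm_ne_zero_iff.2 (clearedDenom_ne_zero hα (norm_fourierChar _))
  simp_rw [hlog]
  have hcont (j : ℕ) : Continuous fun x : ℝ => Real.log ‖clearedDenom α (𝐞 (x + j * b) : ℂ)‖ :=
    (continuous_log_norm_clearedDenom hα).comp (continuous_add_const _)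
  rw [intervalIntegral.integral_finsetSum fun j _ => (hcont j).intervalIntegrable _ _]
  simp [integral_fourierChar_add fun z : ℂ => Real.log ‖clearedDenom α z‖,
    integral_log_norm_clearedDenom hα]

end DenomMean

section Lyapunov

lemma lyap_term_nonneg (V : ℝ → ℝ) (b : ℝ) (z : ℂ) (n : ℕ+) :
    0 ≤ ((n : ℝ))⁻¹ * ∫ x in (0 : ℝ)..(1 : ℝ), Real.log (opNorm2 (tProd V b n x z)) :=
  mul_nonneg (by positivity) <| intervalIntegral.integral_nonneg zero_le_one fun _ _ =>
    Real.log_nonneg (one_le_opNorm2_of_det_eq_one (det_tProd _ _ _ _ _))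

lemma lyap_nonneg (V : ℝ → ℝ) (b : ℝ) (z : ℂ) : 0 ≤ lyap V b z :=
  le_ciInf (lyap_term_nonneg V b z)

/-- The mean of `log ‖clearedProd‖` at time `n` over the unit circle. -/
noncomputable def integralLogNorm (α lam E b : ℝ) (n : ℕ) : ℝ :=
  ∫ x in (0 : ℝ)..1, Real.log (opNorm2 (clearedProd α lam E (𝐞 b) n (𝐞 x : ℂ)))

variable {α : ℝ} (hα : α ∈ Ioo (-1 : ℝ) 1) (lam E b : ℝ)
include hα

lemma continuous_log_opNorm2_clearedProd (n : ℕ) :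
    Continuous fun x : ℝ => Real.log (opNorm2 (clearedProd α lam E (𝐞 b) n (𝐞 x : ℂ))) :=
  (continuous_opNorm2.comp ((continuous_clearedProd_apply _ _ _ _ _).comp
    continuous_coe_fourierChar)).log fun x => (opNorm2_pos
      (clearedProd_ne_zero hα _ _ (norm_fourierChar b) (norm_fourierChar x) n)).ne'

lemma continuous_log_norm_clearedProd (n : ℕ) :
    Continuous fun x : ℝ => Real.log ‖clearedProd α lam E (𝐞 b) n (𝐞 x : ℂ)‖ :=
  ((continuous_clearedProd_apply _ _ _ _ _).comp
    continuous_coe_fourierChar).norm.log fun x => norm_ne_zero_iff.2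
      (clearedProd_ne_zero hα _ _ (norm_fourierChar b) (norm_fourierChar x) n)

lemma integral_log_opNorm2_tProd (n : ℕ) :
    ∫ x in (0 : ℝ)..1, Real.log (opNorm2 (tProd (potV α lam) b n x E)) =
      integralLogNorm α lam E b n - n * Real.log (denomGeomMean α) := by
  have hcont : Continuous fun x : ℝ => Real.log ‖denomProd α (𝐞 b) n (𝐞 x : ℂ)‖ :=
    ((continuous_denomProd α n).comp (f := fun x : ℝ => ((𝐞 b : ℂ), (𝐞 x : ℂ)))
      (continuous_const.prodMk continuous_coe_fourierChar)).norm.log fun x =>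
        norm_ne_zero_iff.2 (denomProd_ne_zero hα (norm_fourierChar b) (norm_fourierChar x) n)
  rw [← integral_log_norm_denomProd hα b n, integralLogNorm, ← intervalIntegral.integral_sub
    ((continuous_log_opNorm2_clearedProd hα lam E b n).intervalIntegrable _ _)
    (hcont.intervalIntegrable _ _)]
  congr 1 with x
  have hdenom := denomProd_ne_zero hα (norm_fourierChar b) (norm_fourierChar x) n
  have hone := one_le_opNorm2_of_det_eq_one (det_tProd (potV α lam) b n x E)
  rw [clearedProd_fourierChar hα, opNorm2_smul, Real.log_mul (norm_ne_zero_iff.2 hdenom)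
    (by positivity), add_sub_cancel_left]

lemma mul_lyap_add_log_le_integralLogNorm {n : ℕ} (hn : 0 < n) :
    n * (lyap (potV α lam) b E + Real.log (denomGeomMean α)) ≤ integralLogNorm α lam E b n := by
  have hle : lyap (potV α lam) b E ≤ ((n : ℝ))⁻¹ * ∫ x in (0 : ℝ)..(1 : ℝ),
      Real.log (opNorm2 (tProd (potV α lam) b n x E)) :=
    ciInf_le ⟨0, by rintro _ ⟨m, rfl⟩; exact lyap_term_nonneg _ _ _ m⟩ (⟨n, hn⟩ : ℕ+)
  rw [integral_log_opNorm2_tProd hα, inv_mul_eq_div, le_div_iff₀ (mod_cast hn)] at hle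
  linarith

lemma exists_integralLogNorm_le {δ : ℝ} (hδ : 0 < δ) : ∃ n : ℕ, 0 < n ∧
    integralLogNorm α lam E b n ≤
      n * (lyap (potV α lam) b E + Real.log (denomGeomMean α) + δ) := by
  obtain ⟨n, hlt⟩ := exists_lt_of_ciInf_lt (lt_add_of_pos_right (lyap (potV α lam) b E) hδ)
  have hn : (0 : ℝ) < (n : ℕ) := mod_cast n.pos
  rw [integral_log_opNorm2_tProd hα, inv_mul_eq_div, div_lt_iff₀ hn] at hlt
  exact ⟨n, n.pos, by linarith⟩

lemma le_lyap_of_forall_le_integralLogNorm {c : ℝ}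
    (hc : ∀ n : ℕ, 0 < n → n * c ≤ integralLogNorm α lam E b n) :
    c - Real.log (denomGeomMean α) ≤ lyap (potV α lam) b E := by
  refine le_ciInf fun n => ?_
  have hn : (0 : ℝ) < (n : ℕ) := mod_cast n.pos
  rw [integral_log_opNorm2_tProd hα, inv_mul_eq_div, le_div_iff₀ hn]
  linarith [hc n n.pos]

end Lyapunov

/-! ### The cocycle as a matrix of polynomials -/

section PolynomialCocycle

variable (α lam E : ℝ)

lemma eval_clearedProd_X (w z : ℂ) (n : ℕ) (i j : Fin 2) :
    (clearedProd α lam E w n (X : ℂ[X]) i j).eval z = clearedProd α lam E w n z i j := by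
  simpa [coe_aeval_eq_eval] using
    congrFun₂ (map_clearedProd α lam E w n (X : ℂ[X]) (aeval z)) i j

lemma clearedProd_zero_right (w : ℂ) (n : ℕ) :
    clearedProd α lam E w n (0 : ℂ) = clearedMat α lam E (0 : ℂ) ^ n := by
  induction n with
  | zero => simp
  | succ n ih => rw [clearedProd_succ, ih, smul_zero, pow_succ']

lemma natDegree_clearedDenom_smul_X_le (a : ℂ) :
    (clearedDenom α (a • X : ℂ[X])).natDegree ≤ 2 := by
  simp only [clearedDenom, smul_eq_C_mul]
  compute_degree

lemma natDegree_clearedMat_smul_X_le (a : ℂ) (i j : Fin 2) :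
    (clearedMat α lam E (a • X : ℂ[X]) i j).natDegree ≤ 2 := by
  have hdenom := natDegree_clearedDenom_smul_X_le α a
  fin_cases i <;> fin_cases j
  · change natDegree
      ((E : ℂ) • (a • X) - ((α * E + 2 * lam) / 2 : ℂ) • ((a • X : ℂ[X]) ^ 2 + 1)) ≤ 2
    simp only [smul_eq_C_mul]
    compute_degree
  · simpa [clearedMat] using hdenom
  · simpa [clearedMat] using hdenom
  · simp [clearedMat]

lemma coeff_two_clearedDenom_smul_X (a : ℂ) :
    (clearedDenom α (a • X : ℂ[X])).coeff 2 = a ^ 2 * clearedDenom α (0 : ℂ) := by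
  simp [clearedDenom, _root_.smul_pow, coeff_one, coeff_X, mul_comm]

lemma coeff_two_clearedMat_smul_X (a : ℂ) (i j : Fin 2) :
    (clearedMat α lam E (a • X : ℂ[X]) i j).coeff 2 =
      a ^ 2 * clearedMat α lam E (0 : ℂ) i j := by
  have hdenom := coeff_two_clearedDenom_smul_X α a
  fin_cases i <;> fin_cases j <;>
    simp [clearedMat, hdenom, _root_.smul_pow, coeff_one, coeff_X, mul_comm]

lemma natDegree_clearedProd_X_le (w : ℂ) (n : ℕ) (i j : Fin 2) :
    (clearedProd α lam E w n (X : ℂ[X]) i j).natDegree ≤ 2 * n := by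
  induction n generalizing i j with
  | zero => fin_cases i <;> fin_cases j <;> simp
  | succ n ih =>
    rw [clearedProd_succ, mul_apply, Nat.mul_succ, add_comm]
    exact natDegree_sum_le_of_forall_le _ _ fun k _ =>
      natDegree_mul_le_of_le (natDegree_clearedMat_smul_X_le α lam E _ i k) (ih k j)

lemma coeff_clearedProd_X (w : ℂ) (n : ℕ) (i j : Fin 2) :
    (clearedProd α lam E w n (X : ℂ[X]) i j).coeff (2 * n) =
      (∏ k ∈ Finset.range n, (w ^ k) ^ 2) * (clearedMat α lam E (0 : ℂ) ^ n) i j := by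
  induction n generalizing i j with
  | zero => fin_cases i <;> fin_cases j <;> simp
  | succ n ih =>
    rw [clearedProd_succ, mul_apply, Nat.mul_succ, add_comm, finsetSum_coeff, pow_succ',
      mul_apply, Finset.mul_sum, Finset.prod_range_succ]
    refine Finset.sum_congr rfl fun k _ => ?_
    rw [coeff_mul_add_eq_of_natDegree_le (natDegree_clearedMat_smul_X_le _ _ _ _ _ _)
      (natDegree_clearedProd_X_le _ _ _ _ _ _ _), ih, coeff_two_clearedMat_smul_X]
    ring

end PolynomialCocycle

/-! ### Mahler measures and Herman's lower bound -/

section MahlerMeasure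

variable {p : ℂ[X]}

lemma ae_eval_fourierChar_ne_zero (hp : p ≠ 0) : ∀ᵐ x : ℝ, p.eval (𝐞 x : ℂ) ≠ 0 := by
  have hcount : {t : ℝ | p.eval (circleMap 0 1 t) = 0}.Countable :=
    ((p.rootSet_finite ℂ).countable.preimage_circleMap 0 one_ne_zero).mono fun t ht => by
      simpa [mem_rootSet, hp] using ht
  have hinj : Function.Injective fun x : ℝ => 2 * Real.pi * x :=
    mul_right_injective₀ Real.two_pi_pos.ne'
  have hnull := (hcount.preimage hinj).measure_zero volume
  rw [ae_iff]
  simpa [Real.fourierChar_apply, circleMap] using hnull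

variable (p) in
lemma intervalIntegrable_log_norm_eval :
    IntervalIntegrable (fun x : ℝ => Real.log ‖p.eval (𝐞 x : ℂ)‖) volume 0 1 := by
  have hcomp := p.intervalIntegrable_mahlerMeasure.comp_mul_left (c := 2 * Real.pi) (by simp)
  rw [zero_div, div_self Real.two_pi_pos.ne'] at hcomp
  simpa [Real.fourierChar_apply, circleMap] using hcomp

variable (p) in
lemma logMahlerMeasure_eq_integral :
    p.logMahlerMeasure = ∫ x in (0 : ℝ)..1, Real.log ‖p.eval (𝐞 x : ℂ)‖ := by
  rw [logMahlerMeasure_def, circleAverage_eq_integral_fourierChar]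

lemma logMahlerMeasure_le_integral (hp : p ≠ 0) {g : ℝ → ℝ}
    (hgi : IntervalIntegrable (fun x => Real.log (g x)) volume 0 1)
    (hg : ∀ x, ‖p.eval (𝐞 x : ℂ)‖ ≤ g x) :
    p.logMahlerMeasure ≤ ∫ x in (0 : ℝ)..1, Real.log (g x) := by
  rw [logMahlerMeasure_eq_integral]
  refine intervalIntegral.integral_mono_ae zero_le_one (intervalIntegrable_log_norm_eval p) hgi ?_
  filter_upwards [ae_eval_fourierChar_ne_zero hp] with x hx
  exact Real.log_le_log (norm_pos_iff.2 hx) (hg x)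

lemma log_norm_eval_zero_le_logMahlerMeasure (hp : p.eval 0 ≠ 0) :
    Real.log ‖p.eval 0‖ ≤ p.logMahlerMeasure := by
  rw [logMahlerMeasure_eq_log_MahlerMeasure]
  refine Real.log_le_log (norm_pos_iff.2 hp) ?_
  simpa [coeff_zero_eq_eval_zero] using norm_coeff_le_choose_mul_mahlerMeasure 0 p

end MahlerMeasure

section Herman

variable {α : ℝ} (hα : α ∈ Ioo (-1 : ℝ) 1) (lam E b : ℝ)
include hα

lemma mul_log_norm_eigenvalue_le_integralLogNorm {μ : ℂ} {u : Fin 2 → ℂ} (hμ : μ ≠ 0)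
    (hu : u ≠ 0) (heig : clearedMat α lam E (0 : ℂ) *ᵥ u = μ • u) (n : ℕ) :
    n * Real.log ‖μ‖ ≤ integralLogNorm α lam E b n := by
  set s : ℝ := ‖WithLp.toLp 2 u‖ ^ 2 with hs
  have hs0 : 0 < s := by
    have hnorm : 0 < ‖WithLp.toLp 2 u‖ := norm_pos_iff.2 (by simpa using hu)
    positivity
  have hsc : (s : ℂ) ≠ 0 := mod_cast hs0.ne'
  have huu : star u ⬝ᵥ u = s := by
    rw [hs, EuclideanSpace.norm_sq_eq, dotProduct]
    simp [Complex.conj_mul']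
  have hpow (k : ℕ) : clearedMat α lam E (0 : ℂ) ^ k *ᵥ u = μ ^ k • u := by
    induction k with
    | zero => simp
    | succ k ih => rw [pow_succ', ← mulVec_mulVec, ih, mulVec_smul, heig, smul_smul, pow_succ]
  set f : ℂ[X] := C (s : ℂ)⁻¹ * ∑ i, ∑ j, C (star u i) *
    (clearedProd α lam E (𝐞 b) n (X : ℂ[X]) i j * C (u j)) with hf
  have heval (z : ℂ) :
      f.eval z = (s : ℂ)⁻¹ * (star u ⬝ᵥ clearedProd α lam E (𝐞 b) n z *ᵥ u) := by
    simp only [hf, eval_mul, eval_C, eval_finsetSum, eval_clearedProd_X, dotProduct, mulVec,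
      Finset.mul_sum]
  have hzero : f.eval 0 = μ ^ n := by
    rw [heval, clearedProd_zero_right, hpow, dotProduct_smul, huu, smul_eq_mul]
    field_simp
  have hne : f.eval 0 ≠ 0 := hzero ▸ pow_ne_zero n hμ
  have hbound (z : ℂ) : ‖f.eval z‖ ≤ opNorm2 (clearedProd α lam E (𝐞 b) n z) := by
    have hform := norm_star_dotProduct_mulVec_le (clearedProd α lam E (𝐞 b) n z) u u
    rw [mul_assoc, ← sq, ← hs] at hform
    rw [heval, norm_mul, norm_inv, Complex.norm_real, Real.norm_of_nonneg hs0.le,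
      inv_mul_le_iff₀ hs0, mul_comm]
    exact hform
  calc n * Real.log ‖μ‖ = Real.log ‖f.eval 0‖ := by rw [hzero, norm_pow, Real.log_pow]
    _ ≤ f.logMahlerMeasure := log_norm_eval_zero_le_logMahlerMeasure hne
    _ ≤ integralLogNorm α lam E b n := logMahlerMeasure_le_integral (fun h => hne (by simp [h]))
        ((continuous_log_opNorm2_clearedProd hα lam E b n).intervalIntegrable 0 1)
        fun x => hbound _

lemma lyap_pos_of_two_lt (hβ : 2 < α * E + 2 * lam) : 0 < lyap (potV α lam) b E := by
  set β := α * E + 2 * lam with hβd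
  have hα2 : α ^ 2 < 1 := by nlinarith [hα.1, hα.2]
  have hdisc : 0 < β ^ 2 - 4 * α ^ 2 := by nlinarith
  set μ := -(β + √(β ^ 2 - 4 * α ^ 2)) / 4 with hμ
  have hroot : μ ^ 2 + β / 2 * μ + α ^ 2 / 4 = 0 := by
    linear_combination Real.sq_sqrt hdisc.le / 16
  have hlarge : denomGeomMean α < |μ| := by
    have hsqrt : 2 * √(1 - α ^ 2) ≤ √(β ^ 2 - 4 * α ^ 2) :=
      Real.le_sqrt_of_sq_le (by rw [mul_pow, Real.sq_sqrt (by linarith)]; nlinarith)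
    rw [hμ, neg_div, abs_neg, abs_of_pos (by positivity), denomGeomMean]
    linarith
  have hμ0 : (μ : ℂ) ≠ 0 :=
    mod_cast abs_pos.1 ((denomGeomMean_pos α).trans hlarge)
  have heig : clearedMat α lam E (0 : ℂ) *ᵥ ![(μ : ℂ), -(α : ℂ) / 2] =
      (μ : ℂ) • ![(μ : ℂ), -(α : ℂ) / 2] := by
    have hrootc : (μ : ℂ) ^ 2 + (α * E + 2 * lam) / 2 * μ + α ^ 2 / 4 = 0 := by
      exact_mod_cast hβd ▸ hroot
    ext i
    fin_cases i
    · simp [clearedMat, clearedDenom, mulVec, dotProduct]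
      linear_combination -hrootc
    · simp [clearedMat, clearedDenom, mulVec, dotProduct]
      ring
  have hle := le_lyap_of_forall_le_integralLogNorm hα lam E b fun n _ =>
    mul_log_norm_eigenvalue_le_integralLogNorm hα lam E b hμ0
      (fun h => hμ0 (by simpa using congrFun h 0)) heig n
  rw [Complex.norm_real, Real.norm_eq_abs] at hle
  linarith [Real.log_lt_log (denomGeomMean_pos α) hlarge]

end Herman

/-! ### Uniform upper bounds near the unit circle -/

section UniformUpperBound

lemma uniformContinuous_of_periodic {β : Type*} [UniformSpace β] {φ : ℝ → β}
    (hc : Continuous φ) (hp : Function.Periodic φ 1) : UniformContinuous φ := by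
  have hlift : Continuous (hp.lift : AddCircle (1 : ℝ) → β) := continuous_coinduced_dom.2 hc
  exact (CompactSpace.uniformContinuous_of_continuous hlift).comp
    (uniformContinuous_addMonoidHom_of_continuous
      (f := QuotientAddGroup.mk' (AddSubgroup.zmultiples (1 : ℝ))) (AddCircle.continuous_mk' 1))

lemma exists_forall_annulus_lt {f : ℂ → ℝ} (hf : Continuous f) {c : ℝ}
    (h : ∀ z, ‖z‖ = 1 → f z < c) :
    ∃ τ > 0, ∀ z, 1 ≤ ‖z‖ → ‖z‖ ≤ Real.exp τ → f z < c := by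
  obtain ⟨ε, hε, hthick⟩ := (isCompact_sphere (0 : ℂ) 1).exists_thickening_subset_open
    (isOpen_lt hf continuous_const) (fun z hz => h z (by simpa using hz))
  refine ⟨Real.log (1 + ε / 2), Real.log_pos (by linarith), fun z hz1 hz2 =>
    hthick (Metric.mem_thickening_iff.2 ⟨z / ‖z‖, ?_, ?_⟩)⟩
  · simp [div_self (zero_lt_one.trans_le hz1).ne']
  · have hz0 : (‖z‖ : ℂ) ≠ 0 := mod_cast (zero_lt_one.trans_le hz1).ne'
    have hdiff : z - z / ‖z‖ = z / ‖z‖ * ((‖z‖ - 1 : ℝ) : ℂ) := by push_cast; field_simp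
    rw [Real.exp_log (by linarith)] at hz2
    rw [dist_eq_norm, hdiff, norm_mul, norm_div, Complex.norm_real, norm_norm,
      div_self (zero_lt_one.trans_le hz1).ne', one_mul, Complex.norm_real,
      Real.norm_of_nonneg (sub_nonneg.2 hz1)]
    linarith

/-- A submultiplicative cocycle over the rotation `z ↦ e^{2πib} z` of the complex plane, positive
on the unit circle. It models the norms of the cleared transfer matrices and their denominators. -/
structure IsSubmulCocycle (b : ℝ) (F : ℕ → ℂ → ℝ) : Prop where
  nonneg : ∀ n z, 0 ≤ F n z
  continuous : ∀ n, Continuous (F n)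
  apply_zero_le_one : ∀ z, F 0 z ≤ 1
  pos : ∀ n (x : ℝ), 0 < F n (𝐞 x)
  add_le : ∀ m n z, F (m + n) z ≤ F m ((𝐞 b : ℂ) ^ n • z) * F n z

namespace IsSubmulCocycle

variable {b : ℝ} {F : ℕ → ℂ → ℝ} (hF : IsSubmulCocycle b F)
include hF

lemma mul_le_prod (k l : ℕ) (z : ℂ) :
    F (k * l) z ≤ ∏ j ∈ Finset.range k, F l ((𝐞 b : ℂ) ^ (j * l) • z) := by
  induction k with
  | zero => simpa using hF.apply_zero_le_one z
  | succ k ih =>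
    rw [Finset.prod_range_succ, add_mul, one_mul, add_comm, mul_comm (∏ j ∈ _, _)]
    exact (hF.add_le _ _ _).trans (mul_le_mul_of_nonneg_left ih (hF.nonneg _ _))

lemma exists_forall_circle_le (hb : Irrational b) {m : ℕ} (hm : 0 < m) {Λ Λ' : ℝ}
    (hint : ∫ x in (0 : ℝ)..1, Real.log (F m (𝐞 x)) ≤ m * Λ) (hΛ : Λ < Λ') :
    ∃ n > 0, ∀ x : ℝ, F n (𝐞 x) ≤ Real.exp (n * Λ') := by
  set φ : ℝ → ℝ := fun x => Real.log (F m (𝐞 x)) with hφ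
  have hφc : Continuous φ :=
    ((hF.continuous m).comp continuous_coe_fourierChar).log fun x => (hF.pos m x).ne'
  have hφp : Function.Periodic φ 1 := periodic_comp_fourierChar fun z => Real.log (F m z)
  have hm' : (0 : ℝ) < m := mod_cast hm
  obtain ⟨η, hη, hηφ⟩ := Metric.uniformContinuous_iff.1 (uniformContinuous_of_periodic hφc hφp)
    (m * (Λ' - Λ)) (mul_pos hm' (sub_pos.2 hΛ))
  obtain ⟨Q, hQ⟩ := exists_nat_gt (2 / η)
  have hmb : Irrational ((m : ℝ) * b) := mod_cast hb.natCast_mul hm.ne'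
  obtain ⟨p, q, hQq, hq, hpq, happ⟩ := exists_coprime_abs_sub_div_le hmb Q
  have hq' : (0 : ℝ) < q := mod_cast hq
  have hqη : 2 / (q : ℝ) < η :=
    (div_lt_comm₀ hq' hη).2 (hQ.trans_le (mod_cast hQq))
  refine ⟨q * m, Nat.mul_pos hq hm, fun x => (hF.mul_le_prod q m _).trans ?_⟩
  have hsum := sum_apply_add_mul_le_mul_integral hq hpq happ hφp
    (g := fun y => φ y + m * (Λ' - Λ)) (fun y => by simp only [hφp y])
    (fun _ _ => (hφc.add continuous_const).intervalIntegrable _ _)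
    (fun x y hxy => by
      linarith [(abs_lt.1 (hηφ (a := x) (b := y) (hxy.trans_lt hqη))).2]) x
  rw [intervalIntegral.integral_add (hφc.intervalIntegrable _ _) (by simp),
    intervalIntegral.integral_const, sub_zero, one_smul] at hsum
  calc ∏ j ∈ Finset.range q, F m ((𝐞 b : ℂ) ^ (j * m) • (𝐞 x : ℂ))
    _ = Real.exp (∑ j ∈ Finset.range q, φ (x + j * (m * b))) := by
      rw [Real.exp_sum]
      refine Finset.prod_congr rfl fun j _ => ?_
      rw [hφ, Real.exp_log (hF.pos _ _), fourierChar_pow_smul, Nat.cast_mul, mul_assoc]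
    _ ≤ Real.exp ((q * m : ℕ) * Λ') := by
      refine Real.exp_le_exp.2 (hsum.trans ?_)
      push_cast
      rw [mul_assoc]
      exact mul_le_mul_of_nonneg_left (by linarith) hq'.le

lemma exists_forall_ge_le_exp {S : Set ℂ} (hS : IsCompact S)
    (hrot : ∀ (j : ℕ), ∀ z ∈ S, (𝐞 b : ℂ) ^ j • z ∈ S) {n₁ : ℕ} (hn₁ : 0 < n₁) {Λ Λ' : ℝ}
    (hle : ∀ z ∈ S, F n₁ z ≤ Real.exp (n₁ * Λ)) (hΛ : Λ < Λ') :
    ∃ n₀ : ℕ, ∀ n ≥ n₀, ∀ z ∈ S, F n z ≤ Real.exp (n * Λ') := by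
  obtain ⟨K, hK⟩ := ((finite_lt_nat n₁).bddAbove_biUnion (S := fun s => F s '' S)).2
    fun s _ => hS.bddAbove_image (hF.continuous s).continuousOn
  have hrem {s : ℕ} (hs : s < n₁) {z : ℂ} (hz : z ∈ S) : F s z ≤ Real.exp K :=
    (hK (mem_biUnion hs (mem_image_of_mem _ hz))).trans (by linarith [Real.add_one_le_exp K])
  have hblock (k : ℕ) {z : ℂ} (hz : z ∈ S) : F (k * n₁) z ≤ Real.exp (k * (n₁ * Λ)) := by
    rw [Real.exp_nat_mul]
    simpa using (hF.mul_le_prod k n₁ z).trans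
      (Finset.prod_le_prod (fun j _ => hF.nonneg _ _) fun j _ => hle _ (hrot _ z hz))
  obtain ⟨n₀, hn₀⟩ := exists_nat_gt ((K + n₁ * |Λ|) / (Λ' - Λ))
  rw [div_lt_iff₀ (sub_pos.2 hΛ)] at hn₀
  refine ⟨n₀, fun n hn z hz => ?_⟩
  set k := n / n₁
  set s := n % n₁
  have hs : s < n₁ := Nat.mod_lt n hn₁
  have hn_eq : k * n₁ + s = n := Nat.div_add_mod' n n₁
  calc F n z = F (k * n₁ + s) z := by rw [hn_eq]
    _ ≤ F (k * n₁) ((𝐞 b : ℂ) ^ s • z) * F s z := hF.add_le _ _ _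
    _ ≤ Real.exp (k * (n₁ * Λ)) * Real.exp K :=
      mul_le_mul (hblock k (hrot s z hz)) (hrem hs hz) (hF.nonneg _ _) (Real.exp_pos _).le
    _ ≤ Real.exp (n * Λ') := by
      rw [← Real.exp_add, Real.exp_le_exp]
      have hcast : (n : ℝ) = k * n₁ + s := mod_cast hn_eq.symm
      have hsΛ : -(s * Λ) ≤ n₁ * |Λ| := by
        rw [← mul_neg]
        exact (mul_le_mul_of_nonneg_left (neg_le_abs Λ) s.cast_nonneg).trans
          (mul_le_mul_of_nonneg_right (mod_cast hs.le) (abs_nonneg Λ))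
      have hnn : (n₀ : ℝ) * (Λ' - Λ) ≤ n * (Λ' - Λ) :=
        mul_le_mul_of_nonneg_right (mod_cast hn) (sub_nonneg.2 hΛ.le)
      linarith [congrArg (· * Λ) hcast]

theorem exists_forall_annulus_le (hb : Irrational b) {m : ℕ} (hm : 0 < m) {Λ Λ' : ℝ}
    (hint : ∫ x in (0 : ℝ)..1, Real.log (F m (𝐞 x)) ≤ m * Λ) (hΛ : Λ < Λ') :
    ∃ τ > 0, ∃ n₀ : ℕ, ∀ n ≥ n₀, ∀ z : ℂ, 1 ≤ ‖z‖ → ‖z‖ ≤ Real.exp τ →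
      F n z ≤ Real.exp (n * Λ') := by
  obtain ⟨Λ₁, hΛ₁, hΛ₁'⟩ := exists_between hΛ
  obtain ⟨Λ₂, hΛ₂, hΛ₂'⟩ := exists_between hΛ₁'
  obtain ⟨n₁, hn₁, hcircle⟩ := hF.exists_forall_circle_le hb hm hint hΛ₁
  have hn₁' : (0 : ℝ) < n₁ := mod_cast hn₁
  obtain ⟨τ, hτ, hannulus⟩ := exists_forall_annulus_lt (hF.continuous n₁)
    (c := Real.exp (n₁ * Λ₂)) fun z hz => by
      obtain ⟨x, rfl⟩ := exists_fourierChar_eq hz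
      exact (hcircle x).trans_lt (Real.exp_lt_exp.2 (mul_lt_mul_of_pos_left hΛ₂ hn₁'))
  obtain ⟨n₀, hn₀⟩ := hF.exists_forall_ge_le_exp
    (S := {z | 1 ≤ ‖z‖} ∩ Metric.closedBall 0 (Real.exp τ))
    ((isCompact_closedBall _ _).inter_left (isClosed_le continuous_const continuous_norm))
    (fun j z hz => by simpa [norm_smul, norm_fourierChar] using hz) hn₁
    (fun z hz => (hannulus z hz.1 (by simpa using hz.2)).le) hΛ₂'
  exact ⟨τ, hτ, n₀, fun n hn z hz hz' => hn₀ n hn z ⟨hz, by simpa using hz'⟩⟩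

end IsSubmulCocycle

variable {α : ℝ} (hα : α ∈ Ioo (-1 : ℝ) 1)
include hα

lemma isSubmulCocycle_opNorm2_clearedProd (lam E b : ℝ) :
    IsSubmulCocycle b fun n z => opNorm2 (clearedProd α lam E (𝐞 b) n z) where
  nonneg _ _ := norm_nonneg _
  continuous _ := continuous_opNorm2.comp (continuous_clearedProd_apply _ _ _ _ _)
  apply_zero_le_one z := by simp [opNorm2]
  pos n x := opNorm2_pos (clearedProd_ne_zero hα _ _ (norm_fourierChar b) (norm_fourierChar x) n)
  add_le m n z := by
    rw [clearedProd_add]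
    exact opNorm2_mul_le _ _

lemma isSubmulCocycle_norm_denomProd (b : ℝ) :
    IsSubmulCocycle b fun n z => ‖denomProd α (𝐞 b) n z‖ where
  nonneg _ _ := norm_nonneg _
  continuous n := ((continuous_denomProd α n).comp (f := fun z : ℂ => ((𝐞 b : ℂ), z))
    (by fun_prop)).norm
  apply_zero_le_one z := by simp
  pos n x := norm_pos_iff.2 (denomProd_ne_zero hα (norm_fourierChar b) (norm_fourierChar x) n)
  add_le m n z := by rw [denomProd_add, norm_mul]

lemma exists_norm_clearedProd_le_and_norm_denomProd_le (lam E : ℝ) {b : ℝ} (hb : Irrational b)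
    {δ : ℝ} (hδ : 0 < δ) :
    ∃ τ > 0, ∃ n₀ : ℕ, ∀ n ≥ n₀, ∀ z : ℂ, 1 ≤ ‖z‖ → ‖z‖ ≤ Real.exp τ →
      ‖clearedProd α lam E (𝐞 b) n z‖ ≤
        Real.exp (n * (lyap (potV α lam) b E + Real.log (denomGeomMean α) + δ)) ∧
      ‖denomProd α (𝐞 b) n z‖ ≤ Real.exp (n * (Real.log (denomGeomMean α) + δ)) := by
  obtain ⟨m, hm, hint⟩ := exists_integralLogNorm_le hα lam E b (half_pos hδ)
  obtain ⟨τ, hτ, n₀, hprod⟩ := (isSubmulCocycle_opNorm2_clearedProd hα lam E b)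
    |>.exists_forall_annulus_le hb hm hint (add_lt_add_right (half_lt_self hδ) _)
  obtain ⟨τ', hτ', n₀', hdenom⟩ := (isSubmulCocycle_norm_denomProd hα b)
    |>.exists_forall_annulus_le hb one_pos (integral_log_norm_denomProd hα b 1).le
      (lt_add_of_pos_right _ hδ)
  refine ⟨min τ τ', lt_min hτ hτ', max n₀ n₀', fun n hn z hz hzτ => ⟨?_, ?_⟩⟩
  · exact (norm_le_opNorm2 _).trans (hprod n (le_of_max_le_left hn) z hz
      (hzτ.trans (Real.exp_le_exp.2 (min_le_left _ _))))
  · exact hdenom n (le_of_max_le_right hn) z hz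
      (hzτ.trans (Real.exp_le_exp.2 (min_le_right _ _)))

end UniformUpperBound

/-! ### A scalar polynomial capturing the growth of the cocycle -/

section Selection

variable {X Y : Type*} [MeasurableSpace X] [MeasurableSpace Y] {μ : Measure X} {ν : Measure Y}
  [IsProbabilityMeasure μ] [IsProbabilityMeasure ν] {Φ : X × Y → ℝ} {g : X → ℝ} {c : ℝ}

lemma integrable_prod_of_le_integral (hΦ : Measurable Φ) (hc : ∀ p, Φ p ≤ c)
    (hi : ∀ x, Integrable (fun y => Φ (x, y)) ν) (hg : Integrable g μ)
    (hle : ∀ x, g x ≤ ∫ y, Φ (x, y) ∂ν) : Integrable Φ (μ.prod ν) := by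
  have hmeas : Measurable fun p => c - Φ p := measurable_const.sub hΦ
  have hint : Integrable (fun p => c - Φ p) (μ.prod ν) := by
    refine (integrable_prod_iff hmeas.aestronglyMeasurable).2
      ⟨ae_of_all _ fun x => (integrable_const c).sub (hi x), ?_⟩
    refine ((integrable_const c).sub hg).mono'
      hmeas.aestronglyMeasurable.norm.integral_prod_right' (ae_of_all _ fun x => ?_)
    have hnorm (y : Y) : ‖c - Φ (x, y)‖ = c - Φ (x, y) :=
      Real.norm_of_nonneg (sub_nonneg.2 (hc _))
    rw [Real.norm_of_nonneg (integral_nonneg fun _ => norm_nonneg _)]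
    simp only [hnorm, integral_sub (integrable_const c) (hi x), integral_const, probReal_univ,
      one_smul, Pi.sub_apply]
    exact sub_le_sub_left (hle x) c
  exact ((integrable_const c).sub hint).congr (ae_of_all _ fun p => sub_sub_cancel c (Φ p))

lemma exists_integral_le_integral_of_forall_le (hΦ : Measurable Φ) (hc : ∀ p, Φ p ≤ c)
    (hi : ∀ x, Integrable (fun y => Φ (x, y)) ν) (hg : Integrable g μ)
    (hle : ∀ x, g x ≤ ∫ y, Φ (x, y) ∂ν) {N : Set Y} (hN : ν N = 0) :
    ∃ y ∉ N, ∫ x, g x ∂μ ≤ ∫ x, Φ (x, y) ∂μ := by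
  have hint := integrable_prod_of_le_integral hΦ hc hi hg hle
  obtain ⟨y, hy, hley⟩ := exists_notMem_null_integral_le hint.integral_prod_right hN
  refine ⟨y, hy, le_trans ?_ hley⟩
  rw [← integral_prod_symm _ hint, integral_prod _ hint]
  exact integral_mono hg hint.integral_prod_left hle

end Selection

section RandomCombination

variable {d : ℕ}

lemma eval_ofFn (a : Fin d → ℂ) (z : ℂ) : (ofFn d a).eval z = ∑ k, a k * z ^ (k : ℕ) := by
  simp only [ofFn_eq_sum_monomial, eval_finsetSum, eval_monomial]

lemma log_norm_le_logMahlerMeasure_ofFn {a : Fin d → ℂ} (ha : a ≠ 0) :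
    Real.log ‖a‖ - d * Real.log 2 ≤ (ofFn d a).logMahlerMeasure := by
  have hpoly : ofFn d a ≠ 0 := fun h => ha (injective_ofFn d (by rw [h, ofFn_zero]))
  have hdeg : (ofFn d a).natDegree ≤ d :=
    (ofFn_natDegree_lt (Nat.one_le_iff_ne_zero.2 (ne_zero_of_ofFn_ne_zero hpoly)) a).le
  have hM := mahlerMeasure_pos_of_ne_zero hpoly
  have hnorm : ‖a‖ ≤ 2 ^ d * (ofFn d a).mahlerMeasure := by
    refine (pi_norm_le_iff_of_nonneg (by positivity)).2 fun k => ?_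
    have hcoeff := (ofFn d a).norm_coeff_le_choose_mul_mahlerMeasure k
    rw [ofFn_coeff_eq_val_of_lt a k.2] at hcoeff
    refine hcoeff.trans (mul_le_mul_of_nonneg_right ?_ hM.le)
    exact_mod_cast (Nat.choose_le_two_pow _ _).trans (Nat.pow_le_pow_right two_pos hdeg)
  have hlog := Real.log_le_log (norm_pos_iff.2 ha) hnorm
  rw [Real.log_mul (by positivity) hM.ne', Real.log_pow] at hlog
  rw [logMahlerMeasure_eq_log_MahlerMeasure]
  linarith

lemma eval_sum_C_pow_mul (p : Fin d → ℂ[X]) (z ζ : ℂ) :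
    (∑ k : Fin d, C (ζ ^ (k : ℕ)) * p k).eval z = (ofFn d fun k => (p k).eval z).eval ζ := by
  simp only [eval_ofFn, eval_finsetSum, eval_mul, eval_C, mul_comm]

-- Averaging the Mahler measure of `∑ k, ζ ^ k p_k` over `ζ` and exchanging the integrals, each
-- inner integral is the Mahler measure of the polynomial in `ζ` with coefficients `p_k(z)`.
lemma exists_integral_log_norm_le_logMahlerMeasure (p : Fin d → ℂ[X])
    (hp : ∀ x : ℝ, (fun k => (p k).eval (𝐞 x : ℂ)) ≠ 0) :
    ∃ ζ : ℂ, ‖ζ‖ = 1 ∧ ∑ k : Fin d, C (ζ ^ (k : ℕ)) * p k ≠ 0 ∧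
      (∫ x in (0 : ℝ)..1, Real.log ‖fun k => (p k).eval (𝐞 x : ℂ)‖) - d * Real.log 2 ≤
        (∑ k : Fin d, C (ζ ^ (k : ℕ)) * p k).logMahlerMeasure := by
  set a : ℂ → Fin d → ℂ := fun z k => (p k).eval z
  set f : ℂ → ℂ[X] := fun ζ => ∑ k : Fin d, C (ζ ^ (k : ℕ)) * p k
  have hac : Continuous a := continuous_pi fun k => (p k).continuous
  have hfa : ∀ z ζ, (f ζ).eval z = (ofFn d (a z)).eval ζ := eval_sum_C_pow_mul p
  have hcont : Continuous fun q : ℂ × ℂ => ‖(ofFn d (a q.1)).eval q.2‖ := by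
    simp only [eval_ofFn]
    fun_prop
  obtain ⟨c, hc⟩ := ((isCompact_sphere (0 : ℂ) 1).prod
    (isCompact_sphere (0 : ℂ) 1)).bddAbove_image hcont.continuousOn
  set Φ : ℝ × ℝ → ℝ := fun q => Real.log ‖(ofFn d (a (𝐞 q.1))).eval (𝐞 q.2 : ℂ)‖ with hΦ
  have hΦm : Measurable Φ := Real.measurable_log.comp (hcont.comp
    (continuous_coe_fourierChar.prodMap continuous_coe_fourierChar)).measurable
  have hΦc (q : ℝ × ℝ) : Φ q ≤ c := (Real.log_le_self (norm_nonneg _)).trans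
    (hc ⟨(𝐞 q.1, 𝐞 q.2), by simp [norm_fourierChar], rfl⟩)
  have hlog : Continuous fun x : ℝ => Real.log ‖a (𝐞 x)‖ :=
    (hac.comp continuous_coe_fourierChar).norm.log fun x => norm_ne_zero_iff.2 (hp x)
  have hg : Continuous fun x : ℝ => Real.log ‖a (𝐞 x)‖ - d * Real.log 2 :=
    hlog.sub continuous_const
  have hprob : IsProbabilityMeasure (volume.restrict (Ioc (0 : ℝ) 1)) := ⟨by simp⟩
  have hnull : volume.restrict (Ioc (0 : ℝ) 1)
      {y : ℝ | ¬ (ofFn d (a (𝐞 0))).eval (𝐞 y : ℂ) ≠ 0} = 0 :=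
    ae_restrict_of_ae (ae_eval_fourierChar_ne_zero fun h =>
      hp 0 (injective_ofFn d (by rw [← ofFn_zero] at h; exact h)))
  obtain ⟨y, hy, hley⟩ := exists_integral_le_integral_of_forall_le
    (μ := volume.restrict (Ioc 0 1)) hΦm hΦc
    (fun x => (intervalIntegrable_iff_integrableOn_Ioc_of_le zero_le_one).1
      (intervalIntegrable_log_norm_eval (ofFn d (a (𝐞 x)))))
    (hg.integrableOn_Ioc (μ := volume)) (fun x =>
      (log_norm_le_logMahlerMeasure_ofFn (hp x)).trans_eq (by
        rw [logMahlerMeasure_eq_integral, intervalIntegral.integral_of_le zero_le_one])) hnull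
  refine ⟨𝐞 y, norm_fourierChar y, fun h => hy ?_, ?_⟩
  · change ¬ (ofFn d (a (𝐞 0))).eval (𝐞 y : ℂ) ≠ 0
    rw [not_not, ← hfa]
    exact (congrArg (eval _) h).trans eval_zero
  · simp only [hΦ, ← hfa] at hley
    rw [← intervalIntegral.integral_of_le zero_le_one, ← intervalIntegral.integral_of_le
      zero_le_one, ← logMahlerMeasure_eq_integral, intervalIntegral.integral_sub
      (hlog.intervalIntegrable _ _) (by simp)] at hley
    simpa only [intervalIntegral.integral_const, sub_zero, one_smul] using hley

end RandomCombination

section ScalarPolynomial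

variable {α : ℝ} (hα : α ∈ Ioo (-1 : ℝ) 1) (lam E b : ℝ)
include hα

lemma integralLogNorm_le_integral_log_norm (n : ℕ) : integralLogNorm α lam E b n ≤
    (∫ x in (0 : ℝ)..1, Real.log ‖clearedProd α lam E (𝐞 b) n (𝐞 x : ℂ)‖) + Real.log 2 := by
  have hlog := continuous_log_norm_clearedProd hα lam E b n
  calc integralLogNorm α lam E b n
    _ ≤ ∫ x in (0 : ℝ)..1, (Real.log ‖clearedProd α lam E (𝐞 b) n (𝐞 x : ℂ)‖ + Real.log 2) := by
      refine intervalIntegral.integral_mono_on zero_le_one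
        ((continuous_log_opNorm2_clearedProd hα lam E b n).intervalIntegrable _ _)
        ((hlog.add continuous_const).intervalIntegrable _ _) fun x _ => ?_
      have hne := clearedProd_ne_zero hα lam E (norm_fourierChar b) (norm_fourierChar x) n
      rw [← Real.log_mul (norm_ne_zero_iff.2 hne) two_ne_zero, mul_comm]
      exact Real.log_le_log (opNorm2_pos hne) (opNorm2_le_two_mul_norm _)
    _ = _ := by
      rw [intervalIntegral.integral_add (hlog.intervalIntegrable _ _) (by simp)]
      simp

lemma exists_polynomial_norm_eval_le_and_le_logMahlerMeasure {n : ℕ} (hn : 0 < n) :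
    ∃ f : ℂ[X], f ≠ 0 ∧ f.natDegree ≤ 2 * n ∧
      (∀ z, ‖f.eval z‖ ≤ 4 * ‖clearedProd α lam E (𝐞 b) n z‖) ∧
      n * (lyap (potV α lam) b E + Real.log (denomGeomMean α)) - 5 * Real.log 2 ≤
        f.logMahlerMeasure := by
  set p : Fin (2 * 2) → ℂ[X] := fun k => clearedProd α lam E (𝐞 b) n (X : ℂ[X])
    (finProdFinEquiv.symm k).1 (finProdFinEquiv.symm k).2
  have heval (k : Fin (2 * 2)) (z : ℂ) : (p k).eval z = clearedProd α lam E (𝐞 b) n z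
      (finProdFinEquiv.symm k).1 (finProdFinEquiv.symm k).2 := eval_clearedProd_X ..
  have hnorm (z : ℂ) : ‖fun k => (p k).eval z‖ = ‖clearedProd α lam E (𝐞 b) n z‖ := by
    refine le_antisymm ((pi_norm_le_iff_of_nonneg (norm_nonneg _)).2 fun k => ?_)
      ((Matrix.norm_le_iff (norm_nonneg _)).2 fun i j => ?_)
    · exact heval k z ▸ norm_entry_le_entrywise_sup_norm _
    · simpa [heval] using norm_le_pi_norm (fun k => (p k).eval z) (finProdFinEquiv (i, j))
  obtain ⟨ζ, hζ, hf, hle⟩ := exists_integral_log_norm_le_logMahlerMeasure p fun x =>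
    norm_ne_zero_iff.1 (hnorm _ ▸ norm_ne_zero_iff.2
      (clearedProd_ne_zero hα lam E (norm_fourierChar b) (norm_fourierChar x) n))
  refine ⟨_, hf, natDegree_sum_le_of_forall_le _ _ fun k _ => (natDegree_C_mul_le _ _).trans
    (natDegree_clearedProd_X_le ..), fun z => ?_, ?_⟩
  · calc ‖(∑ k : Fin (2 * 2), C (ζ ^ (k : ℕ)) * p k).eval z‖
      _ ≤ ∑ k : Fin (2 * 2), ‖(C (ζ ^ (k : ℕ)) * p k).eval z‖ := by
        rw [eval_finsetSum]
        exact norm_sum_le _ _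
      _ ≤ ∑ _k : Fin (2 * 2), ‖clearedProd α lam E (𝐞 b) n z‖ := by
        refine Finset.sum_le_sum fun k _ => ?_
        rw [eval_mul, eval_C, norm_mul, norm_pow, hζ, one_pow, one_mul, ← hnorm]
        exact norm_le_pi_norm (fun k => (p k).eval z) k
      _ = _ := by simp
  · have hlow := mul_lyap_add_log_le_integralLogNorm hα lam E b hn
    have hcompare := integralLogNorm_le_integral_log_norm hα lam E b n
    simp only [hnorm] at hle
    push_cast at hle
    linarith

end ScalarPolynomial

section RotationBound

variable {α : ℝ} (hα : α ∈ Ioo (-1 : ℝ) 1) (lam E : ℝ)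
include hα

lemma exists_forall_annulus_le_norm_clearedDenom :
    ∃ τ > 0, ∃ c > 0, ∀ z : ℂ, 1 ≤ ‖z‖ → ‖z‖ ≤ Real.exp τ → c ≤ ‖clearedDenom α z‖ := by
  obtain ⟨z₀, hz₀, hmin⟩ := (isCompact_sphere (0 : ℂ) 1).exists_isMinOn
    (NormedSpace.sphere_nonempty.2 zero_le_one) (continuous_clearedDenom α).norm.continuousOn
  have hpos : 0 < ‖clearedDenom α z₀‖ :=
    norm_pos_iff.2 (clearedDenom_ne_zero hα (by simpa using hz₀))
  obtain ⟨τ, hτ, hlt⟩ := exists_forall_annulus_lt (continuous_clearedDenom α).norm.neg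
    (c := -(‖clearedDenom α z₀‖ / 2)) fun z hz => by
      have := hmin (show z ∈ Metric.sphere 0 1 by simpa using hz)
      simp only [mem_ofPred_eq] at this
      simp only [Pi.neg_apply]
      linarith
  exact ⟨τ, hτ, _, half_pos hpos, fun z hz hzτ => (neg_lt_neg_iff.1 (hlt z hz hzτ)).le⟩

lemma exists_norm_clearedProd_smul_le :
    ∃ τ > 0, ∃ K ≥ 1, ∀ w : ℂ, ‖w‖ = 1 → ∀ (n : ℕ) (z : ℂ), 1 ≤ ‖z‖ → ‖z‖ ≤ Real.exp τ →
      ‖clearedProd α lam E w n (w • z)‖ ≤ K * ‖clearedProd α lam E w n z‖ := by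
  obtain ⟨τ, hτ, c, hc, hdenom⟩ := exists_forall_annulus_le_norm_clearedDenom hα
  have hcont : Continuous fun z : ℂ => ‖clearedMat α lam E z‖ :=
    ((continuous_clearedMat α lam).comp (Continuous.prodMk_right E)).norm
  obtain ⟨B, hB⟩ := (isCompact_closedBall (0 : ℂ) (Real.exp τ)).bddAbove_image hcont.continuousOn
  have hmat {z : ℂ} (hz : ‖z‖ ≤ Real.exp τ) : ‖clearedMat α lam E z‖ ≤ |B| :=
    (hB ⟨z, by simpa using hz, rfl⟩).trans (le_abs_self B)
  refine ⟨τ, hτ, 4 * |B| ^ 2 / c ^ 2 + 1, le_add_of_nonneg_left (by positivity),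
    fun w hw n z hz hzτ => ?_⟩
  set P := clearedProd α lam E w n z
  have hrot : ‖w ^ n • z‖ ≤ Real.exp τ := by simpa [hw] using hzτ
  have hconj : clearedDenom α z ^ 2 • clearedProd α lam E w n (w • z) =
      clearedMat α lam E (w ^ n • z) * (P * (clearedMat α lam E z).adjugate) := by
    rw [← mul_assoc, ← clearedProd_smul_mul, mul_assoc, mul_adjugate, det_clearedMat,
      mul_smul_comm, mul_one]
  have hbound : c ^ 2 * ‖clearedProd α lam E w n (w • z)‖ ≤ 4 * |B| ^ 2 * ‖P‖ :=
    calc c ^ 2 * ‖clearedProd α lam E w n (w • z)‖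
      _ ≤ ‖clearedDenom α z‖ ^ 2 * ‖clearedProd α lam E w n (w • z)‖ := by
        gcongr
        exact hdenom z hz hzτ
      _ = ‖clearedMat α lam E (w ^ n • z) * (P * (clearedMat α lam E z).adjugate)‖ := by
        rw [← hconj, norm_smul, norm_pow]
      _ ≤ 2 * (|B| * (2 * (‖P‖ * |B|))) := by
        refine (norm_mul_le_two_mul _ _).trans ?_
        gcongr
        · exact hmat hrot
        · refine (norm_mul_le_two_mul _ _).trans ?_
          gcongr
          exact (norm_adjugate_le _).trans (hmat hzτ)
      _ = 4 * |B| ^ 2 * ‖P‖ := by ring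
  calc ‖clearedProd α lam E w n (w • z)‖
    _ ≤ 4 * |B| ^ 2 * ‖P‖ / c ^ 2 := by rwa [le_div_iff₀' (by positivity)]
    _ = 4 * |B| ^ 2 / c ^ 2 * ‖P‖ := by ring
    _ ≤ (4 * |B| ^ 2 / c ^ 2 + 1) * ‖P‖ := by gcongr; linarith

end RotationBound

/-! ### Equidistribution of `log ‖f‖` on circles away from the zeros -/

section Lipschitz

lemma norm_fourierChar_sub_le (x y : ℝ) : ‖(𝐞 x : ℂ) - 𝐞 y‖ ≤ 2 * π * |x - y| := by
  have hfactor : (𝐞 x : ℂ) - 𝐞 y = 𝐞 y * (𝐞 (x - y) - 1) := by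
    rw [mul_sub_one, ← Circle.coe_mul, ← AddChar.map_add_eq_mul, add_sub_cancel]
  rw [hfactor, norm_mul, norm_fourierChar, one_mul, Real.fourierChar_apply, mul_comm _ Complex.I]
  refine Real.norm_exp_I_mul_ofReal_sub_one_le.trans_eq ?_
  rw [Real.norm_eq_abs, abs_mul, abs_of_pos Real.two_pi_pos]

lemma one_sub_exp_neg_abs_sub_le_abs_exp_sub_exp {s t : ℝ} (ht : 0 ≤ t) :
    1 - Real.exp (-|t - s|) ≤ |Real.exp t - Real.exp s| := by
  wlog hle : s ≤ t generalizing s t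
  · rw [abs_sub_comm t, abs_sub_comm (Real.exp t)]
    exact this (ht.trans (not_le.1 hle).le) (not_le.1 hle).le
  rw [abs_of_nonneg (sub_nonneg.2 hle), abs_of_nonneg (sub_nonneg.2 (Real.exp_le_exp.2 hle))]
  calc 1 - Real.exp (-(t - s))
    _ ≤ Real.exp t * (1 - Real.exp (-(t - s))) :=
      le_mul_of_one_le_left (sub_nonneg.2 (Real.exp_le_one_iff.2 (by linarith)))
        (Real.one_le_exp ht)
    _ = Real.exp t - Real.exp s := by
      rw [mul_one_sub, ← Real.exp_add]
      ring_nf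

lemma one_div_norm_sub_le {t : ℝ} (ht : 0 ≤ t) {z w : ℂ} (hz : ‖z‖ = Real.exp t)
    (hw : t ≠ Real.log ‖w‖) : 1 / ‖z - w‖ ≤ 1 + 1 / |t - Real.log ‖w‖| := by
  set d := |t - Real.log ‖w‖| with hd
  have hdpos : 0 < d := abs_pos.2 (sub_ne_zero.2 hw)
  have hexp : Real.exp (-d) ≤ 1 / (1 + d) := by
    rw [Real.exp_neg, ← one_div]
    exact one_div_le_one_div_of_le (by positivity) (by linarith [Real.add_one_le_exp d])
  have hsep : 1 - Real.exp (-d) ≤ ‖z - w‖ := by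
    refine le_trans ?_ (abs_norm_sub_norm_le z w)
    rw [hz]
    rcases eq_or_ne w 0 with rfl | hw0
    · rw [norm_zero, sub_zero, Real.abs_exp]
      linarith [Real.one_le_exp ht, Real.exp_pos (-d)]
    · simpa only [Real.exp_log (norm_pos_iff.2 hw0)] using
        one_sub_exp_neg_abs_sub_le_abs_exp_sub_exp (s := Real.log ‖w‖) ht
  have hlow : d / (1 + d) ≤ ‖z - w‖ := by
    have : d / (1 + d) = 1 - 1 / (1 + d) := by field_simp; ring
    linarith
  calc 1 / ‖z - w‖ ≤ 1 / (d / (1 + d)) := one_div_le_one_div_of_le (by positivity) hlow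
    _ = 1 + 1 / d := by field_simp; ring

lemma norm_eval_eq_prod_roots (f : ℂ[X]) (z : ℂ) :
    ‖f.eval z‖ = ‖f.leadingCoeff‖ * (f.roots.map fun w => ‖z - w‖).prod := by
  rw [(IsAlgClosed.splits f).eval_eq_prod_roots, norm_mul]
  exact congrArg _ ((map_multiset_prod (normHom : ℂ →*₀ ℝ) _).trans
    (by rw [Multiset.map_map]; rfl))

lemma norm_eval_le_norm_eval_mul_exp {f : ℂ[X]} {z z' : ℂ} (hz : ∀ w ∈ f.roots, z ≠ w) :
    ‖f.eval z'‖ ≤ ‖f.eval z‖ * Real.exp (‖z' - z‖ * (f.roots.map fun w => 1 / ‖z - w‖).sum) := by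
  rw [norm_eval_eq_prod_roots, norm_eval_eq_prod_roots, mul_assoc, ← Multiset.sum_map_mul_left,
    Real.exp_multiset_sum, Multiset.map_map, ← Multiset.prod_map_mul]
  refine mul_le_mul_of_nonneg_left ?_ (norm_nonneg _)
  refine Multiset.prod_map_le_prod_map₀ _ _ (fun w _ => norm_nonneg _) fun w hw => ?_
  have hpos : 0 < ‖z - w‖ := norm_pos_iff.2 (sub_ne_zero.2 (hz w hw))
  calc ‖z' - w‖
    _ ≤ ‖z' - z‖ + ‖z - w‖ := norm_sub_le_norm_sub_add_norm_sub z' z w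
    _ = ‖z - w‖ * (‖z' - z‖ * (1 / ‖z - w‖) + 1) := by field_simp
    _ ≤ ‖z - w‖ * Real.exp (‖z' - z‖ * (1 / ‖z - w‖)) := by
      gcongr
      exact Real.add_one_le_exp _

end Lipschitz

lemma logMahlerMeasure_le_comp_C_mul_X {f : ℂ[X]} (hf : f ≠ 0) {r : ℝ} (hr : 1 ≤ r) :
    f.logMahlerMeasure ≤ (f.comp (C (r : ℂ) * X)).logMahlerMeasure := by
  have hr0 : (r : ℂ) ≠ 0 := by exact_mod_cast (zero_lt_one.trans_le hr).ne'
  have hcomp : f.comp (C (r : ℂ) * X) =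
      C f.leadingCoeff * (f.roots.map fun w => C (r : ℂ) * X + C (-w)).prod := by
    conv_lhs => rw [(IsAlgClosed.splits f).eq_prod_roots]
    rw [mul_comp, C_comp, multiset_prod_comp, Multiset.map_map]
    simp only [Function.comp_def, sub_eq_add_neg, add_comp, neg_comp, X_comp, C_comp, C_neg]
  rw [logMahlerMeasure_eq_log_MahlerMeasure, logMahlerMeasure_eq_log_MahlerMeasure]
  refine Real.log_le_log (mahlerMeasure_pos_of_ne_zero hf) ?_
  rw [hcomp, mahlerMeasure_mul, mahlerMeasure_const, prod_mahlerMeasure_eq_mahlerMeasure_prod,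
    mahlerMeasure_eq_leadingCoeff_mul_prod_roots, Multiset.map_map]
  refine mul_le_mul_of_nonneg_left ?_ (norm_nonneg _)
  refine Multiset.prod_map_le_prod_map₀ _ _ (fun w _ => by positivity) fun w _ => ?_
  simp only [Function.comp_apply, mahlerMeasure_C_mul_X_add_C hr0, norm_neg, Complex.norm_real,
    Real.norm_of_nonneg (zero_le_one.trans hr)]
  exact max_le_max_right _ hr

/-- The sum of `1 + 1 / |t - log ‖w‖|` over the zeros `w` of `f`, which bounds the Lipschitz
constant of `log ‖f‖` on the circle `‖z‖ = exp t` for `0 ≤ t`. -/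
noncomputable def rootDistSum (f : ℂ[X]) (t : ℝ) : ℝ :=
  (f.roots.map fun w => 1 + 1 / |t - Real.log ‖w‖|).sum

lemma rootDistSum_nonneg (f : ℂ[X]) (t : ℝ) : 0 ≤ rootDistSum f t :=
  Multiset.sum_nonneg fun x hx => by
    obtain ⟨w, -, rfl⟩ := Multiset.mem_map.1 hx
    positivity

lemma rootDistSum_mul {f g : ℂ[X]} (hfg : f * g ≠ 0) (t : ℝ) :
    rootDistSum (f * g) t = rootDistSum f t + rootDistSum g t := by
  rw [rootDistSum, roots_mul hfg, Multiset.map_add, Multiset.sum_add, rootDistSum, rootDistSum]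

section CircleEquidistribution

variable {f : ℂ[X]} {t : ℝ}

lemma eval_ne_zero_of_norm_eq_exp (hf : f ≠ 0) (hroots : ∀ w ∈ f.roots, t ≠ Real.log ‖w‖) {z : ℂ}
    (hz : ‖z‖ = Real.exp t) : f.eval z ≠ 0 := fun h =>
  hroots z ((mem_roots hf).2 h) (by rw [hz, Real.log_exp])

lemma norm_exp_mul_fourierChar (t x : ℝ) : ‖(Real.exp t : ℂ) * 𝐞 x‖ = Real.exp t := by
  rw [norm_mul, norm_fourierChar, mul_one, Complex.norm_real, Real.norm_eq_abs, Real.abs_exp]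

lemma log_norm_eval_le_add_mul_rootDistSum (hf : f ≠ 0) (ht : 0 ≤ t)
    (hroots : ∀ w ∈ f.roots, t ≠ Real.log ‖w‖) {z z' : ℂ} (hz : ‖z‖ = Real.exp t)
    (hz' : ‖z'‖ = Real.exp t) :
    Real.log ‖f.eval z'‖ ≤ Real.log ‖f.eval z‖ + ‖z' - z‖ * rootDistSum f t := by
  have hne := eval_ne_zero_of_norm_eq_exp hf hroots hz
  have hlog := Real.log_le_log (norm_pos_iff.2 (eval_ne_zero_of_norm_eq_exp hf hroots hz'))
    (norm_eval_le_norm_eval_mul_exp (z' := z') fun w hw h => hroots w hw (by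
      rw [← h, hz, Real.log_exp]))
  rw [Real.log_mul (norm_ne_zero_iff.2 hne) (Real.exp_pos _).ne', Real.log_exp] at hlog
  refine hlog.trans (add_le_add_right (mul_le_mul_of_nonneg_left ?_ (norm_nonneg _)) _)
  exact Multiset.sum_map_le_sum_map _ _ fun w hw => one_div_norm_sub_le ht hz (hroots w hw)

lemma norm_exp_mul_fourierChar_sub_le (ht : t ≤ 1) {x y ε : ℝ} (hxy : |x - y| ≤ ε) :
    ‖(Real.exp t : ℂ) * 𝐞 x - Real.exp t * 𝐞 y‖ ≤ 20 * ε := by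
  have hexp : Real.exp t ≤ 3 := (Real.exp_le_exp.2 ht).trans (by linarith [Real.exp_one_lt_d9])
  have hε : 0 ≤ ε := (abs_nonneg _).trans hxy
  rw [← mul_sub, norm_mul, Complex.norm_real, Real.norm_eq_abs, Real.abs_exp]
  calc Real.exp t * ‖(𝐞 x : ℂ) - 𝐞 y‖
    _ ≤ 3 * (2 * 3.15 * ε) := by
      gcongr
      exact (norm_fourierChar_sub_le x y).trans (by gcongr; exact Real.pi_lt_d2.le)
    _ ≤ 20 * ε := by linarith

lemma logMahlerMeasure_le_integral_exp_mul (hf : f ≠ 0) (ht : 0 ≤ t) : f.logMahlerMeasure ≤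
    ∫ x in (0 : ℝ)..1, Real.log ‖f.eval ((Real.exp t : ℂ) * 𝐞 x)‖ := by
  refine (logMahlerMeasure_le_comp_C_mul_X hf (Real.one_le_exp ht)).trans_eq ?_
  simp only [logMahlerMeasure_eq_integral, eval_comp, eval_mul, eval_C, eval_X]

lemma mul_logMahlerMeasure_le_sum_log_norm_eval (hf : f ≠ 0) (ht0 : 0 ≤ t) (ht1 : t ≤ 1)
    (hroots : ∀ w ∈ f.roots, t ≠ Real.log ‖w‖) {b : ℝ} {p : ℤ} {q : ℕ} (hq : 0 < q)
    (hpq : IsCoprime p (q : ℤ)) (hb : |b - p / q| ≤ 1 / (q : ℝ) ^ 2) (x : ℝ) :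
    q * f.logMahlerMeasure - 40 * rootDistSum f t ≤
      ∑ j ∈ Finset.range q, Real.log ‖f.eval ((Real.exp t : ℂ) * 𝐞 (x + j * b))‖ := by
  have hqR : (0 : ℝ) < q := by exact_mod_cast hq
  set F : ℝ → ℝ := fun x => Real.log ‖f.eval ((Real.exp t : ℂ) * 𝐞 x)‖ with hF
  have hcont : Continuous F := (f.continuous.comp
    (continuous_const.mul continuous_coe_fourierChar)).norm.log fun x =>
      norm_ne_zero_iff.2 (eval_ne_zero_of_norm_eq_exp hf hroots (norm_exp_mul_fourierChar t x))
  have hper : Function.Periodic F 1 :=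
    periodic_comp_fourierChar fun z => Real.log ‖f.eval (Real.exp t * z)‖
  have hlip (x y : ℝ) (hxy : |x - y| ≤ 2 / q) : -F x ≤ -F y + 40 / q * rootDistSum f t := by
    have hdist := norm_exp_mul_fourierChar_sub_le ht1 (abs_sub_comm x y ▸ hxy)
    have hlog := log_norm_eval_le_add_mul_rootDistSum hf ht0 hroots
      (norm_exp_mul_fourierChar t x) (norm_exp_mul_fourierChar t y)
    have hmul := mul_le_mul_of_nonneg_right hdist (rootDistSum_nonneg f t)
    rw [← mul_div_assoc, show (20 : ℝ) * 2 = 40 by norm_num] at hmul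
    simp only [hF]
    linarith
  have hsum := sum_apply_add_mul_le_mul_integral hq hpq hb (φ := fun x => -F x)
    (g := fun y => -F y + 40 / q * rootDistSum f t) (fun x => congrArg Neg.neg (hper x))
    (fun x => congrArg (-· + _) (hper x))
    (fun a c => (hcont.neg.add continuous_const).intervalIntegrable a c) hlip x
  rw [intervalIntegral.integral_add (f := fun y => -F y)
    (hcont.neg.intervalIntegrable _ _) (by simp), intervalIntegral.integral_neg,
    Finset.sum_neg_distrib, intervalIntegral.integral_const, sub_zero, one_smul, mul_add,
    ← mul_assoc, mul_div_cancel₀ _ hqR.ne'] at hsum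
  have hmean := mul_le_mul_of_nonneg_left (logMahlerMeasure_le_integral_exp_mul hf ht0) hqR.le
  linarith

end CircleEquidistribution

section RadiusSelection

open scoped ENNReal

lemma multiset_sum_rpow_le_rpow_sum (s : Multiset ℝ≥0∞) {p : ℝ} (hp : 1 ≤ p) :
    (s.map (· ^ p)).sum ≤ s.sum ^ p := by
  induction s using Multiset.induction_on with
  | empty => simp
  | cons a s ih =>
    rw [Multiset.map_cons, Multiset.sum_cons, Multiset.sum_cons]
    exact (add_le_add_right ih _).trans (ENNReal.add_rpow_le_rpow_add _ _ hp)

lemma lintegral_ball_enorm_rpow_neg_lt_top {r : ℝ} (hr : r < 1) :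
    ∫⁻ u in Metric.ball (0 : ℝ) 1, ‖u‖ₑ ^ (-r) < ∞ := by
  have hint : IntegrableOn (fun u : ℝ => ‖u‖ ^ (-r)) (Metric.ball 0 1) :=
    integrableOn_ball_of_norm_le_rpow (by simp) (C := 1) (α := r) (by simpa using hr)
      (ae_of_all _ fun u => by rw [one_mul, Real.norm_of_nonneg (by positivity)])
      (Measurable.aestronglyMeasurable (by fun_prop))
  refine lt_of_le_of_lt (lintegral_mono_ae ?_) hint.2
  filter_upwards [ae_restrict_of_ae (Measure.ae_ne volume (0 : ℝ))] with u hu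
  rw [← ofReal_norm, ENNReal.ofReal_rpow_of_pos (norm_pos_iff.2 hu), ← ofReal_norm]
  exact ENNReal.ofReal_le_ofReal (Real.le_norm_self _)

lemma exists_forall_setLIntegral_enorm_sub_rpow_neg_le {r τ : ℝ} (hr0 : 0 < r) (hr1 : r < 1) :
    ∃ M < ∞, ∀ a : ℝ, ∫⁻ t in Ioo 0 τ, ‖t - a‖ₑ ^ (-r) ≤ M := by
  set B := Metric.ball (0 : ℝ) 1
  set g : ℝ → ℝ≥0∞ := fun u => ‖u‖ₑ ^ (-r)
  refine ⟨ENNReal.ofReal τ + ∫⁻ u in B, g u, by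
    simpa using lintegral_ball_enorm_rpow_neg_lt_top hr1, fun a => ?_⟩
  have hle (u : ℝ) : g u ≤ 1 + B.indicator g u := by
    by_cases hu : u ∈ B
    · rw [indicator_of_mem hu]
      exact le_add_self
    · rw [indicator_of_notMem hu, add_zero]
      refine ENNReal.rpow_le_one_of_one_le_of_neg ?_ (neg_lt_zero.2 hr0)
      rw [← ofReal_norm, ENNReal.one_le_ofReal]
      simpa [B] using hu
  calc ∫⁻ t in Ioo 0 τ, g (t - a)
    _ ≤ ∫⁻ t in Ioo 0 τ, (1 + B.indicator g (t - a)) := lintegral_mono fun t => hle _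
    _ = ENNReal.ofReal τ + ∫⁻ t in Ioo 0 τ, B.indicator g (t - a) := by
      rw [lintegral_add_left measurable_const]
      simp
    _ ≤ ENNReal.ofReal τ + ∫⁻ t, B.indicator g (t - a) := by
      gcongr
      exact Measure.restrict_le_self
    _ = ENNReal.ofReal τ + ∫⁻ u in B, g u := by
      rw [lintegral_sub_right_eq_self (B.indicator g) a, lintegral_indicator measurableSet_ball]

lemma lintegral_multiset_sum_map_le {X ι : Type*} [MeasurableSpace X] {μ : Measure X}
    {f : ι → X → ℝ≥0∞} (hf : ∀ i, Measurable (f i)) {M : ℝ≥0∞} (hM : ∀ i, ∫⁻ x, f i x ∂μ ≤ M)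
    (s : Multiset ι) : ∫⁻ x, (s.map fun i => f i x).sum ∂μ ≤ s.card * M := by
  induction s using Multiset.induction_on with
  | empty => simp
  | cons i s ih =>
    simp only [Multiset.map_cons, Multiset.sum_cons, Multiset.card_cons]
    rw [lintegral_add_left (hf i), Nat.cast_succ, add_one_mul, add_comm]
    exact add_le_add ih (hM i)

lemma exists_multiset_sum_enorm_sub_rpow_neg_le {r τ : ℝ} (hr0 : 0 < r) (hr1 : r < 1)
    (hτ : 0 < τ) : ∃ K : ℝ, 0 ≤ K ∧ ∀ s : Multiset ℝ, ∃ t ∈ Ioo 0 τ,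
      (s.map fun a => ‖t - a‖ₑ ^ (-r)).sum ≤ ENNReal.ofReal (K * s.card) := by
  obtain ⟨M, hM, hMle⟩ := exists_forall_setLIntegral_enorm_sub_rpow_neg_le (τ := τ) hr0 hr1
  have hτ0 : ENNReal.ofReal τ ≠ 0 := by simpa using hτ
  refine ⟨(M / ENNReal.ofReal τ).toReal, ENNReal.toReal_nonneg, fun s => ?_⟩
  have hmeas (a : ℝ) : Measurable fun t : ℝ => ‖t - a‖ₑ ^ (-r) := by fun_prop
  have hvol : volume (Ioo 0 τ) = ENNReal.ofReal τ := by rw [Real.volume_Ioo, sub_zero]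
  have hsum : Measurable fun t => (s.map fun a => ‖t - a‖ₑ ^ (-r)).sum := by
    simpa only [Multiset.map_map, Function.comp_def] using
      (s.map fun a t => ‖t - a‖ₑ ^ (-r)).measurable_fun_sum fun f hf => by
        obtain ⟨a, -, rfl⟩ := Multiset.mem_map.1 hf
        exact hmeas a
  obtain ⟨t, ht, hle⟩ := exists_le_setLAverage (μ := volume) (hvol ▸ hτ0) (by simp [hvol])
    hsum.aemeasurable
  refine ⟨t, ht, hle.trans ?_⟩
  rw [setLAverage_eq, hvol, ENNReal.ofReal_mul ENNReal.toReal_nonneg,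
    ENNReal.ofReal_toReal (ENNReal.div_ne_top hM.ne hτ0), ENNReal.ofReal_natCast]
  calc _ ≤ s.card * M / ENNReal.ofReal τ := by
        gcongr
        exact lintegral_multiset_sum_map_le hmeas hMle s
    _ = _ := by rw [mul_div_assoc, mul_comm]

-- The singularity `1 / |t - a|` is not integrable, but `|t - a| ^ (-3/4)` is, at the price of the
-- exponent `4/3 < 2` on the number of points.
lemma exists_multiset_sum_one_div_abs_sub_le {τ : ℝ} (hτ : 0 < τ) :
    ∃ K : ℝ, 0 ≤ K ∧ ∀ s : Multiset ℝ, ∃ t ∈ Ioo 0 τ, (∀ a ∈ s, t ≠ a) ∧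
      (s.map fun a => 1 / |t - a|).sum ≤ (K * s.card) ^ (4 / 3 : ℝ) := by
  obtain ⟨K, hK, hsel⟩ :=
    exists_multiset_sum_enorm_sub_rpow_neg_le (r := 3 / 4) (by norm_num) (by norm_num) hτ
  refine ⟨K, hK, fun s => ?_⟩
  obtain ⟨t, ht, hle⟩ := hsel s
  have hne (a : ℝ) (ha : a ∈ s) : t ≠ a := by
    rintro rfl
    have hterm := (Multiset.single_le_sum (fun _ _ => zero_le) _
      (Multiset.mem_map_of_mem (fun a => ‖t - a‖ₑ ^ (-(3 / 4) : ℝ)) ha)).trans hle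
    norm_num at hterm
  refine ⟨t, ht, hne, (ENNReal.ofReal_le_ofReal_iff (by positivity)).1 ?_⟩
  calc ENNReal.ofReal (s.map fun a => 1 / |t - a|).sum
    _ ≤ (s.map fun a => ENNReal.ofReal (1 / |t - a|)).sum := by
      simpa only [Multiset.map_map, Function.comp_def] using
        Multiset.le_sum_of_subadditive ENNReal.ofReal ENNReal.ofReal_zero.le
          (fun _ _ => ENNReal.ofReal_add_le) (s.map fun a => 1 / |t - a|)
    _ = (s.map fun a => (‖t - a‖ₑ ^ (-(3 / 4) : ℝ)) ^ (4 / 3 : ℝ)).sum := by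
      refine congrArg _ (Multiset.map_congr rfl fun a ha => ?_)
      rw [← ENNReal.rpow_mul, one_div, ← Real.norm_eq_abs, ENNReal.ofReal_inv_of_pos
        (norm_pos_iff.2 (sub_ne_zero.2 (hne a ha))), ofReal_norm, ← ENNReal.rpow_neg_one]
      norm_num
    _ ≤ (s.map fun a => ‖t - a‖ₑ ^ (-(3 / 4) : ℝ)).sum ^ (4 / 3 : ℝ) := by
      simpa only [Multiset.map_map, Function.comp_def] using
        multiset_sum_rpow_le_rpow_sum (s.map fun a => ‖t - a‖ₑ ^ (-(3 / 4) : ℝ))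
          (show (1 : ℝ) ≤ 4 / 3 by norm_num)
    _ ≤ ENNReal.ofReal ((K * s.card) ^ (4 / 3 : ℝ)) := by
      rw [← ENNReal.ofReal_rpow_of_nonneg (by positivity) (by norm_num)]
      gcongr

lemma exists_forall_rootDistSum_le {τ : ℝ} (hτ : 0 < τ) : ∃ K : ℝ, 0 ≤ K ∧ ∀ f : ℂ[X],
    ∃ t ∈ Ioo 0 τ, (∀ w ∈ f.roots, t ≠ Real.log ‖w‖) ∧
      rootDistSum f t ≤ K * (f.natDegree : ℝ) ^ (4 / 3 : ℝ) := by
  obtain ⟨K, hK, hsel⟩ := exists_multiset_sum_one_div_abs_sub_le hτ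
  refine ⟨1 + K ^ (4 / 3 : ℝ), by positivity, fun f => ?_⟩
  obtain ⟨t, ht, hne, hle⟩ := hsel (f.roots.map fun w => Real.log ‖w‖)
  refine ⟨t, ht, fun w hw => hne _ (Multiset.mem_map_of_mem _ hw), ?_⟩
  have hcard : (f.roots.card : ℝ) ≤ f.natDegree := by exact_mod_cast f.card_roots'
  have hself : (f.natDegree : ℝ) ≤ (f.natDegree : ℝ) ^ (4 / 3 : ℝ) := by
    rcases f.natDegree.eq_zero_or_pos with h | h
    · simp [h]
    · exact Real.self_le_rpow_of_one_le (by exact_mod_cast h) (by norm_num)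
  rw [Multiset.map_map, Multiset.card_map] at hle
  calc rootDistSum f t
    _ = f.roots.card + (f.roots.map fun w => 1 / |t - Real.log ‖w‖|).sum := by
      rw [rootDistSum, Multiset.sum_map_add]
      simp
    _ ≤ f.natDegree + (K * f.natDegree) ^ (4 / 3 : ℝ) := by
      refine add_le_add hcard (hle.trans ?_)
      gcongr
    _ ≤ (1 + K ^ (4 / 3 : ℝ)) * (f.natDegree : ℝ) ^ (4 / 3 : ℝ) := by
      rw [Real.mul_rpow hK (Nat.cast_nonneg _), one_add_mul]
      gcongr

end RadiusSelection

/-! ### A uniform lower bound for the cocycle on a circle -/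

section CircleLowerBound

lemma logMahlerMeasure_le_log_add {f : ℂ[X]} (hf : f ≠ 0) {t : ℝ} (ht0 : 0 ≤ t) (ht1 : t ≤ 1)
    (hroots : ∀ w ∈ f.roots, t ≠ Real.log ‖w‖) {b : ℝ} {p : ℤ} {q : ℕ} (hq : 0 < q)
    (hpq : IsCoprime p (q : ℤ)) (hb : |b - p / q| ≤ 1 / (q : ℝ) ^ 2) {φ : ℂ → ℝ}
    (hφ : ∀ z, ‖f.eval z‖ ≤ φ z) {K : ℝ} (hK : 1 ≤ K)
    (hrot : ∀ z, ‖z‖ = Real.exp t → φ ((𝐞 b : ℂ) • z) ≤ K * φ z) {z : ℂ}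
    (hz : ‖z‖ = Real.exp t) :
    q * f.logMahlerMeasure ≤ q * Real.log (φ z) + q ^ 2 * Real.log K + 40 * rootDistSum f t := by
  have hexp : (Real.exp t : ℂ) ≠ 0 := by exact_mod_cast (Real.exp_pos t).ne'
  obtain ⟨x, hx⟩ := exists_fourierChar_eq (z := z / Real.exp t) (by
    rw [norm_div, hz, Complex.norm_real, Real.norm_eq_abs, Real.abs_exp,
      div_self (Real.exp_pos t).ne'])
  have horbit (j : ℕ) : (Real.exp t : ℂ) * 𝐞 (x + j * b) = (𝐞 b : ℂ) ^ j • z := by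
    rw [← fourierChar_pow_smul, hx, mul_smul_comm, mul_div_cancel₀ _ hexp]
  have hnorm (j : ℕ) : ‖(𝐞 b : ℂ) ^ j • z‖ = Real.exp t := by
    rw [norm_smul, norm_pow, norm_fourierChar, one_pow, one_mul, hz]
  have hiter (j : ℕ) : φ ((𝐞 b : ℂ) ^ j • z) ≤ K ^ j * φ z := by
    induction j with
    | zero => simp
    | succ j ih =>
      rw [pow_succ', mul_smul, pow_succ', mul_assoc]
      exact (hrot _ (hnorm j)).trans (mul_le_mul_of_nonneg_left ih (zero_le_one.trans hK))
  have hpos (w : ℂ) (hw : ‖w‖ = Real.exp t) : 0 < ‖f.eval w‖ :=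
    norm_pos_iff.2 (eval_ne_zero_of_norm_eq_exp hf hroots hw)
  have hφz : 0 < φ z := (hpos z hz).trans_le (hφ z)
  have hlog (j : ℕ) (hj : j ∈ Finset.range q) :
      Real.log ‖f.eval ((Real.exp t : ℂ) * 𝐞 (x + j * b))‖ ≤ q * Real.log K + Real.log (φ z) := by
    rw [horbit, ← Real.log_pow, ← Real.log_mul (by positivity) hφz.ne']
    refine Real.log_le_log (hpos _ (hnorm j)) (((hφ _).trans (hiter j)).trans ?_)
    gcongr
    exact (Finset.mem_range.1 hj).le
  have hsum := (mul_logMahlerMeasure_le_sum_log_norm_eval hf ht0 ht1 hroots hq hpq hb x).trans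
    (Finset.sum_le_sum hlog)
  rw [Finset.sum_const, Finset.card_range, nsmul_eq_mul] at hsum
  linarith

lemma eventually_mul_rpow_le_sq (A : ℝ) :
    ∀ᶠ q : ℕ in atTop, A * (q : ℝ) ^ (4 / 3 : ℝ) ≤ (q : ℝ) ^ 2 := by
  have hlim := (tendsto_rpow_atTop (show (0 : ℝ) < 2 / 3 by norm_num)).comp
    (tendsto_natCast_atTop_atTop (R := ℝ))
  filter_upwards [hlim.eventually_ge_atTop A, eventually_gt_atTop 0] with q hA hq
  have hsplit : (q : ℝ) ^ 2 = (q : ℝ) ^ (2 / 3 : ℝ) * (q : ℝ) ^ (4 / 3 : ℝ) := by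
    rw [← Real.rpow_add (by exact_mod_cast hq), ← Real.rpow_natCast]
    norm_num
  rw [hsplit]
  exact mul_le_mul_of_nonneg_right hA (by positivity)

lemma exists_approx_forall_exists_rootDistSum_le {b : ℝ} (hb : Irrational b) {τ : ℝ} (hτ : 0 < τ)
    (d Q : ℕ) : ∃ (p : ℤ) (q : ℕ), Q ≤ q ∧ 0 < q ∧ IsCoprime p (q : ℤ) ∧
      |b - p / q| ≤ 1 / (q : ℝ) ^ 2 ∧ ∀ f : ℂ[X], f.natDegree ≤ d * q → ∃ t ∈ Ioo 0 τ,
        (∀ w ∈ f.roots, t ≠ Real.log ‖w‖) ∧ 7 * q + 40 * rootDistSum f t ≤ (q : ℝ) ^ 2 := by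
  obtain ⟨K, hK, hradius⟩ := exists_forall_rootDistSum_le hτ
  obtain ⟨Q', hQ'⟩ := eventually_atTop.1
    (eventually_mul_rpow_le_sq (7 + 40 * (K * (d : ℝ) ^ (4 / 3 : ℝ))))
  obtain ⟨p, q, hQq, hq, hpq, happrox⟩ := exists_coprime_abs_sub_div_le hb (max Q Q')
  refine ⟨p, q, le_of_max_le_left hQq, hq, hpq, happrox, fun f hf => ?_⟩
  obtain ⟨t, ht, hroots, hle⟩ := hradius f
  refine ⟨t, ht, hroots, le_trans ?_ (hQ' q (le_of_max_le_right hQq))⟩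
  have hself : (q : ℝ) ≤ (q : ℝ) ^ (4 / 3 : ℝ) :=
    Real.self_le_rpow_of_one_le (by exact_mod_cast hq) (by norm_num)
  have hdeg : rootDistSum f t ≤ K * ((d : ℝ) ^ (4 / 3 : ℝ) * (q : ℝ) ^ (4 / 3 : ℝ)) := by
    rw [← Real.mul_rpow (Nat.cast_nonneg _) (Nat.cast_nonneg _)]
    refine hle.trans ?_
    gcongr
    exact_mod_cast hf
  linarith

end CircleLowerBound

section CocycleLowerBound

variable {α : ℝ} (hα : α ∈ Ioo (-1 : ℝ) 1) (lam E : ℝ)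

lemma exp_mul_le_norm_clearedProd {b Λ K δ t : ℝ} {N q : ℕ} {f : ℂ[X]} (hf : f ≠ 0)
    (hle : ∀ z, ‖f.eval z‖ ≤ 4 * ‖clearedProd α lam E (𝐞 b) N z‖)
    (hge : N * Λ - 5 * Real.log 2 ≤ f.logMahlerMeasure) (hK : 1 ≤ K)
    (hrot : ∀ z : ℂ, ‖z‖ = Real.exp t → ‖clearedProd α lam E (𝐞 b) N ((𝐞 b : ℂ) • z)‖ ≤
      K * ‖clearedProd α lam E (𝐞 b) N z‖) (ht0 : 0 ≤ t) (ht1 : t ≤ 1)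
    (hroots : ∀ w ∈ f.roots, t ≠ Real.log ‖w‖) {p : ℤ} (hq : 0 < q) (hpq : IsCoprime p (q : ℤ))
    (hb : |b - p / q| ≤ 1 / (q : ℝ) ^ 2) (hδ : q * (Real.log K + 1) ≤ N * δ)
    (hS : 7 * q + 40 * rootDistSum f t ≤ (q : ℝ) ^ 2) {z : ℂ} (hz : ‖z‖ = Real.exp t) :
    Real.exp (N * (Λ - δ)) ≤ ‖clearedProd α lam E (𝐞 b) N z‖ := by
  have hqR : (0 : ℝ) < q := by exact_mod_cast hq
  have hpos : 0 < ‖clearedProd α lam E (𝐞 b) N z‖ := by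
    have := norm_pos_iff.2 (eval_ne_zero_of_norm_eq_exp hf hroots hz)
    linarith [hle z]
  have hmahler := logMahlerMeasure_le_log_add hf ht0 ht1 hroots hq hpq hb hle hK
    (fun w hw => by linarith [hrot w hw]) hz
  have hlog : Real.log (4 * ‖clearedProd α lam E (𝐞 b) N z‖) =
      2 * Real.log 2 + Real.log ‖clearedProd α lam E (𝐞 b) N z‖ := by
    rw [Real.log_mul (by norm_num) hpos.ne', show (4 : ℝ) = 2 ^ 2 by norm_num, Real.log_pow]
    push_cast
    ring
  have hlog2 : q * (7 * Real.log 2) ≤ 7 * q := by nlinarith [Real.log_two_lt_d9]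
  have hscale := mul_le_mul_of_nonneg_left hge hqR.le
  have hscaleδ := mul_le_mul_of_nonneg_left hδ hqR.le
  rw [hlog] at hmahler
  rw [← Real.le_log_iff_exp_le hpos]
  refine le_of_mul_le_mul_left ?_ hqR
  linarith

include hα

-- Having `n` and `2 n` on the same circle is what lets the Plücker inequality propagate the growth
-- to all multiples of `n`, and hence bound the trace of a periodic product from below.
lemma exists_circle_exp_le_norm_clearedProd {b : ℝ} (hb : Irrational b) {δ τ : ℝ} (hδ : 0 < δ)
    (hτ : 0 < τ) (n₀ : ℕ) : ∃ n ≥ n₀, ∃ t ∈ Ioo 0 τ, ∀ z : ℂ, ‖z‖ = Real.exp t →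
      ∀ N ∈ ({n, 2 * n} : Set ℕ),
        Real.exp (N * (lyap (potV α lam) b E + Real.log (denomGeomMean α) - δ)) ≤
          ‖clearedProd α lam E (𝐞 b) N z‖ := by
  obtain ⟨τ', hτ', K, hK, hrot⟩ := exists_norm_clearedProd_smul_le hα lam E
  obtain ⟨m, hm⟩ := exists_nat_gt ((Real.log K + 1) / δ)
  rw [div_lt_iff₀ hδ] at hm
  have hmpos : 0 < m := Nat.pos_of_ne_zero fun h => by
    rw [h, Nat.cast_zero, zero_mul] at hm
    linarith [Real.log_nonneg hK]
  obtain ⟨p, q, hQ, hq, hpq, happrox, hradius⟩ := exists_approx_forall_exists_rootDistSum_le hb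
    (lt_min hτ (lt_min hτ' one_pos)) (6 * m) n₀
  set n := m * q with hn
  have hnpos : 0 < n := Nat.mul_pos hmpos hq
  obtain ⟨f, hf, hfdeg, hfle, hfge⟩ :=
    exists_polynomial_norm_eval_le_and_le_logMahlerMeasure hα lam E b hnpos
  obtain ⟨g, hg, hgdeg, hgle, hgge⟩ :=
    exists_polynomial_norm_eval_le_and_le_logMahlerMeasure hα lam E b (Nat.mul_pos two_pos hnpos)
  obtain ⟨t, ⟨ht0, htmin⟩, hroots, hS⟩ := hradius (f * g) (by
    rw [natDegree_mul hf hg, mul_assoc]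
    omega)
  rw [roots_mul (mul_ne_zero hf hg)] at hroots
  rw [rootDistSum_mul (mul_ne_zero hf hg)] at hS
  simp only [lt_min_iff] at htmin
  have hrot' (N : ℕ) (z : ℂ) (hz : ‖z‖ = Real.exp t) :=
    hrot (𝐞 b) (norm_fourierChar b) N z (hz ▸ Real.one_le_exp ht0.le)
      (hz ▸ Real.exp_le_exp.2 htmin.2.1.le)
  have hδn : q * (Real.log K + 1) ≤ n * δ := by
    rw [hn, Nat.cast_mul, mul_right_comm, mul_comm]
    gcongr
  have hδdouble : q * (Real.log K + 1) ≤ (2 * n : ℕ) * δ := by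
    push_cast
    linarith [mul_nonneg (Nat.cast_nonneg (α := ℝ) n) hδ.le]
  refine ⟨n, hQ.trans (Nat.le_mul_of_pos_left q hmpos), t, ⟨ht0, htmin.1⟩, fun z hz N hN => ?_⟩
  rcases hN with rfl | rfl
  · exact exp_mul_le_norm_clearedProd lam E hf hfle hfge hK (hrot' _) ht0.le htmin.2.2.le
      (fun w hw => hroots w (Multiset.mem_add.2 (.inl hw))) hq hpq happrox hδn
      (by linarith [rootDistSum_nonneg g t]) hz
  · exact exp_mul_le_norm_clearedProd lam E hg hgle hgge hK (hrot' _) ht0.le htmin.2.2.le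
      (fun w hw => hroots w (Multiset.mem_add.2 (.inr hw))) hq hpq happrox hδdouble
      (by linarith [rootDistSum_nonneg f t]) hz

end CocycleLowerBound

/-! ### Large traces of periodic products -/

section SpectralRadius

lemma exists_mem_spectrum_exp_le_norm {A : Type*} [NormedRing A] [NormedAlgebra ℂ A]
    [CompleteSpace A] [Nontrivial A] {a : A} {s : ℝ}
    (h : ∃ᶠ n : ℕ in atTop, Real.exp (n * s) ≤ ‖a ^ n‖) :
    ∃ x ∈ spectrum ℂ a, Real.exp s ≤ ‖x‖ := by
  obtain ⟨x, hx, hxr⟩ := spectrum.exists_nnnorm_eq_spectralRadius a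
  refine ⟨x, hx, ?_⟩
  have hroot : ∃ᶠ n : ℕ in atTop,
      ENNReal.ofReal (Real.exp s) ≤ ENNReal.ofReal (‖a ^ n‖ ^ (1 / n : ℝ)) := by
    refine (h.and_eventually (eventually_gt_atTop 0)).mono fun n ⟨hn, hpos⟩ => ?_
    refine ENNReal.ofReal_le_ofReal ?_
    calc Real.exp s = Real.exp (n * s) ^ (1 / n : ℝ) := by
          rw [← Real.exp_mul]; congr 1; field_simp
      _ ≤ ‖a ^ n‖ ^ (1 / n : ℝ) := by gcongr
  have hle := ge_of_tendsto_of_frequently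
    (spectrum.pow_norm_pow_one_div_tendsto_nhds_spectralRadius a) hroot
  rw [← hxr, ENNReal.ofReal_le_coe] at hle
  exact hle

variable {B : Matrix (Fin 2) (Fin 2) ℂ}

lemma exists_mem_spectrum_exp_le_norm_of_matrix {s : ℝ}
    (h : ∃ᶠ n : ℕ in atTop, Real.exp (n * s) ≤ ‖B ^ n‖) :
    ∃ x ∈ spectrum ℂ B, Real.exp s ≤ ‖x‖ := by
  have hop : ∃ᶠ n : ℕ in atTop, Real.exp (n * s) ≤ ‖toEuclideanCLM (𝕜 := ℂ) B ^ n‖ :=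
    h.mono fun n hn => by
      rw [← map_pow]
      exact hn.trans (norm_le_opNorm2 _)
  simpa only [AlgEquiv.spectrum_eq] using exists_mem_spectrum_exp_le_norm hop

lemma half_le_norm_trace_of_mem_spectrum {x : ℂ} (hx : x ∈ spectrum ℂ B) {ρ : ℝ} (hρ : 0 < ρ)
    (hxρ : ρ ≤ ‖x‖) (hdet : ‖B.det‖ ≤ ρ ^ 2 / 2) : ρ / 2 ≤ ‖B.trace‖ := by
  have hroot : x ^ 2 = B.trace * x - B.det := by
    have hchar := mem_spectrum_iff_isRoot_charpoly.1 hx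
    rw [charpoly_fin_two] at hchar
    simp only [IsRoot.def, eval_add, eval_sub, eval_mul, eval_pow, eval_X, eval_C] at hchar
    linear_combination hchar
  have hnorm : ‖x‖ ^ 2 ≤ ‖B.trace‖ * ‖x‖ + ‖B.det‖ := by
    rw [← norm_pow, hroot, ← norm_mul]
    exact norm_sub_le _ _
  nlinarith

end SpectralRadius

section PeriodicProducts

lemma mul_norm_le_norm_mul_mul {X Y Z : Matrix (Fin 2) (Fin 2) ℂ} {ρ U : ℝ} (hρ : 0 ≤ ρ)
    (hU : 0 < U) (hX : ‖X‖ ≤ U) (hY : ‖Y‖ ≤ U) (hXY : 2 * U * ρ ≤ ‖X * Y‖)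
    (hdet : ‖Y.det‖ ≤ ρ ^ 2) (hYZ : ρ * ‖Z‖ ≤ ‖Y * Z‖) : ρ * ‖Y * Z‖ ≤ ‖X * Y * Z‖ := by
  refine le_of_mul_le_mul_left ?_ hU
  have hfirst : 2 * U * ρ * ‖Y * Z‖ ≤ ‖X * Y * Z‖ * U + U * (ρ * (ρ * ‖Z‖)) :=
    calc 2 * U * ρ * ‖Y * Z‖ ≤ ‖X * Y‖ * ‖Y * Z‖ := by gcongr
      _ ≤ ‖X * Y * Z‖ * ‖Y‖ + ‖X‖ * ‖Z‖ * ‖Y.det‖ := norm_mul_mul_norm_mul_le X Y Z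
      _ ≤ ‖X * Y * Z‖ * U + U * ‖Z‖ * ρ ^ 2 := by gcongr
      _ = ‖X * Y * Z‖ * U + U * (ρ * (ρ * ‖Z‖)) := by ring
  have hsecond : U * (ρ * (ρ * ‖Z‖)) ≤ U * (ρ * ‖Y * Z‖) := by gcongr
  linarith

variable {α lam E : ℝ} {w : ℂ} {n q : ℕ} {r : ℝ}

lemma norm_pow_smul (hw : ‖w‖ = 1) (k : ℕ) (z : ℂ) : ‖w ^ k • z‖ = ‖z‖ := by
  rw [norm_smul, norm_pow, hw, one_pow, one_mul]

lemma pow_le_norm_clearedProd_mul (hw : ‖w‖ = 1) {ρ U : ℝ} (hρ : 0 ≤ ρ) (hU : 0 < U)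
    (hlow : ∀ z : ℂ, ‖z‖ = r → ρ ≤ ‖clearedProd α lam E w n z‖)
    (hup : ∀ z : ℂ, ‖z‖ = r → ‖clearedProd α lam E w n z‖ ≤ U)
    (hlow2 : ∀ z : ℂ, ‖z‖ = r → 2 * U * ρ ≤ ‖clearedProd α lam E w (2 * n) z‖)
    (hdenom : ∀ z : ℂ, ‖z‖ = r → ‖denomProd α w n z‖ ≤ ρ) {z : ℂ} (hz : ‖z‖ = r) (m : ℕ) :
    ρ ^ m ≤ ‖clearedProd α lam E w (m * n) z‖ := by
  have hrot (k : ℕ) : ‖w ^ k • z‖ = r := (norm_pow_smul hw k z).trans hz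
  have hstep (m : ℕ) : ρ * ‖clearedProd α lam E w (m * n) z‖ ≤
      ‖clearedProd α lam E w ((m + 1) * n) z‖ := by
    induction m with
    | zero => simpa using hlow z hz
    | succ m ih =>
      have hXY : clearedProd α lam E w (2 * n) (w ^ (m * n) • z) =
          clearedProd α lam E w n (w ^ ((m + 1) * n) • z) *
            clearedProd α lam E w n (w ^ (m * n) • z) := by
        rw [two_mul, clearedProd_add, smul_smul, ← pow_add, add_one_mul, add_comm (m * n)]
      have hYZ : clearedProd α lam E w ((m + 1) * n) z =
          clearedProd α lam E w n (w ^ (m * n) • z) * clearedProd α lam E w (m * n) z := by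
        rw [add_one_mul, add_comm, clearedProd_add]
      have hXYZ : clearedProd α lam E w ((m + 1 + 1) * n) z =
          clearedProd α lam E w n (w ^ ((m + 1) * n) • z) *
            clearedProd α lam E w ((m + 1) * n) z := by
        rw [add_one_mul (m + 1), add_comm, clearedProd_add]
      rw [hYZ] at ih
      rw [hXYZ, hYZ, ← mul_assoc]
      refine mul_norm_le_norm_mul_mul hρ hU (hup _ (hrot _)) (hup _ (hrot _))
        (hXY ▸ hlow2 _ (hrot _)) ?_ ih
      rw [det_clearedProd, norm_pow]
      exact pow_le_pow_left₀ (norm_nonneg _) (hdenom _ (hrot _)) 2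
  induction m with
  | zero => simp
  | succ m ih =>
    rw [pow_succ']
    exact (mul_le_mul_of_nonneg_left ih hρ).trans (hstep m)

lemma clearedProd_mul_of_pow_eq_one (hwq : w ^ q = 1) (z : ℂ) (k : ℕ) :
    clearedProd α lam E w (q * k) z = clearedProd α lam E w q z ^ k := by
  induction k with
  | zero => simp
  | succ k ih => rw [Nat.mul_succ, clearedProd_add, hwq, one_smul, ih, pow_succ]

lemma denomProd_mul_of_pow_eq_one (hwq : w ^ q = 1) (z : ℂ) (k : ℕ) :
    denomProd α w (q * k) z = denomProd α w q z ^ k := by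
  induction k with
  | zero => simp
  | succ k ih => rw [Nat.mul_succ, denomProd_add, hwq, one_smul, ih, pow_succ]

lemma norm_denomProd_mul_le (hw : ‖w‖ = 1) {D : ℝ}
    (hD : ∀ z : ℂ, ‖z‖ = r → ‖denomProd α w n z‖ ≤ D) {z : ℂ} (hz : ‖z‖ = r) (k : ℕ) :
    ‖denomProd α w (n * k) z‖ ≤ D ^ k := by
  have hD0 : 0 ≤ D := (norm_nonneg _).trans (hD z hz)
  induction k with
  | zero => simp
  | succ k ih =>
    rw [Nat.mul_succ, add_comm, denomProd_add, norm_mul, pow_succ']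
    have hblock := hD _ ((norm_pow_smul hw (n * k) z).trans hz)
    gcongr

lemma norm_denomProd_le_exp_of_pow_eq_one (hw : ‖w‖ = 1) (hwq : w ^ q = 1) (hn : 0 < n) {d : ℝ}
    (hd : ∀ z : ℂ, ‖z‖ = r → ‖denomProd α w n z‖ ≤ Real.exp (n * d)) {z : ℂ} (hz : ‖z‖ = r) :
    ‖denomProd α w q z‖ ≤ Real.exp (q * d) := by
  have hblock := norm_denomProd_mul_le hw hd hz q
  rw [mul_comm n q, denomProd_mul_of_pow_eq_one hwq, norm_pow, ← Real.exp_nat_mul,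
    mul_left_comm, Real.exp_nat_mul] at hblock
  exact (pow_le_pow_iff_left₀ (norm_nonneg _) (Real.exp_pos _).le hn.ne').1 hblock

lemma half_exp_le_norm_trace_clearedProd (hw : ‖w‖ = 1) (hwq : w ^ q = 1) (hn : 0 < n) {s d : ℝ}
    (hgrowth : ∀ z : ℂ, ‖z‖ = r → ∀ m : ℕ,
      Real.exp (n * s) ^ m ≤ ‖clearedProd α lam E w (m * n) z‖)
    (hd : ∀ z : ℂ, ‖z‖ = r → ‖denomProd α w n z‖ ≤ Real.exp (n * d))
    (hgap : Real.log 2 ≤ 2 * (q * (s - d))) {z : ℂ} (hz : ‖z‖ = r) :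
    Real.exp (q * s) / 2 ≤ ‖(clearedProd α lam E w q z).trace‖ := by
  have hfreq : ∃ᶠ k : ℕ in atTop,
      Real.exp (k * (q * s)) ≤ ‖clearedProd α lam E w q z ^ k‖ := by
    refine frequently_atTop.2 fun k => ⟨n * k, Nat.le_mul_of_pos_left k hn, ?_⟩
    have hk := hgrowth z hz (q * k)
    rw [← Real.exp_nat_mul, show q * k * n = q * (n * k) by ring,
      clearedProd_mul_of_pow_eq_one hwq] at hk
    convert hk using 2
    push_cast
    ring
  obtain ⟨x, hx, hxs⟩ := exists_mem_spectrum_exp_le_norm_of_matrix hfreq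
  refine half_le_norm_trace_of_mem_spectrum hx (Real.exp_pos _) hxs ?_
  calc ‖(clearedProd α lam E w q z).det‖ = ‖denomProd α w q z‖ ^ 2 := by
        rw [det_clearedProd, norm_pow]
    _ ≤ Real.exp (q * d) ^ 2 := by
        have hper := norm_denomProd_le_exp_of_pow_eq_one hw hwq hn hd hz
        gcongr
    _ ≤ Real.exp (q * s) ^ 2 / 2 := by
        have htwo : Real.exp (q * d) ^ 2 * Real.exp (Real.log 2) ≤ Real.exp (q * s) ^ 2 := by
          rw [← Real.exp_nat_mul, ← Real.exp_nat_mul, ← Real.exp_add]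
          refine Real.exp_le_exp.2 ?_
          push_cast
          linarith
        rwa [le_div_iff₀ two_pos, ← Real.exp_log (two_pos (α := ℝ))]

end PeriodicProducts

/-! ### The trace of a periodic product as a polynomial of degree two in `z ^ q` -/

section TracePow

lemma norm_le_of_real_quadratic_eq_zero {s p K : ℝ} (hK : 0 < K) (hp : p ≤ K ^ 2)
    (hs : K * |s| ≤ K ^ 2 + p) {x : ℂ} (hx : x ^ 2 - s * x + p = 0) : ‖x‖ ≤ K := by
  have hre : x.re ^ 2 - x.im ^ 2 - s * x.re + p = 0 := by
    simpa [sq] using congrArg Complex.re hx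
  have him : x.im * (2 * x.re - s) = 0 := by
    have him := congrArg Complex.im hx
    simp only [sq, Complex.add_im, Complex.sub_im, Complex.mul_im, Complex.ofReal_re,
      Complex.ofReal_im, zero_mul, add_zero, Complex.zero_im] at him
    linear_combination him
  refine (sq_le_sq₀ (norm_nonneg _) hK.le).1 ?_
  rw [← Complex.normSq_eq_norm_sq, Complex.normSq_apply, ← sq, ← sq]
  rcases mul_eq_zero.1 him with hreal | hconj
  · rw [hreal] at hre ⊢
    have habs : x.re ^ 2 + p ≤ |s| * |x.re| := by
      rw [← abs_mul]
      linarith [le_abs_self (s * x.re)]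
    have hroots : (|x.re| - K) * (K * |x.re| - p) ≤ 0 := by
      nlinarith [sq_abs x.re, mul_le_mul_of_nonneg_left habs hK.le,
        mul_le_mul_of_nonneg_right hs (abs_nonneg x.re)]
    have hle : |x.re| ≤ K := by
      by_contra! hlt
      have hpos : 0 < K * |x.re| - p := by nlinarith
      exact hroots.not_gt (mul_pos (sub_pos.2 hlt) hpos)
    nlinarith [sq_abs x.re, abs_nonneg x.re]
  · rw [← sub_eq_zero.1 hconj] at hre
    linarith

lemma norm_trace_le_card_mul {ι : Type*} [Fintype ι] [DecidableEq ι] {A : Matrix ι ι ℂ} {C : ℝ}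
    (hA : ∀ x ∈ spectrum ℂ A, ‖x‖ ≤ C) : ‖A.trace‖ ≤ Fintype.card ι * C := by
  have hcard : A.charpoly.roots.card = Fintype.card ι := by
    rw [IsAlgClosed.card_roots_eq_natDegree, charpoly_natDegree_eq_dim]
  rw [trace_eq_sum_roots_charpoly, ← hcard, ← nsmul_eq_mul, ← Multiset.card_map norm]
  refine (norm_multiset_sum_le _).trans (Multiset.sum_le_card_nsmul _ _ ?_)
  simp only [Multiset.mem_map, forall_exists_index, and_imp, forall_apply_eq_imp_iff₂]
  exact fun x hx => hA x (mem_spectrum_iff_isRoot_charpoly.2 (isRoot_of_mem_roots hx))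

lemma norm_trace_pow_le_card_mul {ι : Type*} [Fintype ι] [DecidableEq ι] {A : Matrix ι ι ℂ}
    {K : ℝ} (hA : ∀ x ∈ spectrum ℂ A, ‖x‖ ≤ K) {n : ℕ} (hn : 0 < n) :
    ‖(A ^ n).trace‖ ≤ Fintype.card ι * K ^ n := by
  refine norm_trace_le_card_mul fun x hx => ?_
  rw [spectrum.map_pow_of_pos A hn] at hx
  obtain ⟨y, hy, rfl⟩ := hx
  rw [norm_pow]
  exact pow_le_pow_left₀ (norm_nonneg _) (hA y hy) n

lemma norm_trace_clearedMat_zero_pow_le {α lam E K : ℝ} (hK : 0 < K) (hαK : α ^ 2 / 4 ≤ K ^ 2)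
    (hE : K * |α * E + 2 * lam| ≤ 2 * (K ^ 2 + α ^ 2 / 4)) {n : ℕ} (hn : 0 < n) :
    ‖(clearedMat α lam E (0 : ℂ) ^ n).trace‖ ≤ 2 * K ^ n := by
  refine (norm_trace_pow_le_card_mul (K := K) (fun x hx => ?_) hn).trans_eq (by simp)
  have habs : K * |-(α * E + 2 * lam) / 2| ≤ K ^ 2 + α ^ 2 / 4 := by
    rw [abs_div, abs_neg, abs_two]
    linarith
  refine norm_le_of_real_quadratic_eq_zero hK hαK habs ?_
  have hchar := mem_spectrum_iff_isRoot_charpoly.1 hx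
  rw [charpoly_fin_two, det_clearedMat, trace_fin_two] at hchar
  simp only [clearedMat, clearedDenom, IsRoot.def, eval_add, eval_sub, eval_mul, eval_pow, eval_X,
    eval_C, of_apply, cons_val_zero, cons_val_one, smul_eq_mul] at hchar
  push_cast
  linear_combination hchar

end TracePow

section RotationInvariance

lemma trace_eq_of_mul_eq_mul {ι R : Type*} [Fintype ι] [DecidableEq ι] [CommRing R] [IsDomain R]
    {A B M : Matrix ι ι R} (hM : M.det ≠ 0) (h : A * M = M * B) : A.trace = B.trace := by
  refine mul_left_cancel₀ hM ?_
  calc M.det * A.trace = (A * M * M.adjugate).trace := by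
        rw [mul_assoc, mul_adjugate, Matrix.mul_smul, mul_one, trace_smul, smul_eq_mul]
    _ = (M.adjugate * M * B).trace := by rw [h, trace_mul_comm, ← mul_assoc]
    _ = M.det * B.trace := by rw [adjugate_mul, Matrix.smul_mul, one_mul, trace_smul, smul_eq_mul]

lemma clearedDenom_X_ne_zero (α : ℝ) : clearedDenom α (X : ℂ[X]) ≠ 0 := fun h => by
  simpa [clearedDenom, coeff_one] using congrArg (coeff · 1) h

variable {w : ℂ} {q : ℕ}

lemma trace_clearedProd_smul_X (α lam E : ℝ) (hw : w ^ q = 1) :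
    (clearedProd α lam E w q (w • X : ℂ[X])).trace = (clearedProd α lam E w q X).trace := by
  refine trace_eq_of_mul_eq_mul (M := clearedMat α lam E X) ?_ ?_
  · rw [det_clearedMat]
    exact pow_ne_zero 2 (clearedDenom_X_ne_zero α)
  · rw [clearedProd_smul_mul, hw, one_smul]

lemma expand_contract_of_comp_eq {R : Type*} [CommRing R] [IsDomain R] {ζ : R}
    (hζ : IsPrimitiveRoot ζ q) (hq : 0 < q) {f : R[X]} (hf : f.comp (C ζ * X) = f) :
    expand R q (contract q f) = f := by
  ext k
  rw [coeff_expand hq, coeff_contract hq.ne']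
  split_ifs with hk
  · rw [Nat.div_mul_cancel hk]
  · have hcoeff : f.coeff k * (ζ ^ k - 1) = 0 := by
      rw [mul_sub, ← comp_C_mul_X_coeff, hf, mul_one, sub_self]
    refine ((mul_eq_zero.1 hcoeff).resolve_right fun hone => hk ?_).symm
    exact hζ.dvd_of_pow_eq_one k (sub_eq_zero.1 hone)

lemma exists_trace_clearedProd_eq_eval_pow (α lam E : ℝ) (hw : IsPrimitiveRoot w q) (hq : 0 < q) :
    ∃ g : ℂ[X], g.natDegree ≤ 2 ∧ ‖g.coeff 0‖ = ‖(clearedMat α lam E (0 : ℂ) ^ q).trace‖ ∧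
      ‖g.coeff 2‖ = ‖(clearedMat α lam E (0 : ℂ) ^ q).trace‖ ∧
      ∀ z, (clearedProd α lam E w q z).trace = g.eval (z ^ q) := by
  set f : ℂ[X] := (clearedProd α lam E w q X).trace with hf
  have heval (z : ℂ) : f.eval z = (clearedProd α lam E w q z).trace := by
    rw [hf, trace_fin_two, eval_add, eval_clearedProd_X, eval_clearedProd_X, trace_fin_two]
  have hdeg : f.natDegree ≤ 2 * q := by
    rw [hf, trace_fin_two]
    exact (natDegree_add_le _ _).trans
      (max_le (natDegree_clearedProd_X_le ..) (natDegree_clearedProd_X_le ..))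
  have hcomp : f.comp (C w * X) = f := by
    have hmap := congrArg trace (map_clearedProd α lam E w q (X : ℂ[X]) (aeval (C w * X)))
    rw [aeval_X, ← smul_eq_C_mul, trace_clearedProd_smul_X α lam E hw.pow_eq_one,
      ← AddMonoidHom.map_trace] at hmap
    rw [comp_eq_aeval, ← smul_eq_C_mul]
    exact hmap
  have hnorm : ‖w‖ = 1 := hw.norm'_eq_one hq.ne'
  refine ⟨contract q f, ?_, ?_, ?_, fun z => ?_⟩
  · refine natDegree_le_iff_coeff_eq_zero.2 fun k hk => ?_
    rw [coeff_contract hq.ne']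
    exact coeff_eq_zero_of_natDegree_lt (hdeg.trans_lt (Nat.mul_lt_mul_of_pos_right hk hq))
  · rw [coeff_contract hq.ne', zero_mul, coeff_zero_eq_eval_zero, heval, clearedProd_zero_right]
  · rw [coeff_contract hq.ne', hf, trace_fin_two, coeff_add, coeff_clearedProd_X,
      coeff_clearedProd_X, ← mul_add, ← trace_fin_two, norm_mul, norm_prod]
    simp [hnorm]
  · rw [← heval, ← expand_eval, expand_contract_of_comp_eq hw hq hcomp]

lemma norm_eval_le_of_natDegree_le_two {g : ℂ[X]} (hg : g.natDegree ≤ 2) {C : ℝ}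
    (h0 : ‖g.coeff 0‖ ≤ C) (h2 : ‖g.coeff 2‖ ≤ C) {y u : ℂ} (hy : 1 ≤ ‖y‖) (hu : ‖u‖ = 1) :
    ‖g.eval y‖ ≤ ‖y‖ * (‖g.eval u‖ + 4 * C * ‖y‖) := by
  have heval (x : ℂ) : g.eval x = g.coeff 0 + g.coeff 1 * x + g.coeff 2 * x ^ 2 := by
    rw [eval_eq_sum_range' (Nat.lt_succ_of_le hg)]
    simp [Finset.sum_range_succ]
  have hC : 0 ≤ C := (norm_nonneg _).trans h0
  have hmid : ‖g.coeff 1‖ ≤ ‖g.eval u‖ + 2 * C :=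
    calc ‖g.coeff 1‖ = ‖g.coeff 1 * u‖ := by rw [norm_mul, hu, mul_one]
      _ = ‖g.eval u - g.coeff 0 - g.coeff 2 * u ^ 2‖ := by rw [heval u]; congr 1; ring
      _ ≤ ‖g.eval u‖ + ‖g.coeff 0‖ + ‖g.coeff 2 * u ^ 2‖ :=
        (norm_sub_le _ _).trans (add_le_add_left (norm_sub_le _ _) _)
      _ ≤ ‖g.eval u‖ + 2 * C := by
        rw [norm_mul, norm_pow, hu]
        linarith
  calc ‖g.eval y‖ ≤ ‖g.coeff 0‖ + ‖g.coeff 1‖ * ‖y‖ + ‖g.coeff 2‖ * ‖y‖ ^ 2 := by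
        rw [heval y, ← norm_pow, ← norm_mul, ← norm_mul]
        exact norm_add₃_le
    _ ≤ C + (‖g.eval u‖ + 2 * C) * ‖y‖ + C * ‖y‖ ^ 2 := by gcongr
    _ ≤ ‖y‖ * (‖g.eval u‖ + 4 * C * ‖y‖) := by
        nlinarith [mul_le_mul_of_nonneg_left hy hC,
          mul_le_mul_of_nonneg_left hy (mul_nonneg hC (norm_nonneg y))]

lemma norm_trace_clearedProd_le_mul {α lam E K : ℝ} (hw : IsPrimitiveRoot w q) (hq : 0 < q)
    (hK : 0 < K) (hαK : α ^ 2 / 4 ≤ K ^ 2)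
    (hE : K * |α * E + 2 * lam| ≤ 2 * (K ^ 2 + α ^ 2 / 4)) {z u : ℂ} (hz : 1 ≤ ‖z‖)
    (hu : ‖u‖ = 1) : ‖(clearedProd α lam E w q z).trace‖ ≤
      ‖z‖ ^ q * (‖(clearedProd α lam E w q u).trace‖ + 8 * K ^ q * ‖z‖ ^ q) := by
  obtain ⟨g, hdeg, h0, h2, hg⟩ := exists_trace_clearedProd_eq_eval_pow α lam E hw hq
  have hC := norm_trace_clearedMat_zero_pow_le hK hαK hE hq
  have hquad := norm_eval_le_of_natDegree_le_two hdeg (h0.trans_le hC) (h2.trans_le hC)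
    (y := z ^ q) (u := u ^ q) (by rw [norm_pow]; exact one_le_pow₀ hz)
    (by rw [norm_pow, hu, one_pow])
  rw [hg, hg, ← norm_pow]
  linarith

lemma isPrimitiveRoot_fourierChar {p : ℤ} (hq : 0 < q) (hpq : IsCoprime p (q : ℤ)) :
    IsPrimitiveRoot (𝐞 (p / q : ℝ) : ℂ) q := by
  convert Complex.isPrimitiveRoot_exp_of_isCoprime p q hq.ne' hpq using 1
  rw [Real.fourierChar_apply]
  push_cast
  congr 1
  ring

end RotationInvariance

/-! ### Uniform hyperbolicity of nearby periodic approximants -/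

section Approximants

lemma eventually_forall_lt_of_isCompact {X Y : Type*} [TopologicalSpace X] [TopologicalSpace Y]
    {f g : X × Y → ℝ} (hf : Continuous f) (hg : Continuous g) {K : Set Y} (hK : IsCompact K)
    {x₀ : X} (h : ∀ y ∈ K, f (x₀, y) < g (x₀, y)) :
    ∀ᶠ x in 𝓝 x₀, ∀ y ∈ K, f (x, y) < g (x, y) :=
  hK.eventually_forall_of_forall_eventually fun y hy =>
    (isOpen_lt hf hg).mem_nhds (h y hy)

lemma isCompact_circle (r : ℝ) : IsCompact {z : ℂ | ‖z‖ = r} := by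
  simpa only [Metric.sphere, dist_zero_right] using isCompact_sphere (0 : ℂ) r

lemma two_lt_of_exp_le {m l δ T : ℝ} (hδ : 1 ≤ m * δ)
    (h : Real.exp (m * (l + 33 * δ)) / 2 ≤ Real.exp (m * δ) *
      (Real.exp (m * (l + 2 * δ)) * T + 8 * Real.exp (m * (l + δ)) * Real.exp (m * δ))) :
    2 < T := by
  have hupper : Real.exp (m * (l + 3 * δ)) * (Real.exp (30 * (m * δ)) / 2) ≤
      Real.exp (m * (l + 3 * δ)) * (T + 8) := by
    convert h using 1
    · rw [← mul_div_assoc, ← Real.exp_add]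
      ring_nf
    · have hexpT : Real.exp (m * δ) * Real.exp (m * (l + 2 * δ)) =
          Real.exp (m * (l + 3 * δ)) := by rw [← Real.exp_add]; ring_nf
      have hexpR : Real.exp (m * δ) * Real.exp (m * (l + δ)) * Real.exp (m * δ) =
          Real.exp (m * (l + 3 * δ)) := by rw [← Real.exp_add, ← Real.exp_add]; ring_nf
      linear_combination -T * hexpT - 8 * hexpR
  have hT := le_of_mul_le_mul_left hupper (Real.exp_pos _)
  linarith [Real.add_one_le_exp (30 * (m * δ))]

variable {α lam E : ℝ}

lemma continuous_norm_clearedProd (α lam : ℝ) (m : ℕ) :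
    Continuous fun y : (ℝ × ℂ) × ℂ => ‖clearedProd α lam y.1.1 y.1.2 m y.2‖ :=
  ((continuous_clearedProd α lam m).comp
    (f := fun y : (ℝ × ℂ) × ℂ => (y.1.1, y.1.2, y.2)) (by fun_prop)).norm

lemma eventually_lt_norm_clearedProd {w : ℂ} {m : ℕ} {c r : ℝ}
    (h : ∀ z : ℂ, ‖z‖ = r → c < ‖clearedProd α lam E w m z‖) :
    ∀ᶠ x : ℝ × ℂ in 𝓝 (E, w), ∀ z : ℂ, ‖z‖ = r → c < ‖clearedProd α lam x.1 x.2 m z‖ :=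
  eventually_forall_lt_of_isCompact (x₀ := (E, w)) (f := fun _ => c) continuous_const
    (continuous_norm_clearedProd α lam m) (isCompact_circle r) h

lemma eventually_norm_clearedProd_lt {w : ℂ} {m : ℕ} {c r : ℝ}
    (h : ∀ z : ℂ, ‖z‖ = r → ‖clearedProd α lam E w m z‖ < c) :
    ∀ᶠ x : ℝ × ℂ in 𝓝 (E, w), ∀ z : ℂ, ‖z‖ = r → ‖clearedProd α lam x.1 x.2 m z‖ < c :=
  eventually_forall_lt_of_isCompact (x₀ := (E, w)) (g := fun _ => c)
    (continuous_norm_clearedProd α lam m) continuous_const (isCompact_circle r) h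

lemma eventually_norm_denomProd_lt {w : ℂ} {m : ℕ} {c r : ℝ}
    (h : ∀ z : ℂ, ‖z‖ = r → ‖denomProd α w m z‖ < c) :
    ∀ᶠ v : ℂ in 𝓝 w, ∀ z : ℂ, ‖z‖ = r → ‖denomProd α v m z‖ < c :=
  eventually_forall_lt_of_isCompact (x₀ := w) (g := fun _ => c)
    (continuous_denomProd α m).norm continuous_const (isCompact_circle r) h

variable (hα : α ∈ Ioo (-1 : ℝ) 1)

include hα

lemma exists_circle_eventually_bounds {b : ℝ} (hb : Irrational b) {δ : ℝ} (hδ : 0 < δ) (N : ℕ) :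
    ∃ n ≥ N, ∃ t ∈ Ioo 0 δ, ∀ᶠ x : ℝ × ℂ in 𝓝 (E, (𝐞 b : ℂ)),
      (∀ z : ℂ, ‖z‖ = Real.exp t → ∀ m ∈ ({n, 2 * n} : Set ℕ),
        Real.exp (m * (lyap (potV α lam) b E + Real.log (denomGeomMean α) - 2 * δ)) <
          ‖clearedProd α lam x.1 x.2 m z‖) ∧
      ∀ r ∈ ({1, Real.exp t} : Set ℝ), ∀ z : ℂ, ‖z‖ = r →
        ‖clearedProd α lam x.1 x.2 n z‖ <
          Real.exp (n * (lyap (potV α lam) b E + Real.log (denomGeomMean α) + 2 * δ)) ∧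
        ‖denomProd α x.2 n z‖ < Real.exp (n * (Real.log (denomGeomMean α) + 2 * δ)) := by
  obtain ⟨τ, hτ, n₀, hupper⟩ :=
    exists_norm_clearedProd_le_and_norm_denomProd_le hα lam E hb hδ
  obtain ⟨n, hn, t, ⟨ht0, ht⟩, hlower⟩ :=
    exists_circle_exp_le_norm_clearedProd hα lam E hb hδ (lt_min hτ hδ) (max (max n₀ N) 1)
  simp only [ge_iff_le, max_le_iff] at hn
  obtain ⟨⟨hn₀, hnN⟩, hn1⟩ := hn
  have hexp {m : ℕ} (hm : 0 < m) {c d : ℝ} (hcd : c < d) : Real.exp (m * c) < Real.exp (m * d) :=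
    Real.exp_lt_exp.2 (mul_lt_mul_of_pos_left hcd (Nat.cast_pos.2 hm))
  have hfin : ∀ r ∈ ({1, Real.exp t} : Set ℝ), 1 ≤ r ∧ r ≤ Real.exp τ := by
    rintro r (rfl | rfl)
    · exact ⟨le_rfl, Real.one_le_exp hτ.le⟩
    · exact ⟨Real.one_le_exp ht0.le, Real.exp_le_exp.2 (ht.le.trans (min_le_left _ _))⟩
  refine ⟨n, hnN, t, ⟨ht0, ht.trans_le (min_le_right _ _)⟩, Eventually.and ?_ ?_⟩
  · have hpos : ∀ m ∈ ({n, 2 * n} : Set ℕ), 0 < m := by rintro m (rfl | rfl) <;> omega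
    have hlow (m : ℕ) (hm : m ∈ ({n, 2 * n} : Set ℕ)) := eventually_lt_norm_clearedProd
      (c := Real.exp (m * (lyap (potV α lam) b E + Real.log (denomGeomMean α) - 2 * δ)))
      fun z hz => (hexp (hpos m hm) (by linarith)).trans_le (hlower z hz m hm)
    exact ((eventually_all_finite (toFinite _)).2 hlow).mono fun x hx z hz m hm => hx m hm z hz
  · refine (eventually_all_finite (toFinite _)).2 fun r hr => ?_
    obtain ⟨h1, hτr⟩ := hfin r hr
    have hbound (z : ℂ) (hz : ‖z‖ = r) :=
      hupper n hn₀ z (h1.trans_eq hz.symm) (hz.trans_le hτr)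
    have hprod := eventually_norm_clearedProd_lt
      (c := Real.exp (n * (lyap (potV α lam) b E + Real.log (denomGeomMean α) + 2 * δ)))
      fun z hz => (hbound z hz).1.trans_lt (hexp hn1 (by linarith))
    have hdenom := eventually_norm_denomProd_lt
      (c := Real.exp (n * (Real.log (denomGeomMean α) + 2 * δ)))
      fun z hz => (hbound z hz).2.trans_lt (hexp hn1 (by linarith))
    exact (hprod.and (continuous_snd.continuousAt.eventually hdenom)).mono
      fun x hx z hz => ⟨hx.1 z hz, hx.2 z hz⟩

lemma exists_circle_eventually_half_exp_le_norm_trace {b : ℝ} (hb : Irrational b) {δ : ℝ}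
    (hδ : 0 < δ) (hL : lyap (potV α lam) b E = 40 * δ) :
    ∃ t ∈ Ioo 0 δ, ∀ᶠ x : ℝ × ℂ in 𝓝 (E, (𝐞 b : ℂ)), ‖x.2‖ = 1 → ∀ q : ℕ, 1 ≤ q * δ →
      x.2 ^ q = 1 →
        (∀ z : ℂ, ‖z‖ = Real.exp t → Real.exp (q * (Real.log (denomGeomMean α) + 33 * δ)) / 2 ≤
          ‖(clearedProd α lam x.1 x.2 q z).trace‖) ∧
        ∀ z : ℂ, ‖z‖ = 1 →
          ‖denomProd α x.2 q z‖ ≤ Real.exp (q * (Real.log (denomGeomMean α) + 2 * δ)) := by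
  obtain ⟨N, hN⟩ := exists_nat_ge (1 / δ)
  obtain ⟨n, hn, t, ht, hbounds⟩ :=
    exists_circle_eventually_bounds (lam := lam) (E := E) hα hb hδ N
  have hnδ : 1 ≤ n * δ := by
    rw [div_le_iff₀ hδ] at hN
    exact hN.trans (by gcongr)
  have hn0 : 0 < n := Nat.pos_of_ne_zero fun h => by simp [h] at hnδ; linarith
  refine ⟨t, ht, hbounds.mono fun x ⟨hlower, hupper⟩ hw q hqδ hwq => ?_⟩
  set l := Real.log (denomGeomMean α) with hl
  have hexp {c d : ℝ} (hcd : c ≤ d) : Real.exp (n * c) ≤ Real.exp (n * d) :=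
    Real.exp_le_exp.2 (mul_le_mul_of_nonneg_left hcd n.cast_nonneg)
  have hdouble : 2 * Real.exp (n * (l + 42 * δ)) * Real.exp (n * (l + 33 * δ)) ≤
      Real.exp ((2 * n : ℕ) * (40 * δ + l - 2 * δ)) := by
    have htwo : 2 ≤ Real.exp 1 := one_add_one_eq_two.symm.le.trans (Real.add_one_le_exp 1)
    refine (mul_le_mul_of_nonneg_right (mul_le_mul_of_nonneg_right htwo (Real.exp_pos _).le)
      (Real.exp_pos _).le).trans ?_
    rw [← Real.exp_add, ← Real.exp_add]
    refine Real.exp_le_exp.2 ?_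
    push_cast
    linarith
  rw [hL] at hlower hupper
  have hnear (z : ℂ) (hz : ‖z‖ = Real.exp t) := hupper _ (by simp) z hz
  have hgrowth (z : ℂ) (hz : ‖z‖ = Real.exp t) :=
    pow_le_norm_clearedProd_mul (α := α) (lam := lam) (E := x.1) hw (Real.exp_pos _).le
      (Real.exp_pos _)
      (fun z hz => (hexp (by linarith)).trans (hlower z hz n (by simp)).le)
      (fun z hz => (hnear z hz).1.le.trans (hexp (by linarith)))
      (fun z hz => hdouble.trans (hlower z hz (2 * n) (by simp)).le)
      (fun z hz => (hnear z hz).2.le.trans (hexp (by linarith))) hz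
  refine ⟨fun z hz => ?_, fun z hz => ?_⟩
  · exact half_exp_le_norm_trace_clearedProd hw hwq hn0 hgrowth (fun z hz => (hnear z hz).2.le)
      (by linarith [Real.log_two_lt_d9]) hz
  · exact norm_denomProd_le_exp_of_pow_eq_one hw hwq hn0
      (fun z hz => (hupper 1 (by simp) z hz).2.le) hz

lemma lt_sq_add_of_denomGeomMean_lt {K : ℝ} (hK : denomGeomMean α < K) :
    K < K ^ 2 + α ^ 2 / 4 := by
  have hsq := denomGeomMean_sq hα
  have hhalf := half_le_denomGeomMean α
  nlinarith

lemma sq_div_four_le_of_denomGeomMean_lt {K : ℝ} (hK : denomGeomMean α < K) :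
    α ^ 2 / 4 ≤ K ^ 2 := by
  have hhalf := half_le_denomGeomMean α
  nlinarith [hα.1, hα.2]

lemma two_lt_norm_trace_tProd_of_bounds {δ t : ℝ} (hδ : 0 < δ) (ht : t ∈ Ioo 0 δ)
    (hE : denomGeomMean α * Real.exp δ * |α * E + 2 * lam| ≤
      2 * ((denomGeomMean α * Real.exp δ) ^ 2 + α ^ 2 / 4))
    {p : ℤ} {q : ℕ} (hq : 0 < q) (hpq : IsCoprime p (q : ℤ)) (hqδ : 1 ≤ q * δ)
    (htrace : ∀ z : ℂ, ‖z‖ = Real.exp t →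
      Real.exp (q * (Real.log (denomGeomMean α) + 33 * δ)) / 2 ≤
        ‖(clearedProd α lam E (𝐞 (p / q : ℝ)) q z).trace‖)
    (hdenom : ∀ z : ℂ, ‖z‖ = 1 →
      ‖denomProd α (𝐞 (p / q : ℝ)) q z‖ ≤ Real.exp (q * (Real.log (denomGeomMean α) + 2 * δ)))
    (x : ℝ) : 2 < ‖(tProd (potV α lam) (p / q) q x E).trace‖ := by
  have hκ := denomGeomMean_pos α
  have hlt : denomGeomMean α < denomGeomMean α * Real.exp δ :=
    lt_mul_of_one_lt_right hκ (Real.one_lt_exp_iff.2 hδ)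
  have hz : ‖(Real.exp t : ℂ)‖ = Real.exp t := Complex.norm_of_nonneg (Real.exp_pos t).le
  have hR : Real.exp t ^ q ≤ Real.exp (q * δ) := by
    rw [← Real.exp_nat_mul]
    have := ht.2
    gcongr
  have hKq : (denomGeomMean α * Real.exp δ) ^ q =
      Real.exp (q * (Real.log (denomGeomMean α) + δ)) := by
    rw [Real.exp_nat_mul, Real.exp_add, Real.exp_log hκ]
  have hmain := (htrace _ hz).trans (norm_trace_clearedProd_le_mul (isPrimitiveRoot_fourierChar hq
    hpq) hq (hκ.trans hlt) (sq_div_four_le_of_denomGeomMean_lt hα hlt) hE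
    (hz.symm ▸ Real.one_le_exp ht.1.le) (norm_fourierChar x))
  rw [hz, hKq, clearedProd_fourierChar hα, trace_smul, norm_smul] at hmain
  refine two_lt_of_exp_le hqδ (hmain.trans ?_)
  gcongr
  exact hdenom _ (norm_fourierChar x)

lemma eventually_two_lt_norm_trace_tProd {b : ℝ} (hb : Irrational b)
    (hL : 0 < lyap (potV α lam) b E) (hE : |α * E + 2 * lam| ≤ 2) :
    ∃ Q : ℕ, ∀ᶠ x : ℝ × ℝ in 𝓝 (E, b), ∀ (p : ℤ) (q : ℕ), Q ≤ q → 0 < q →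
      IsCoprime p (q : ℤ) → x.2 = p / q →
        ∀ y : ℝ, 2 < ‖(tProd (potV α lam) (p / q) q y x.1).trace‖ := by
  obtain ⟨δ, hδ, hLδ⟩ : ∃ δ > 0, lyap (potV α lam) b E = 40 * δ :=
    ⟨lyap (potV α lam) b E / 40, by positivity, by ring⟩
  obtain ⟨t, ht, htrace⟩ := exists_circle_eventually_half_exp_le_norm_trace hα hb hδ hLδ
  obtain ⟨Q, hQ⟩ := exists_nat_ge (1 / δ)
  have hκ := denomGeomMean_pos α
  set K := denomGeomMean α * Real.exp δ with hK
  have hK0 : 0 < K := by positivity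
  have hEK : K * |α * E + 2 * lam| < 2 * (K ^ 2 + α ^ 2 / 4) := by
    have hlt := lt_sq_add_of_denomGeomMean_lt hα (K := K)
      (lt_mul_of_one_lt_right hκ (Real.one_lt_exp_iff.2 hδ))
    nlinarith
  have henergy : ∀ᶠ x : ℝ × ℝ in 𝓝 (E, b),
      K * |α * x.1 + 2 * lam| < 2 * (K ^ 2 + α ^ 2 / 4) :=
    (isOpen_lt (by fun_prop) continuous_const).mem_nhds hEK
  have hcont : Tendsto (fun x : ℝ × ℝ => (x.1, (𝐞 x.2 : ℂ))) (𝓝 (E, b))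
      (𝓝 (E, (𝐞 b : ℂ))) :=
    (continuous_fst.prodMk (continuous_coe_fourierChar.comp continuous_snd)).tendsto' _ _ rfl
  refine ⟨Q, ?_⟩
  filter_upwards [henergy, hcont.eventually htrace] with x hx hxtrace p q hQq hq hpq hxq
  have hqδ : 1 ≤ q * δ := by
    rw [div_le_iff₀ hδ] at hQ
    exact hQ.trans (by gcongr)
  rw [hxq] at hxtrace
  obtain ⟨hlow, hdenom⟩ := hxtrace (norm_fourierChar _) q hqδ
    (isPrimitiveRoot_fourierChar hq hpq).pow_eq_one
  exact two_lt_norm_trace_tProd_of_bounds hα hδ ht hx.le hq hpq hqδ hlow hdenom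

end Approximants

/-! ### Schrödinger operators on a cycle -/

lemma mul_norm_le_norm_apply_sub_smul {𝕜 F : Type*} [RCLike 𝕜] [NormedAddCommGroup F]
    [InnerProductSpace 𝕜 F] [FiniteDimensional 𝕜 F] {T : F →ₗ[𝕜] F} (hT : T.IsSymmetric)
    {E τ : ℝ} (hgap : ∀ E' : ℝ, |E' - E| < τ → ∀ v, T v = (E' : 𝕜) • v → v = 0) (v : F) :
    τ * ‖v‖ ≤ ‖T v - (E : 𝕜) • v‖ := by
  rcases le_total τ 0 with hτ | hτ
  · exact (mul_nonpos_of_nonpos_of_nonneg hτ (norm_nonneg v)).trans (norm_nonneg _)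
  set B := hT.eigenvectorBasis rfl
  have hcoord (i) : B.repr (T v - (E : 𝕜) • v) i =
      ((hT.eigenvalues rfl i - E : ℝ) : 𝕜) * B.repr v i := by
    rw [map_sub, map_smul, PiLp.sub_apply, PiLp.smul_apply, smul_eq_mul,
      hT.eigenvectorBasis_apply_self_apply rfl v i, RCLike.ofReal_sub, sub_mul]
  have heigenvalue (i) : τ ≤ |hT.eigenvalues rfl i - E| :=
    le_of_not_gt fun hlt =>
      B.orthonormal.ne_zero i (hgap _ hlt (B i) (hT.apply_eigenvectorBasis rfl i))
  refine (pow_le_pow_iff_left₀ (by positivity) (norm_nonneg _) two_ne_zero).1 ?_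
  rw [mul_pow, ← B.repr.norm_map v, ← B.repr.norm_map (T v - _), EuclideanSpace.norm_sq_eq,
    EuclideanSpace.norm_sq_eq, Finset.mul_sum]
  gcongr with i
  rw [hcoord, norm_mul, mul_pow, RCLike.norm_ofReal]
  gcongr
  exact heigenvalue i

lemma trace_eq_two_of_mulVec_eq {R : Type*} [CommRing R] [IsDomain R]
    {A : Matrix (Fin 2) (Fin 2) R} (hdet : A.det = 1) {c : Fin 2 → R} (hc : c ≠ 0)
    (hfix : A *ᵥ c = c) : A.trace = 2 := by
  have hsub : (A - 1).det = 0 :=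
    exists_mulVec_eq_zero_iff.1 ⟨c, hc, by rw [sub_mulVec, hfix, one_mulVec, sub_self]⟩
  simp only [det_fin_two, Matrix.sub_apply, one_apply_eq, one_apply_ne' zero_ne_one,
    one_apply_ne zero_ne_one, sub_zero] at hdet hsub
  rw [trace_fin_two]
  linear_combination hdet - hsub

lemma tMat_mulVec (V : ℝ → ℝ) (x : ℝ) (z s t : ℂ) :
    tMat V x z *ᵥ ![s, t] = ![(z - V x) * s - t, s] := by
  ext i
  fin_cases i <;> simp [tMat, sub_eq_add_neg, mul_comm]

section Cycle

variable {q : ℕ}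

/-- The Schrödinger operator with potential `W` on the cycle `ℤ/q`; for `q ≤ 2` the neighbours
`i + 1` and `i - 1` coincide and are counted twice. -/
noncomputable def cyclicSchrodinger (W : ZMod q → ℝ) :
    EuclideanSpace ℂ (ZMod q) →ₗ[ℂ] EuclideanSpace ℂ (ZMod q) where
  toFun v := WithLp.toLp 2 fun i => v (i + 1) + v (i - 1) + (W i : ℂ) * v i
  map_add' u v := by ext i; simp only [PiLp.add_apply]; ring
  map_smul' c v := by ext i; simp only [PiLp.smul_apply, smul_eq_mul, RingHom.id_apply]; ring

lemma cyclicSchrodinger_apply (W : ZMod q → ℝ) (v : EuclideanSpace ℂ (ZMod q)) (i : ZMod q) :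
    cyclicSchrodinger W v i = v (i + 1) + v (i - 1) + (W i : ℂ) * v i := rfl

variable {V : ℝ → ℝ} {a x E : ℝ} {v : EuclideanSpace ℂ (ZMod q)}

lemma tProd_mulVec_of_eigenvector
    (hv : cyclicSchrodinger (fun i => V (x + i.val * a)) v = (E : ℂ) • v) {n : ℕ} (hn : n ≤ q) :
    tProd V a n x E *ᵥ ![v 0, v (-1)] = ![v n, v (n - 1)] := by
  induction n with
  | zero => simp [tProd]
  | succ n ih =>
    have hstep := congrArg (· (n : ZMod q)) hv
    simp only [cyclicSchrodinger_apply, PiLp.smul_apply, smul_eq_mul,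
      ZMod.val_cast_of_lt (Nat.lt_of_succ_le hn)] at hstep
    have hnext : v (n + 1) + v (n - 1) = (E - V (x + n * a)) * v n := by
      linear_combination hstep
    rw [tProd_succ, ← mulVec_mulVec, ih (by lia), tMat_mulVec, Nat.cast_succ,
      add_sub_cancel_right, ← eq_sub_of_add_eq hnext]

variable [NeZero q]

lemma isSymmetric_cyclicSchrodinger (W : ZMod q → ℝ) : (cyclicSchrodinger W).IsSymmetric := by
  intro u v
  have hright : ∑ i, v i * conj (u (i + 1)) = ∑ i, v (i - 1) * conj (u i) := by
    rw [← Equiv.sum_comp (Equiv.addRight (1 : ZMod q)) fun i => v (i - 1) * conj (u i)]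
    simp only [Equiv.coe_addRight, add_sub_cancel_right]
  have hleft : ∑ i, v i * conj (u (i - 1)) = ∑ i, v (i + 1) * conj (u i) := by
    rw [← Equiv.sum_comp (Equiv.addRight (1 : ZMod q)) fun i => v i * conj (u (i - 1))]
    simp only [Equiv.coe_addRight, add_sub_cancel_right]
  simp only [PiLp.inner_apply, cyclicSchrodinger_apply, RCLike.inner_apply, map_add, map_mul,
    Complex.conj_ofReal, mul_add, add_mul, Finset.sum_add_distrib]
  rw [hright, hleft, add_comm (∑ i, v (i - 1) * _)]
  simp only [mul_left_comm, mul_assoc]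

lemma eq_zero_of_eigenvector_of_two_lt_norm_trace
    (htr : 2 < ‖(tProd V a q x E).trace‖)
    (hv : cyclicSchrodinger (fun i => V (x + i.val * a)) v = (E : ℂ) • v) : v = 0 := by
  have hperiod : tProd V a q x E *ᵥ ![v 0, v (-1)] = ![v 0, v (-1)] := by
    rw [tProd_mulVec_of_eigenvector hv le_rfl, ZMod.natCast_self, zero_sub]
  have hinit : ![v 0, v (-1)] = 0 := by
    by_contra hne
    rw [trace_eq_two_of_mulVec_eq (det_tProd V a q x E) hne hperiod, Complex.norm_two] at htr
    exact lt_irrefl _ htr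
  ext i
  have hi := congrFun (tProd_mulVec_of_eigenvector hv i.val_lt.le) 0
  rw [hinit, mulVec_zero, ZMod.natCast_zmod_val] at hi
  exact hi.symm

lemma mul_norm_le_norm_cyclicSchrodinger_sub {τ : ℝ}
    (htr : ∀ E' : ℝ, |E' - E| < τ → 2 < ‖(tProd V a q x E').trace‖)
    (v : EuclideanSpace ℂ (ZMod q)) :
    τ * ‖v‖ ≤ ‖cyclicSchrodinger (fun i => V (x + i.val * a)) v - (E : ℂ) • v‖ :=
  mul_norm_le_norm_apply_sub_smul (isSymmetric_cyclicSchrodinger _)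
    (fun E' hE' _ => eq_zero_of_eigenvector_of_two_lt_norm_trace (htr E' hE')) v

end Cycle

/-! ### The Schrödinger operator on `ℓ²(ℤ)` -/

lemma notMem_spectrum_of_mul_norm_le {F : Type*} [NormedAddCommGroup F] [InnerProductSpace ℂ F]
    [CompleteSpace F] {H : F →L[ℂ] F} (hH : IsSelfAdjoint H) {E c : ℝ} (hc : 0 < c)
    (hbound : ∀ u, c * ‖u‖ ≤ ‖H u - (E : ℂ) • u‖) : (E : ℂ) ∉ spectrum ℂ H := by
  rw [spectrum.notMem_iff, ← isUnit_mul_self_iff]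
  set T := algebraMap ℂ (F →L[ℂ] F) E - H with hT
  have hTa (u : F) : T u = (E : ℂ) • u - H u := by
    simp only [hT, Algebra.algebraMap_eq_smul_one, _root_.sub_apply, _root_.smul_apply,
      one_apply_eq_self]
  have hTsym : (T : F →ₗ[ℂ] F).IsSymmetric := by
    refine ContinuousLinearMap.isSelfAdjoint_iff_isSymmetric.1 (.sub ?_ hH)
    exact .algebraMap _ (Complex.conj_ofReal E)
  refine ContinuousLinearMap.isUnit_of_forall_le_norm_inner_map _ (c := ⟨c ^ 2, sq_nonneg c⟩)
    (pow_pos hc 2) fun u => ?_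
  calc ‖u‖ ^ 2 * c ^ 2 = (c * ‖u‖) ^ 2 := by ring
    _ ≤ ‖T u‖ ^ 2 := by
      rw [hTa, norm_sub_rev]
      gcongr
      exact hbound u
    _ = ‖inner ℂ (T (T u)) u‖ := by
      rw [show inner ℂ (T (T u)) u = inner ℂ (T u) (T u) from hTsym (T u) u,
        inner_self_eq_norm_sq_to_K, norm_pow, RCLike.norm_ofReal, abs_norm]

local notation "ℓ²" => lp (fun _ : ℤ => ℂ) 2

lemma hasSum_norm_sq (u : ℓ²) : HasSum (fun n => ‖u n‖ ^ 2) (‖u‖ ^ 2) := by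
  simpa using lp.hasSum_norm (p := 2) (by norm_num) u

lemma hasSum_norm_sq_add (u : ℓ²) (k : ℤ) : HasSum (fun n => ‖u (n + k)‖ ^ 2) (‖u‖ ^ 2) :=
  (Equiv.addRight k).hasSum_iff.2 (hasSum_norm_sq u)

/-- The translation `(shift k u)ₙ = u_{n+k}` on `ℓ²(ℤ)`. -/
noncomputable def shift (k : ℤ) : ℓ² →ₗᵢ[ℂ] ℓ² where
  toFun u := ⟨fun n => u (n + k),
    memℓp_gen (by simpa using (hasSum_norm_sq_add u k).summable)⟩
  map_add' _ _ := rfl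
  map_smul' _ _ := rfl
  norm_map' u := by
    rw [← sq_eq_sq₀ (norm_nonneg _) (norm_nonneg _)]
    exact (hasSum_norm_sq _).unique (hasSum_norm_sq_add u k)

lemma shift_apply (k : ℤ) (u : ℓ²) (n : ℤ) : shift k u n = u (n + k) := rfl

lemma shift_neg_shift (k : ℤ) (u : ℓ²) : shift (-k) (shift k u) = u := by
  ext n
  rw [shift_apply, shift_apply, neg_add_cancel_right]

lemma inner_shift (k : ℤ) (u v : ℓ²) : inner ℂ (shift k u) v = inner ℂ u (shift (-k) v) := by
  rw [← (shift (-k)).inner_map_map, shift_neg_shift]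

section Schrodinger

variable {V : ℝ → ℝ} {b θ : ℝ} {H : ℓ² →L[ℂ] ℓ²} (hH : IsSchrodingerOp V b θ H)
include hH

lemma schrodinger_sub_shift_apply (u : ℓ²) (n : ℤ) :
    (H u - shift 1 u - shift (-1) u) n = (V (n * b + θ) : ℂ) * u n := by
  rw [lp.coeFn_sub, lp.coeFn_sub, Pi.sub_apply, Pi.sub_apply, hH u n, shift_apply, shift_apply,
    ← sub_eq_add_neg]
  ring

lemma isSelfAdjoint_schrodinger : IsSelfAdjoint H := by
  refine ContinuousLinearMap.isSelfAdjoint_iff_isSymmetric.2 fun u v => ?_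
  have hpotential : inner ℂ (H u - shift 1 u - shift (-1) u) v =
      inner ℂ u (H v - shift 1 v - shift (-1) v) := by
    rw [lp.inner_eq_tsum, lp.inner_eq_tsum]
    refine tsum_congr fun n => ?_
    simp only [schrodinger_sub_shift_apply hH, RCLike.inner_apply, map_mul, Complex.conj_ofReal]
    ring
  rw [inner_sub_left, inner_sub_left, inner_sub_right, inner_sub_right, inner_shift, inner_shift,
    neg_neg] at hpotential
  change inner ℂ (H u) v = inner ℂ u (H v)
  linear_combination hpotential

lemma notMem_spectrum_of_two_add_le {E c : ℝ} (hc : 0 < c)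
    (hV : ∀ x, 2 + c ≤ |V x - E|) : (E : ℂ) ∉ spectrum ℂ H := by
  refine notMem_spectrum_of_mul_norm_le (isSelfAdjoint_schrodinger hH) hc fun u => ?_
  set g := H u - (E : ℂ) • u
  have hcoord (n : ℤ) :
      (g - shift 1 u - shift (-1) u) n = ((V (n * b + θ) - E : ℝ) : ℂ) * u n := by
    rw [show g - shift 1 u - shift (-1) u = H u - shift 1 u - shift (-1) u - (E : ℂ) • u by
      simp only [g]; abel, lp.coeFn_sub, Pi.sub_apply, schrodinger_sub_shift_apply hH,
      lp.coeFn_smul, Pi.smul_apply, smul_eq_mul, Complex.ofReal_sub, sub_mul]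
  have hlower : (2 + c) * ‖u‖ ≤ ‖g - shift 1 u - shift (-1) u‖ := by
    rw [← Real.norm_of_nonneg (by positivity : 0 ≤ 2 + c), ← norm_smul]
    refine lp.norm_mono two_ne_zero fun n => ?_
    rw [hcoord, norm_mul, Complex.norm_real, lp.coeFn_smul, Pi.smul_apply, norm_smul,
      Real.norm_of_nonneg (by positivity : 0 ≤ 2 + c)]
    gcongr
    exact hV _
  have hupper : ‖g - shift 1 u - shift (-1) u‖ ≤ ‖g‖ + ‖u‖ + ‖u‖ := by
    refine (norm_sub_le _ _).trans (add_le_add ((norm_sub_le _ _).trans ?_) ?_) <;>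
    simp only [LinearIsometry.norm_map, le_refl]
  linarith

end Schrodinger

section Potential

variable {α : ℝ} (hα : α ∈ Ioo (-1 : ℝ) 1)
include hα

lemma lipschitzWith_potV (lam : ℝ) : ∃ C, LipschitzWith C (potV α lam) := by
  have hα1 : 0 < 1 - |α| := sub_pos.2 (abs_lt.2 hα)
  refine ⟨_, LipschitzWith.of_dist_le' (K := 2 * |lam| / (1 - |α|) ^ 2 * (2 * π)) fun x y => ?_⟩
  have hdenom (t : ℝ) : 1 - |α| ≤ 1 - α * Real.cos t := by
    have hcos : |α * Real.cos t| ≤ |α| := by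
      rw [abs_mul]
      exact mul_le_of_le_one_right (abs_nonneg _) (Real.abs_cos_le_one _)
    linarith [le_abs_self (α * Real.cos t)]
  have hcos : |Real.cos (2 * π * x) - Real.cos (2 * π * y)| ≤ 2 * π * |x - y| := by
    refine (Real.abs_cos_sub_cos_le _ _).trans_eq ?_
    rw [← mul_sub, abs_mul, abs_of_pos Real.two_pi_pos]
  have hx := one_sub_mul_cos_pos hα (2 * π * x)
  have hy := one_sub_mul_cos_pos hα (2 * π * y)
  have hdiff : potV α lam x - potV α lam y =
      2 * lam * (Real.cos (2 * π * x) - Real.cos (2 * π * y)) /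
        ((1 - α * Real.cos (2 * π * x)) * (1 - α * Real.cos (2 * π * y))) := by
    rw [potV, potV, div_sub_div _ _ hx.ne' hy.ne']
    ring
  rw [Real.dist_eq, Real.dist_eq, hdiff, abs_div, abs_mul, abs_mul, abs_two,
    abs_of_pos (mul_pos hx hy)]
  calc _ ≤ 2 * |lam| * (2 * π * |x - y|) / ((1 - |α|) * (1 - |α|)) := by
        gcongr <;> linarith only [hcos, hdenom (2 * π * x), hdenom (2 * π * y)]
    _ = _ := by ring

lemma potV_le {lam : ℝ} (hlam : 0 ≤ lam) (hα0 : α ≤ 0) (x : ℝ) : potV α lam x ≤ 2 * lam := by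
  rw [potV, div_le_iff₀ (one_sub_mul_cos_pos hα _)]
  have hle : (1 + α) * Real.cos (2 * π * x) ≤ 1 := by
    nlinarith [hα.1, Real.cos_le_one (2 * π * x)]
  nlinarith

lemma neg_le_potV {lam : ℝ} (hlam : 0 ≤ lam) (hα0 : 0 ≤ α) (x : ℝ) :
    -(2 * lam) ≤ potV α lam x := by
  rw [potV, le_div_iff₀ (one_sub_mul_cos_pos hα _)]
  have hle : -1 ≤ (1 - α) * Real.cos (2 * π * x) := by
    nlinarith [hα.2, Real.neg_one_le_cos (2 * π * x)]
  nlinarith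

lemma abs_sub_le_abs_potV_sub {lam E : ℝ} (hlam : 0 ≤ lam) (hαE : α * E < 0) (x : ℝ) :
    |E| - 2 * lam ≤ |potV α lam x - E| := by
  rcases mul_neg_iff.1 hαE with ⟨hα0, hE⟩ | ⟨hα0, hE⟩
  · linarith [neg_le_potV hα hlam hα0.le x, abs_of_neg hE, le_abs_self (potV α lam x - E)]
  · linarith [potV_le hα hlam hα0.le x, abs_of_pos hE, neg_le_abs (potV α lam x - E)]

lemma neg_two_le_of_mem_spectrum {lam b θ E : ℝ} (hlam : 0 < lam) {H : ℓ² →L[ℂ] ℓ²}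
    (hH : IsSchrodingerOp (potV α lam) b θ H) (hE : (E : ℂ) ∈ spectrum ℂ H) :
    -2 ≤ α * E + 2 * lam := by
  by_contra! hlt
  have habs : |α * E| ≤ |E| := by
    rw [abs_mul]
    exact mul_le_of_le_one_left (abs_nonneg _) (abs_lt.2 hα).le
  refine notMem_spectrum_of_two_add_le hH (c := |E| - 2 * lam - 2)
    (by linarith [neg_le_abs (α * E)]) (fun x => ?_) hE
  linarith [abs_sub_le_abs_potV_sub hα hlam.le (by linarith : α * E < 0) x]

end Potential

/-! ### Gaps of periodic approximants -/

section Window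

/-- The values of a sequence `u` on `{y, …, y + q - 1}`, as a vector on the cycle `ℤ/q`. -/
noncomputable def window (q : ℕ) (u : ℤ → ℂ) (y : ℤ) : EuclideanSpace ℂ (ZMod q) :=
  WithLp.toLp 2 fun i => u (y + i.val)

lemma window_apply {q : ℕ} (u : ℤ → ℂ) (y : ℤ) (i : ZMod q) : window q u y i = u (y + i.val) := rfl

variable {q : ℕ} [NeZero q]

lemma hasSum_norm_sq_window (u : ℓ²) :
    HasSum (fun y => ‖window q u y‖ ^ 2) (q * ‖u‖ ^ 2) := by
  have hsum := hasSum_sum fun (i : ZMod q) (_ : i ∈ Finset.univ) => hasSum_norm_sq_add u i.val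
  simpa [EuclideanSpace.norm_sq_eq, window_apply, ZMod.card, -ZMod.natCast_val] using hsum

lemma val_add_one_of_ne {i : ZMod q} (hi : i ≠ -1) : (i + 1).val = i.val + 1 := by
  have hlt : i.val + 1 < q := by
    refine lt_of_le_of_ne i.val_lt fun heq => hi (eq_neg_of_add_eq_zero_left ?_)
    simpa only [Nat.cast_succ, ZMod.natCast_zmod_val, ZMod.natCast_self] using
      congrArg (Nat.cast (R := ZMod q)) heq
  rw [← ZMod.val_cast_of_lt hlt, Nat.cast_succ, ZMod.natCast_zmod_val]

lemma val_neg_one_add_one : (-1 : ZMod q).val + 1 = q := by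
  obtain ⟨n, rfl⟩ := Nat.exists_eq_succ_of_ne_zero (NeZero.ne q)
  rw [ZMod.val_neg_one]

lemma window_add_one (u : ℤ → ℂ) (y : ℤ) (i : ZMod q) : window q u y (i + 1) =
    u (y + i.val + 1) + EuclideanSpace.single (-1 : ZMod q) (u y - u (y + q)) i := by
  rcases eq_or_ne i (-1) with rfl | hi
  · have hq : y + ((-1 : ZMod q).val : ℤ) + 1 = y + q := by
      rw [add_assoc, ← Nat.cast_succ, Nat.succ_eq_add_one, val_neg_one_add_one]
    rw [window_apply, neg_add_cancel, ZMod.val_zero, Nat.cast_zero, add_zero, hq,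
      PiLp.single_apply, if_pos rfl, add_sub_cancel]
  · rw [window_apply, val_add_one_of_ne hi, Nat.cast_succ, PiLp.single_apply, if_neg hi,
      add_zero, add_assoc]

lemma window_sub_one (u : ℤ → ℂ) (y : ℤ) (i : ZMod q) : window q u y (i - 1) =
    u (y + i.val - 1) + EuclideanSpace.single (0 : ZMod q) (u (y + q - 1) - u (y - 1)) i := by
  obtain ⟨j, rfl⟩ : ∃ j, j + 1 = i := ⟨i - 1, sub_add_cancel i 1⟩
  rcases eq_or_ne j (-1) with rfl | hj
  · have hq : y + ((-1 : ZMod q).val : ℤ) = y + q - 1 := by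
      have := val_neg_one_add_one (q := q)
      lia
    rw [add_sub_cancel_right, window_apply, hq, neg_add_cancel, ZMod.val_zero, Nat.cast_zero,
      add_zero, PiLp.single_apply, if_pos rfl, add_sub_cancel]
  · have hj0 : j + 1 ≠ 0 := fun h => hj (eq_neg_of_add_eq_zero_left h)
    rw [add_sub_cancel_right, window_apply, val_add_one_of_ne hj, Nat.cast_succ,
      PiLp.single_apply, if_neg hj0, add_zero, ← add_assoc, add_sub_cancel_right]

lemma norm_toLp_mul_le {c : ZMod q → ℝ} {K : ℝ} (hc : ∀ i, |c i| ≤ K)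
    (v : EuclideanSpace ℂ (ZMod q)) :
    ‖WithLp.toLp 2 (fun i => (c i : ℂ) * v i)‖ ≤ K * ‖v‖ := by
  have hK : 0 ≤ K := (abs_nonneg _).trans (hc 0)
  refine (pow_le_pow_iff_left₀ (norm_nonneg _) (by positivity) two_ne_zero).1 ?_
  rw [mul_pow, EuclideanSpace.norm_sq_eq, EuclideanSpace.norm_sq_eq, Finset.mul_sum]
  gcongr with i
  rw [norm_mul, mul_pow, Complex.norm_real]
  gcongr
  exact hc i

lemma five_term_sq_le (x s t v w : ℝ) :
    (x + (s + t + (v + w))) ^ 2 ≤ 2 * x ^ 2 + 8 * (s ^ 2 + t ^ 2 + (v ^ 2 + w ^ 2)) := by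
  nlinarith [sq_nonneg (x - (s + t + (v + w))), sq_nonneg (s + t - (v + w)), sq_nonneg (s - t),
    sq_nonneg (v - w)]

variable {V : ℝ → ℝ} {a b θ E : ℝ} {u g : ℤ → ℂ}
  (hg : ∀ n : ℤ, g n = u (n + 1) + u (n - 1) + (V (n * b + θ) : ℂ) * u n - E * u n)
include hg

lemma cyclicSchrodinger_window_sub (y : ℤ) :
    cyclicSchrodinger (fun i => V (y * b + θ + i.val * a)) (window q u y) -
        (E : ℂ) • window q u y =
      window q g y +
      WithLp.toLp 2 (fun i : ZMod q => ((V (y * b + θ + i.val * a) -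
        V (y * b + θ + i.val * b) : ℝ) : ℂ) * window q u y i) +
      EuclideanSpace.single (-1) (u y - u (y + q)) +
      EuclideanSpace.single 0 (u (y + q - 1) - u (y - 1)) := by
  ext i
  have hcoord : window q g y i = u (y + i.val + 1) + u (y + i.val - 1) +
      (V (y * b + θ + i.val * b) : ℂ) * window q u y i - E * window q u y i := by
    have hphase : ((y + i.val : ℤ) : ℝ) * b + θ = y * b + θ + i.val * b := by
      push_cast
      ring
    rw [window_apply, hg, window_apply, hphase]
  simp only [PiLp.sub_apply, PiLp.add_apply, PiLp.smul_apply, cyclicSchrodinger_apply,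
    window_add_one, window_sub_one, hcoord, smul_eq_mul, Complex.ofReal_sub]
  ring

lemma half_mul_norm_window_le {τ : ℝ} {C : NNReal} (hV : LipschitzWith C V)
    (ha : |b - a| ≤ 1 / (q : ℝ) ^ 2) (hC : 2 * C ≤ q * τ)
    (htr : ∀ E' : ℝ, |E' - E| < τ → ∀ x, 2 < ‖(tProd V a q x E').trace‖) (y : ℤ) :
    τ / 2 * ‖window q u y‖ ≤ ‖window q g y‖ +
      (‖u y‖ + ‖u (y + q)‖ + (‖u (y + q - 1)‖ + ‖u (y - 1)‖)) := by
  have hq : (0 : ℝ) < q := Nat.cast_pos.2 (NeZero.pos q)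
  have hgap := mul_norm_le_norm_cyclicSchrodinger_sub
    (fun E' hE' => htr E' hE' (y * b + θ)) (window q u y)
  have hdrift (i : ZMod q) :
      |V (y * b + θ + i.val * a) - V (y * b + θ + i.val * b)| ≤ τ / 2 := by
    have hi : (i.val : ℝ) ≤ q := Nat.cast_le.2 i.val_lt.le
    calc _ ≤ C * |(y * b + θ + i.val * a) - (y * b + θ + i.val * b)| := hV.dist_le_mul _ _
      _ = C * (i.val * |b - a|) := by
        rw [add_sub_add_left_eq_sub, ← mul_sub, abs_mul, Nat.abs_cast, abs_sub_comm]
      _ ≤ C * (q * (1 / (q : ℝ) ^ 2)) := by gcongr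
      _ = C / q := by field_simp
      _ ≤ τ / 2 := by
        rw [div_le_div_iff₀ hq two_pos]
        linarith
  have hpotential := norm_toLp_mul_le hdrift (window q u y)
  rw [cyclicSchrodinger_window_sub hg] at hgap
  have htriangle := hgap.trans <| (norm_add_le _ _).trans <|
    add_le_add ((norm_add_le _ _).trans (add_le_add_left (norm_add_le _ _) _)) le_rfl
  rw [PiLp.norm_single, PiLp.norm_single] at htriangle
  linarith [norm_sub_le (u y) (u (y + q)), norm_sub_le (u (y + q - 1)) (u (y - 1))]

end Window

lemma notMem_spectrum_of_two_lt_norm_trace {V : ℝ → ℝ} {a b θ E τ : ℝ} {C : NNReal} {q : ℕ}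
    {H : ℓ² →L[ℂ] ℓ²} (hH : IsSchrodingerOp V b θ H) (hV : LipschitzWith C V) (hτ : 0 < τ)
    (hq : 0 < q) (ha : |b - a| ≤ 1 / (q : ℝ) ^ 2) (hC : 2 * C ≤ q * τ) (hqτ : 256 ≤ q * τ ^ 2)
    (htr : ∀ E' : ℝ, |E' - E| < τ → ∀ x, 2 < ‖(tProd V a q x E').trace‖) :
    (E : ℂ) ∉ spectrum ℂ H := by
  have : NeZero q := ⟨hq.ne'⟩
  refine notMem_spectrum_of_mul_norm_le (isSelfAdjoint_schrodinger hH) (c := τ / 4)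
    (by positivity) fun u => ?_
  set g := H u - (E : ℂ) • u
  have hg (n : ℤ) : g n = u (n + 1) + u (n - 1) + (V (n * b + θ) : ℂ) * u n - E * u n := by
    rw [← hH u n]
    rfl
  have hwindow (y : ℤ) : (τ / 2) ^ 2 * ‖window q u y‖ ^ 2 ≤ 2 * ‖window q g y‖ ^ 2 +
      8 * (‖u y‖ ^ 2 + ‖u (y + q)‖ ^ 2 + (‖u (y + (q - 1))‖ ^ 2 + ‖u (y + -1)‖ ^ 2)) := by
    rw [← mul_pow, ← add_sub_assoc, ← sub_eq_add_neg]
    exact (pow_le_pow_left₀ (by positivity) (half_mul_norm_window_le hg hV ha hC htr y) 2).trans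
      (five_term_sq_le _ _ _ _ _)
  have hsum := hasSum_le hwindow ((hasSum_norm_sq_window u).mul_left _)
    (((hasSum_norm_sq_window g).mul_left 2).add
      ((((hasSum_norm_sq u).add (hasSum_norm_sq_add u q)).add
        ((hasSum_norm_sq_add u (q - 1)).add (hasSum_norm_sq_add u (-1)))).mul_left 8))
  have hscaled : q * (τ / 4 * ‖u‖) ^ 2 ≤ q * ‖g‖ ^ 2 := by
    nlinarith [mul_le_mul_of_nonneg_right hqτ (sq_nonneg ‖u‖)]
  exact (pow_le_pow_iff_left₀ (by positivity) (norm_nonneg _) two_ne_zero).1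
    (le_of_mul_le_mul_left hscaled (Nat.cast_pos.2 hq))

lemma notMem_spectrum_of_lyap_pos {α lam b θ E : ℝ} (hα : α ∈ Ioo (-1 : ℝ) 1)
    (hb : Irrational b) {H : ℓ² →L[ℂ] ℓ²} (hH : IsSchrodingerOp (potV α lam) b θ H)
    (hE : |α * E + 2 * lam| ≤ 2) (hL : 0 < lyap (potV α lam) b E) :
    (E : ℂ) ∉ spectrum ℂ H := by
  obtain ⟨Q, hQ⟩ := eventually_two_lt_norm_trace_tProd hα hb hL hE
  obtain ⟨τ, hτ, hball⟩ := Metric.eventually_nhds_iff.1 hQ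
  obtain ⟨C, hC⟩ := lipschitzWith_potV hα lam
  have hcast := tendsto_natCast_atTop_atTop (R := ℝ)
  have hlarge : ∀ᶠ q : ℕ in atTop, Q ≤ q ∧ 2 * C ≤ q * τ ∧ 256 ≤ q * τ ^ 2 ∧
      1 / (q : ℝ) ^ 2 < τ :=
    (eventually_ge_atTop Q).and <|
      ((hcast.atTop_mul_const hτ).eventually_ge_atTop _).and <|
        ((hcast.atTop_mul_const (by positivity)).eventually_ge_atTop _).and <|
          (tendsto_const_div_pow (1 : ℝ) 2 two_ne_zero).eventually_lt_const hτ
  obtain ⟨N, hN⟩ := eventually_atTop.1 hlarge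
  obtain ⟨p, q, hNq, hq, hpq, happrox⟩ := exists_coprime_abs_sub_div_le hb N
  obtain ⟨hQq, hCq, hqτ, hclose⟩ := hN q hNq
  refine notMem_spectrum_of_two_lt_norm_trace hH hC hτ hq happrox hCq hqτ fun E' hE' =>
    hball (y := (E', p / q)) ?_ p q hQq hq hpq rfl
  rw [Prod.dist_eq, max_lt_iff, Real.dist_eq, dist_comm, Real.dist_eq]
  exact ⟨hE', happrox.trans_lt hclose⟩

end GPSModel

/-- suppose `λ > 0`; then for every `θ` and every `E` in the spectrum of
`H_{α,θ,b}`: `L(E) > 0 ↔ αE > 2(1-λ)`, and `L(E) = 0 ↔ αE ≤ 2(1-λ)`. -/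
theorem lyapunov_dichotomy_pos_coupling (α lam b θ : ℝ) (hα : α ∈ Set.Ioo (-1 : ℝ) 1)
    (hb : Irrational b) (hlam : 0 < lam)
    (H : lp (fun _ : ℤ => ℂ) 2 →L[ℂ] lp (fun _ : ℤ => ℂ) 2)
    (hH : IsSchrodingerOp (potV α lam) b θ H)
    (E : ℝ) (hE : (E : ℂ) ∈ spectrum ℂ H) :
    (0 < lyap (potV α lam) b (E : ℂ) ↔ 2 * (1 - lam) < α * E) ∧
    (lyap (potV α lam) b (E : ℂ) = 0 ↔ α * E ≤ 2 * (1 - lam)) := by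
  have hnonneg := GPSModel.lyap_nonneg (potV α lam) b (E : ℂ)
  have hpos : 2 * (1 - lam) < α * E → 0 < lyap (potV α lam) b (E : ℂ) := fun h =>
    GPSModel.lyap_pos_of_two_lt hα lam E b (by linarith)
  have hzero : α * E ≤ 2 * (1 - lam) → lyap (potV α lam) b (E : ℂ) = 0 := fun h => by
    by_contra hne
    have hlower := GPSModel.neg_two_le_of_mem_spectrum hα hlam hH hE
    exact GPSModel.notMem_spectrum_of_lyap_pos hα hb hH (abs_le.2 ⟨hlower, by linarith⟩)
      (hnonneg.lt_of_ne' hne) hE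
  refine ⟨⟨fun hL => ?_, hpos⟩, ⟨fun hL => ?_, hzero⟩⟩
  · exact lt_of_not_ge fun h => hL.ne' (hzero h)
  · exact le_of_not_gt fun h => (hpos h).ne' hL
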